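/- arXiv:2604.07227 — 4 statements merged into one kernel-verified Lean document; each statement's English description precedes it below -/
import Mathlib

section
/- Suppose G is a group generated by a finite symmetric set Γ such that the Cayley graph G_Γ is the infinite d-regular tree 𝕋_d with d ≥ 3. Let S be an elephant random walk on G_Γ with memory parameter p ∈ [0,1]. Then for every p ∈ [0,1) and d ≥ 3 there exists a constant ρ = ρ(G, p, d) ∈ (0,1) such that sup_{x∈G} ℙ(S_n = x) ≤ ρⁿ for all n ≥ 1. -/
open MeasureTheory ProbabilityTheory Filter
open scoped ENNReal NNReal

namespace SRRW

variable {Ω : Type*} [MeasurableSpace Ω] {G : Type*} [Group G] [MeasurableSpace G]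

/-- The Cayley graph of `G` with respect to `Γ` (for symmetric `Γ` the adjacency
relation is `x⁻¹ y ∈ Γ`). -/
def cayleyGraph (Γ : Finset G) : SimpleGraph G where
  Adj x y := x ≠ y ∧ (x⁻¹ * y ∈ Γ ∨ y⁻¹ * x ∈ Γ)
  symm := ⟨fun _ _ h => ⟨h.1.symm, h.2.symm⟩⟩
  loopless := ⟨fun _ h => h.1 rfl⟩

/-- The number of past steps, among steps `1, …, n`, which are equal to `s`. -/
noncomputable def pastCount (X : ℕ → Ω → G) (n : ℕ) (s : G) (ω : Ω) : ℕ :=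
  Set.ncard {j : ℕ | 1 ≤ j ∧ j ≤ n ∧ X j ω = s}

/-- The σ-algebra generated by the first `n` steps `X_1, …, X_n`. -/
def pastSigma (X : ℕ → Ω → G) (n : ℕ) : MeasurableSpace Ω :=
  ⨆ j ∈ Set.Icc 1 n, MeasurableSpace.comap (X j) inferInstance

/-- `X` is the step sequence of an elephant random walk on the Cayley graph `G_Γ` with
memory parameter `p`: the first step is uniform on `Γ`; at time `n ≥ 2` the elephant
picks a uniformly chosen past step `g_D` and repeats it with probability `p`, while with
probability `1 - p` it takes a step uniform on `Γ \ {g_D}`.  Equivalently, conditionally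
on the past, `X_n = s` with probability
`p·N_{n-1}(s)/(n-1) + (1-p)·(n-1-N_{n-1}(s))/((|Γ|-1)(n-1))`,
where `N_{n-1}(s)` is the number of past steps equal to `s`. -/
structure IsERW (P : Measure Ω) (p : ℝ) (Γ : Finset G) (X : ℕ → Ω → G) : Prop where
  meas : ∀ n, Measurable (X n)
  mem_steps : ∀ n, 1 ≤ n → ∀ ω, X n ω ∈ Γ
  first_step : ∀ s ∈ Γ, P {ω | X 1 ω = s} = ((Γ.card : ℕ) : ℝ≥0∞)⁻¹
  cond_law : ∀ n, 2 ≤ n → ∀ s ∈ Γ, ∀ A : Set Ω, MeasurableSet[pastSigma X (n - 1)] A →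
    P ({ω | X n ω = s} ∩ A)
      = ∫⁻ ω in A, ENNReal.ofReal
          (p * (pastCount X (n - 1) s ω : ℝ) / ((n : ℝ) - 1)
            + (1 - p) * (((n : ℝ) - 1) - (pastCount X (n - 1) s ω : ℝ))
              / (((Γ.card : ℝ) - 1) * ((n : ℝ) - 1))) ∂P

/-- The position of the walk: `S_n = X_1 · X_2 ⋯ X_n` (ordered product). -/
def pos (X : ℕ → Ω → G) (n : ℕ) (ω : Ω) : G :=
  ((List.range n).map fun k => X (k + 1) ω).prod

end SRRW

open SRRW

/-- Weight on the tree which is superharmonic up to the factor `2 √(d-1)`. -/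
lemma tree_weight {G : Type*} [Group G] (Γ : Finset G)
    (d : ℕ) (hd : 3 ≤ d) (htree : (cayleyGraph Γ).IsTree)
    (Γ' : Finset G) (hΓ' : ∀ s, s ∈ Γ' ↔ s ∈ Γ ∧ s ≠ 1) (hcard : Γ'.card = d) :
    ∃ h : G → ℝ, (∀ x, 0 < h x) ∧
      ∀ x, ∑ s ∈ Γ', h (x * s) ≤ (2 * Real.sqrt ((d : ℝ) - 1)) * h x := by
  classical
  set r := Real.sqrt ((d : ℝ) - 1) with hr
  have hd' : (3 : ℝ) ≤ d := by exact_mod_cast hd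
  have hr2 : r * r = (d : ℝ) - 1 := Real.mul_self_sqrt (by linarith)
  have hr0 : 0 ≤ r := Real.sqrt_nonneg _
  have hr1 : 1 < r := by nlinarith
  have hrpos : 0 < r := by linarith
  set D : G → ℕ := fun x => (cayleyGraph Γ).dist 1 x with hD
  refine ⟨fun x => (r⁻¹) ^ (D x), fun x => by positivity, fun x => ?_⟩
  have hadj : ∀ s ∈ Γ', (cayleyGraph Γ).Adj x (x * s) := by
    intro s hs
    obtain ⟨h1, h2⟩ := (hΓ' s).1 hs
    refine ⟨?_, Or.inl ?_⟩
    · intro h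
      apply h2
      simpa using h.symm
    · simpa using h1
  have hcase : ∀ s ∈ Γ', D (x * s) = D x + 1 ∨ D x = D (x * s) + 1 := by
    intro s hs
    have := htree.dist_eq_dist_add_one_of_adj 1 (hadj s hs)
    tauto
  set B := Γ'.filter (fun s => D x = D (x * s) + 1) with hB
  have hBcard : B.card ≤ 1 := by
    rw [Finset.card_le_one]
    obtain ⟨q, hq, hql⟩ := htree.connected.exists_path_of_dist 1 x
    have key : ∀ s ∈ B, x * s = q.penultimate := by
      intro s hs
      rw [hB, Finset.mem_filter] at hs
      obtain ⟨hs1, hs2⟩ := hs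
      obtain ⟨w, hw, hwl⟩ := htree.connected.exists_path_of_dist 1 (x * s)
      have hl : (w.concat (hadj s hs1).symm).length = (cayleyGraph Γ).dist 1 x := by
        rw [SimpleGraph.Walk.length_concat, hwl]; exact hs2.symm
      have hp := SimpleGraph.Walk.isPath_of_length_eq_dist _ hl
      have heq : w.concat (hadj s hs1).symm = q :=
        (htree.existsUnique_path 1 x).unique hp hq
      rw [← heq, SimpleGraph.Walk.penultimate_concat]
    intro a ha b hb
    exact mul_left_cancel ((key a ha).trans (key b hb).symm)
  have hterm : ∀ s ∈ Γ', (r⁻¹) ^ (D (x * s)) =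
      (r⁻¹) ^ (D x) * r⁻¹ + if D x = D (x * s) + 1 then (r⁻¹) ^ (D x) * (r - r⁻¹) else 0 := by
    intro s hs
    rcases hcase s hs with h | h
    · rw [if_neg (by omega), h, pow_succ]; ring
    · rw [if_pos h, h, pow_succ]; field_simp; ring
  have hx : 0 < (r⁻¹) ^ (D x) := by positivity
  have hri : r⁻¹ ≤ r := by
    have : r⁻¹ ≤ 1 := inv_le_one_of_one_le₀ hr1.le
    linarith
  calc ∑ s ∈ Γ', (r⁻¹) ^ (D (x * s))
      = ∑ s ∈ Γ', ((r⁻¹) ^ (D x) * r⁻¹ +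
          if D x = D (x * s) + 1 then (r⁻¹) ^ (D x) * (r - r⁻¹) else 0) :=
        Finset.sum_congr rfl hterm
    _ = d * ((r⁻¹) ^ (D x) * r⁻¹) + B.card * ((r⁻¹) ^ (D x) * (r - r⁻¹)) := by
        rw [Finset.sum_add_distrib, ← Finset.sum_filter]
        simp [hcard, hB]
    _ ≤ d * ((r⁻¹) ^ (D x) * r⁻¹) + 1 * ((r⁻¹) ^ (D x) * (r - r⁻¹)) := by
        have : (B.card : ℝ) ≤ 1 := by exact_mod_cast hBcard
        have h2 : 0 ≤ (r⁻¹) ^ (D x) * (r - r⁻¹) := mul_nonneg hx.le (by linarith)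
        nlinarith
    _ = 2 * r * (r⁻¹) ^ (D x) := by
        have : (d : ℝ) = r * r + 1 := by linarith
        rw [this]; field_simp; ring

/-- The number of non-identity generators is the degree. -/
lemma card_erase {G : Type*} [Group G] (Γ : Finset G) (hsymm : ∀ s ∈ Γ, s⁻¹ ∈ Γ)
    (d : ℕ) (hreg : ∀ x : G, ((cayleyGraph Γ).neighborSet x).ncard = d)
    (Γ' : Finset G) (hΓ' : ∀ s, s ∈ Γ' ↔ s ∈ Γ ∧ s ≠ 1) : Γ'.card = d := by
  rw [← hreg 1, ← Set.ncard_coe_finset]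
  congr 1
  ext s
  simp only [Finset.mem_coe, hΓ', SimpleGraph.mem_neighborSet, cayleyGraph]
  constructor
  · rintro ⟨h1, h2⟩
    exact ⟨fun h => h2 h.symm, Or.inl (by simpa using h1)⟩
  · rintro ⟨h1, h2⟩
    refine ⟨?_, fun h => h1 h.symm⟩
    rcases h2 with h | h
    · simpa using h
    · have := hsymm _ h
      simpa using this

set_option maxHeartbeats 1000000 in
/-- ℓ² contraction by a Schur test. -/
lemma l2_contract {G : Type*} [Group G] (Γ Γ' : Finset G) (hsub : Γ' ⊆ Γ)
    (hsymm' : ∀ s ∈ Γ', s⁻¹ ∈ Γ')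
    (h : G → ℝ) (hpos : ∀ x, 0 < h x) (L c : ℝ) (hc : 0 ≤ c)
    (hL : ∀ x, ∑ s ∈ Γ', h (x * s) ≤ L * h x)
    (μ : G → ℝ) (hμ0 : ∀ s ∈ Γ, 0 ≤ μ s) (hμc : ∀ s ∈ Γ', c ≤ μ s)
    (hμ1 : ∑ s ∈ Γ, μ s = 1)
    (f : G → ℝ) (hf : Summable fun x => f x ^ 2) :
    0 ≤ c * L + (1 - c * Γ'.card) ∧
    Summable (fun x => (∑ s ∈ Γ, μ s * f (x * s⁻¹)) ^ 2) ∧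
    ∑' x, (∑ s ∈ Γ, μ s * f (x * s⁻¹)) ^ 2
      ≤ (c * L + (1 - c * Γ'.card)) ^ 2 * ∑' x, f x ^ 2 := by
  classical
  set R := c * L + (1 - c * Γ'.card) with hR
  set ν : G → ℝ := fun s => if s ∈ Γ' then c else 0 with hν
  set κ : G → ℝ := fun s => μ s - ν s with hκ
  have hν0 : ∀ s, 0 ≤ ν s := by
    intro s; simp only [hν]; split_ifs <;> simp [hc]
  have hκ0 : ∀ s ∈ Γ, 0 ≤ κ s := by
    intro s hs
    simp only [hκ, hν]
    split_ifs with h'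
    · linarith [hμc s h']
    · linarith [hμ0 s hs]
  have hκsum : ∑ s ∈ Γ, κ s = 1 - c * Γ'.card := by
    simp only [hκ, Finset.sum_sub_distrib, hμ1, hν]
    rw [← Finset.sum_filter, Finset.filter_mem_eq_inter, Finset.inter_eq_right.2 hsub]
    simp [mul_comm]
  have hνsum : ∀ g : G → ℝ, ∑ s ∈ Γ, ν s * g s = c * ∑ s ∈ Γ', g s := by
    intro g
    rw [Finset.mul_sum, ← Finset.sum_subset hsub]
    · exact Finset.sum_congr rfl fun s hs => by simp [hν, hs]
    · intro s _ hs; simp [hν, hs]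
  have hLinv : ∀ x, ∑ s ∈ Γ', h (x * s⁻¹) ≤ L * h x := by
    intro x
    refine le_trans (le_of_eq ?_) (hL x)
    exact Finset.sum_bij (fun s _ => s⁻¹) (fun s hs => hsymm' s hs)
      (fun a _ b _ hab => inv_injective hab)
      (fun b hb => ⟨b⁻¹, hsymm' b hb, inv_inv b⟩) (fun s _ => rfl)
  -- first factor
  have hA : ∀ x, ∑ s ∈ Γ, (ν s * (h (x * s⁻¹) / h x) + κ s) ≤ R := by
    intro x
    rw [Finset.sum_add_distrib, hκsum, hνsum, ← Finset.sum_div]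
    have : (∑ s ∈ Γ', h (x * s⁻¹)) / h x ≤ L := (div_le_iff₀ (hpos x)).2 (hLinv x)
    have := mul_le_mul_of_nonneg_left this hc
    linarith
  have hA' : ∀ x, ∑ s ∈ Γ, (ν s * (h (x * s) / h x) + κ s) ≤ R := by
    intro x
    rw [Finset.sum_add_distrib, hκsum, hνsum, ← Finset.sum_div]
    have : (∑ s ∈ Γ', h (x * s)) / h x ≤ L := (div_le_iff₀ (hpos x)).2 (hL x)
    have := mul_le_mul_of_nonneg_left this hc
    linarith
  have hA0 : ∀ x y, ∀ s ∈ Γ, 0 ≤ ν s * (h x / h y) + κ s := by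
    intro x y s hs
    have := hκ0 s hs
    have := hν0 s
    have := hpos x
    have := hpos y
    positivity
  have hR0 : 0 ≤ R := le_trans (Finset.sum_nonneg fun s hs => hA0 _ _ s hs) (hA 1)
  set F : G → G → ℝ := fun s y => (ν s * (h (y * s) / h y) + κ s) * f y ^ 2 with hF
  have hF0 : ∀ s ∈ Γ, ∀ y, 0 ≤ F s y := fun s hs y => mul_nonneg (hA0 _ _ s hs) (sq_nonneg _)
  have hFle : ∀ s ∈ Γ, ∀ y, F s y ≤ R * f y ^ 2 := by
    intro s hs y
    refine mul_le_mul_of_nonneg_right ?_ (sq_nonneg _)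
    exact le_trans (Finset.single_le_sum (f := fun s => ν s * (h (y * s) / h y) + κ s)
      (fun t ht => hA0 _ _ t ht) hs) (hA' y)
  have hFs : ∀ s ∈ Γ, Summable (F s) := fun s hs =>
    Summable.of_nonneg_of_le (hF0 s hs) (hFle s hs) (hf.mul_left R)
  have hFs' : ∀ s ∈ Γ, Summable (fun x => F s (x * s⁻¹)) := fun s hs =>
    (Equiv.mulRight s⁻¹).summable_iff.2 (hFs s hs)
  have hpt : ∀ x, (∑ s ∈ Γ, μ s * f (x * s⁻¹)) ^ 2 ≤ R * ∑ s ∈ Γ, F s (x * s⁻¹) := by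
    intro x
    refine le_trans (Finset.sum_sq_le_sum_mul_sum_of_sq_le_mul Γ
      (f := fun s => ν s * (h (x * s⁻¹) / h x) + κ s)
      (g := fun s => F s (x * s⁻¹)) (fun s hs => hA0 _ _ s hs)
      (fun s hs => hF0 s hs _) ?_) ?_
    · intro s hs
      simp only [hF]
      have e : μ s = ν s + κ s := by simp [hκ]
      rw [e, inv_mul_cancel_right]
      have h1 := hpos x
      have h2 := hpos (x * s⁻¹)
      have h3 := hν0 s
      have h4 := hκ0 s hs
      have h5 : (ν s + κ s) ^ 2 ≤
          (ν s * (h (x * s⁻¹) / h x) + κ s) * (ν s * (h x / h (x * s⁻¹)) + κ s) := by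
        have h6 : 2 ≤ h (x * s⁻¹) / h x + h x / h (x * s⁻¹) := by
          rw [div_add_div _ _ h1.ne' h2.ne', le_div_iff₀ (by positivity)]
          nlinarith [sq_nonneg (h (x * s⁻¹) - h x)]
        have h7 : (h (x * s⁻¹) / h x) * (h x / h (x * s⁻¹)) = 1 := by
          field_simp
        have h8 := mul_le_mul_of_nonneg_left h6 (mul_nonneg h3 h4)
        calc (ν s + κ s) ^ 2 = ν s ^ 2 + κ s ^ 2 + ν s * κ s * 2 := by ring
          _ ≤ ν s ^ 2 * ((h (x * s⁻¹) / h x) * (h x / h (x * s⁻¹))) + κ s ^ 2 +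
              ν s * κ s * (h (x * s⁻¹) / h x + h x / h (x * s⁻¹)) := by rw [h7]; linarith
          _ = _ := by ring
      calc ((ν s + κ s) * f (x * s⁻¹)) ^ 2 = (ν s + κ s) ^ 2 * f (x * s⁻¹) ^ 2 := by ring
        _ ≤ _ := mul_le_mul_of_nonneg_right h5 (sq_nonneg _)
        _ = _ := by ring
    · exact mul_le_mul_of_nonneg_right (hA x) (Finset.sum_nonneg fun s hs => hF0 s hs _)
  have hsumF : Summable (fun x => ∑ s ∈ Γ, F s (x * s⁻¹)) := summable_sum hFs'
  have hS : Summable (fun x => (∑ s ∈ Γ, μ s * f (x * s⁻¹)) ^ 2) :=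
    Summable.of_nonneg_of_le (fun x => sq_nonneg _) hpt (hsumF.mul_left R)
  refine ⟨hR0, hS, ?_⟩
  calc ∑' x, (∑ s ∈ Γ, μ s * f (x * s⁻¹)) ^ 2
      ≤ ∑' x, R * ∑ s ∈ Γ, F s (x * s⁻¹) := hS.tsum_le_tsum hpt (hsumF.mul_left R)
    _ = R * ∑ s ∈ Γ, ∑' x, F s (x * s⁻¹) := by
        rw [tsum_mul_left, Summable.tsum_finsetSum hFs']
    _ = R * ∑ s ∈ Γ, ∑' x, F s x := by
        congr 1
        exact Finset.sum_congr rfl fun s _ => (Equiv.mulRight s⁻¹).tsum_eq (F s)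
    _ = R * ∑' x, ∑ s ∈ Γ, F s x := by rw [Summable.tsum_finsetSum hFs]
    _ ≤ R * ∑' x, R * f x ^ 2 := by
        refine mul_le_mul_of_nonneg_left ?_ hR0
        refine (summable_sum hFs).tsum_le_tsum ?_ (hf.mul_left R)
        intro y
        simp only [hF]
        rw [← Finset.sum_mul]
        exact mul_le_mul_of_nonneg_right (hA' y) (sq_nonneg _)
    _ = R ^ 2 * ∑' x, f x ^ 2 := by rw [tsum_mul_left]; ring

/-- Turning a bound with constants into pure exponential decay. -/
lemma final_rate (q C r : ℝ) (hq0 : 0 < q) (hq1 : q < 1) (hC : 0 ≤ C) (hr0 : 0 < r) (hr1 : r < 1)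
    (K : ℕ) : ∃ ρ : ℝ, ρ ∈ Set.Ioo (0 : ℝ) 1 ∧ ∀ n : ℕ, 1 ≤ n → ∀ a : ℝ, a ≤ q →
      a ≤ C * r ^ (n / (K + 1)) → a ≤ ρ ^ n := by
  have root : ∀ b : ℝ, 0 < b → b < 1 → ∀ N : ℕ, N ≠ 0 → ∃ t : ℝ, 0 < t ∧ t < 1 ∧ t ^ N = b := by
    intro b hb0 hb1 N hN
    refine ⟨b ^ ((N : ℝ)⁻¹), Real.rpow_pos_of_pos hb0 _, ?_, Real.rpow_inv_natCast_pow hb0.le hN⟩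
    exact Real.rpow_lt_one hb0.le hb1 (by positivity)
  obtain ⟨w, hw0, hw1, hw⟩ := root r hr0 hr1 2 (by norm_num)
  obtain ⟨J, hJ⟩ : ∃ J : ℕ, C * w ^ J < 1 := by
    have : Tendsto (fun j : ℕ => C * w ^ j) atTop (nhds (C * 0)) :=
      (tendsto_pow_atTop_nhds_zero_of_lt_one hw0.le hw1).const_mul C
    rw [mul_zero] at this
    exact (this.eventually (gt_mem_nhds one_pos)).exists
  obtain ⟨t1, h10, h11, h1⟩ := root w hw0 hw1 (2 * (K + 1)) (by omega)
  obtain ⟨t2, h20, h21, h2⟩ := root q hq0 hq1 ((K + 1) * (J + 1)) (by positivity)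
  refine ⟨max t1 t2, ⟨lt_max_of_lt_left h10, max_lt h11 h21⟩, ?_⟩
  intro n hn a ha1 ha2
  by_cases hc : n ≤ (K + 1) * (J + 1)
  · calc a ≤ q := ha1
      _ = t2 ^ ((K + 1) * (J + 1)) := h2.symm
      _ ≤ t2 ^ n := pow_le_pow_of_le_one h20.le h21.le hc
      _ ≤ _ := pow_le_pow_left₀ h20.le (le_max_right _ _) n
  · push Not at hc
    set j := n / (K + 1) with hj
    have hjJ : J + 1 ≤ j := by
      rw [hj, Nat.le_div_iff_mul_le (by omega)]; nlinarith
    have hnj : n ≤ 2 * (K + 1) * j := by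
      have := Nat.lt_div_mul_add (a := n) (b := K + 1) (by omega)
      rw [← hj] at this
      nlinarith
    calc a ≤ C * r ^ j := ha2
      _ = (C * w ^ j) * w ^ j := by rw [← hw]; ring
      _ ≤ 1 * w ^ j := by
          refine mul_le_mul_of_nonneg_right ?_ (by positivity)
          refine le_trans ?_ hJ.le
          exact mul_le_mul_of_nonneg_left (pow_le_pow_of_le_one hw0.le hw1.le (by omega)) hC
      _ = t1 ^ (2 * (K + 1) * j) := by rw [pow_mul, h1, one_mul]
      _ ≤ t1 ^ n := pow_le_pow_of_le_one h10.le h11.le hnj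
      _ ≤ _ := pow_le_pow_left₀ h10.le (le_max_left _ _) n

set_option linter.unusedSectionVars false

section prob

variable {G : Type*} [Group G] [MeasurableSpace G] [MeasurableSingletonClass G]
    {Ω : Type*} [MeasurableSpace Ω] {P : Measure Ω} [IsProbabilityMeasure P]
    {Γ : Finset G} {p : ℝ} {X : ℕ → Ω → G}

lemma past_X {j n : ℕ} (h1 : 1 ≤ j) (h2 : j ≤ n) (s : G) :
    MeasurableSet[pastSigma X n] {ω | X j ω = s} := by
  have hle : MeasurableSpace.comap (X j) inferInstance ≤ pastSigma X n :=
    le_iSup₂_of_le (f := fun j (_ : j ∈ Set.Icc 1 n) =>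
      MeasurableSpace.comap (X j) inferInstance) j ⟨h1, h2⟩ le_rfl
  exact hle _ ⟨{s}, measurableSet_singleton s, rfl⟩

lemma past_mono {n m : ℕ} (h : n ≤ m) : pastSigma X n ≤ pastSigma X m := by
  refine iSup₂_le fun j hj => ?_
  exact le_iSup₂_of_le (f := fun j (_ : j ∈ Set.Icc 1 m) =>
      MeasurableSpace.comap (X j) inferInstance) j ⟨hj.1, hj.2.trans h⟩ le_rfl

lemma past_le (hX : IsERW P p Γ X) (n : ℕ) : pastSigma X n ≤ ‹MeasurableSpace Ω› :=
  iSup₂_le fun j _ => (hX.meas j).comap_le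

open Classical in
lemma pastCount_eq (n : ℕ) (s : G) (ω : Ω) :
    pastCount X n s ω = ((Finset.Icc 1 n).filter fun j => X j ω = s).card := by
  rw [pastCount, ← Set.ncard_coe_finset]
  congr 1
  ext j
  simp [and_assoc]

lemma pastCount_zero (s : G) (ω : Ω) : pastCount X 0 s ω = 0 := by
  classical
  rw [pastCount_eq]; simp

open Classical in
lemma pastCount_succ (n : ℕ) (s : G) (ω : Ω) :
    pastCount X (n + 1) s ω = pastCount X n s ω + if X (n + 1) ω = s then 1 else 0 := by
  rw [pastCount_eq, pastCount_eq, ← Finset.insert_Icc_right_eq_Icc_add_one (by omega),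
    Finset.filter_insert]
  split_ifs with h
  · rw [Finset.card_insert_of_notMem]; simp
  · simp

lemma pastCount_le (n : ℕ) (s : G) (ω : Ω) : pastCount X n s ω ≤ n := by
  classical
  rw [pastCount_eq]
  exact (Finset.card_filter_le _ _).trans (by simp)

lemma pastCount_add (n j : ℕ) (s : G) (ω : Ω) :
    pastCount X n s ω ≤ pastCount X (n + j) s ω ∧
      pastCount X (n + j) s ω ≤ pastCount X n s ω + j := by
  classical
  induction j with
  | zero => simp
  | succ j ih =>
    rw [← add_assoc, pastCount_succ]
    split_ifs <;> omega

lemma pastCount_sum (hX : IsERW P p Γ X) (n : ℕ) (ω : Ω) :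
    ∑ s ∈ Γ, pastCount X n s ω = n := by
  classical
  induction n with
  | zero => simp [pastCount_zero]
  | succ n ih =>
    simp only [pastCount_succ, Finset.sum_add_distrib, ih]
    rw [Finset.sum_ite_eq, if_pos (hX.mem_steps _ (by omega) ω)]

lemma past_count (n : ℕ) (s : G) (c : ℕ) :
    MeasurableSet[pastSigma X n] {ω | pastCount X n s ω = c} := by
  classical
  induction n generalizing c with
  | zero => simp only [pastCount_zero]; exact MeasurableSet.const _
  | succ n ih =>
    have hs : MeasurableSet[pastSigma X (n + 1)] {ω | X (n + 1) ω = s} :=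
      past_X (by omega) le_rfl s
    have h0 : ∀ c, MeasurableSet[pastSigma X (n + 1)] {ω | pastCount X n s ω = c} :=
      fun c => past_mono (Nat.le_succ n) _ (ih c)
    have h1 : MeasurableSet[pastSigma X (n + 1)] {ω | pastCount X n s ω + 1 = c} := by
      cases c with
      | zero => simp
      | succ c => simpa using h0 c
    have : {ω | pastCount X (n + 1) s ω = c} =
        ({ω | X (n + 1) ω = s} ∩ {ω | pastCount X n s ω + 1 = c}) ∪
        ({ω | X (n + 1) ω = s}ᶜ ∩ {ω | pastCount X n s ω = c}) := by
      ext ω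
      simp only [Set.mem_ofPred_eq, pastCount_succ, Set.mem_union, Set.mem_inter_iff,
        Set.mem_compl_iff]
      by_cases h : X (n + 1) ω = s <;> simp [h]
    rw [this]
    exact (hs.inter h1).union (hs.compl.inter (h0 c))

lemma pos_succ (n : ℕ) (ω : Ω) : pos X (n + 1) ω = pos X n ω * X (n + 1) ω := by
  simp [pos, List.range_succ]

lemma pos_succ_event (hX : IsERW P p Γ X) (n : ℕ) (x : G) (A : Set Ω) :
    A ∩ {ω | pos X (n + 1) ω = x} =
      ⋃ s ∈ Γ, {ω | X (n + 1) ω = s} ∩ (A ∩ {ω | pos X n ω = x * s⁻¹}) := by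
  ext ω
  simp only [Set.mem_inter_iff, Set.mem_ofPred_eq, Set.mem_iUnion, pos_succ]
  constructor
  · rintro ⟨hA, h⟩
    exact ⟨X (n + 1) ω, hX.mem_steps _ (by omega) ω, rfl, hA, by rw [← h]; simp⟩
  · rintro ⟨s, hs, h1, hA, h2⟩
    exact ⟨hA, by rw [h1, h2]; simp⟩

lemma past_pos (hX : IsERW P p Γ X) (n : ℕ) (x : G) :
    MeasurableSet[pastSigma X n] {ω | pos X n ω = x} := by
  induction n generalizing x with
  | zero =>
    simp only [pos, List.range_zero, List.map_nil, List.prod_nil]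
    exact MeasurableSet.const _
  | succ n ih =>
    have := pos_succ_event hX n x Set.univ
    simp only [Set.univ_inter] at this
    rw [this]
    refine Finset.measurableSet_biUnion _ fun s _ => ?_
    exact (past_X (by omega) le_rfl s).inter (past_mono (Nat.le_succ n) _ (ih _))

lemma step_bound (hX : IsERW P p Γ X) {n : ℕ} (hn : 1 ≤ n) {s : G} (hs : s ∈ Γ) {A : Set Ω}
    (hA : MeasurableSet[pastSigma X n] A) {Q : ℝ} (hQ : 0 ≤ Q)
    (hb : ∀ ω ∈ A, p * (pastCount X n s ω : ℝ) / n
      + (1 - p) * (n - (pastCount X n s ω : ℝ)) / (((Γ.card : ℝ) - 1) * n) ≤ Q) :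
    P.real ({ω | X (n + 1) ω = s} ∩ A) ≤ Q * P.real A := by
  have h := hX.cond_law (n + 1) (by omega) s hs A hA
  have hA' : MeasurableSet A := past_le hX n _ hA
  have h2 : P ({ω | X (n + 1) ω = s} ∩ A) ≤ ENNReal.ofReal Q * P A := by
    rw [h]
    refine le_trans (setLIntegral_mono' (g := fun _ => ENNReal.ofReal Q) hA' ?_) ?_
    · intro ω hω
      refine ENNReal.ofReal_le_ofReal ?_
      have := hb ω hω
      simpa using this
    · simp
  have h3 := ENNReal.toReal_mono (by finiteness) h2
  rw [ENNReal.toReal_mul, ENNReal.toReal_ofReal hQ] at h3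
  exact h3

lemma q_bound (hp0 : 0 ≤ p) (hp1 : p < 1) {k n N : ℝ} (hk : 3 ≤ k) (hn : 0 < n) (hN0 : 0 ≤ N)
    (hN : N ≤ n) :
    p * N / n + (1 - p) * (n - N) / ((k - 1) * n) ≤ max p (1 / 2) := by
  set q := max p (1 / 2) with hq
  have h1 : p ≤ q := le_max_left _ _
  have h2 : 1 / 2 ≤ q := le_max_right _ _
  have e : (1 - p) * (n - N) / ((k - 1) * n) = ((1 - p) / (k - 1)) * ((n - N) / n) := by
    rw [div_mul_div_comm]
  have h3 : (1 - p) / (k - 1) ≤ q := by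
    refine le_trans ?_ h2
    rw [div_le_iff₀ (by linarith)]; nlinarith
  have h4 : 0 ≤ (n - N) / n := div_nonneg (by linarith) hn.le
  have h5 : 0 ≤ N / n := div_nonneg hN0 hn.le
  rw [e, mul_div_assoc]
  calc p * (N / n) + (1 - p) / (k - 1) * ((n - N) / n) ≤ q * (N / n) + q * ((n - N) / n) := by
        gcongr
    _ = q := by field_simp; ring

lemma step_unif (hX : IsERW P p Γ X) (hp0 : 0 ≤ p) (hp1 : p < 1) (hk : 3 ≤ Γ.card)
    (n : ℕ) {s : G} (hs : s ∈ Γ) {A : Set Ω} (hA : MeasurableSet[pastSigma X n] A) :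
    P.real ({ω | X (n + 1) ω = s} ∩ A) ≤ max p (1 / 2) * P.real A := by
  have hk' : (3 : ℝ) ≤ Γ.card := by exact_mod_cast hk
  have hq0 : (0 : ℝ) ≤ max p (1 / 2) := le_trans hp0 (le_max_left _ _)
  rcases Nat.eq_zero_or_pos n with rfl | hn
  · have hbot : pastSigma X 0 = ⊥ := by simp [pastSigma]
    rw [hbot, MeasurableSpace.measurableSet_bot_iff] at hA
    rcases hA with rfl | rfl
    · simp
    · simp only [Set.inter_univ, zero_add, probReal_univ, mul_one]
      rw [measureReal_def, hX.first_step s hs]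
      refine le_trans ?_ (le_max_right _ _)
      rw [ENNReal.toReal_inv, ENNReal.toReal_natCast, ← one_div]
      exact one_div_le_one_div_of_le (by norm_num) (by linarith)
  · refine step_bound hX hn hs hA hq0 fun ω _ => ?_
    exact q_bound hp0 hp1 hk' (by exact_mod_cast hn) (by positivity)
      (by exact_mod_cast pastCount_le n s ω)

lemma sum_pos_le (hX : IsERW P p Γ X) (n : ℕ) {A : Set Ω} (hA : MeasurableSet A)
    (F : Finset G) : ∑ y ∈ F, P.real (A ∩ {ω | pos X n ω = y}) ≤ P.real A := by
  rw [← measureReal_biUnion_finset]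
  · refine measureReal_mono ?_ (by finiteness)
    intro ω; simp only [Set.mem_iUnion]; rintro ⟨_, _, h⟩; exact h.1
  · intro a _ b _ hab
    refine Set.disjoint_left.2 ?_
    rintro ω ⟨_, h1⟩ ⟨_, h2⟩
    exact hab (h1.symm.trans h2)
  · intro y _
    exact hA.inter (past_le hX n _ (past_pos hX n y))

lemma pos_le_q (hX : IsERW P p Γ X) (hp0 : 0 ≤ p) (hp1 : p < 1) (hk : 3 ≤ Γ.card)
    (n : ℕ) (hn : 1 ≤ n) (x : G) : P.real {ω | pos X n ω = x} ≤ max p (1 / 2) := by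
  classical
  obtain ⟨n, rfl⟩ : ∃ k, n = k + 1 := ⟨n - 1, by omega⟩
  have hq0 : (0 : ℝ) ≤ max p (1 / 2) := le_trans hp0 (le_max_left _ _)
  have e := pos_succ_event hX n x Set.univ
  simp only [Set.univ_inter] at e
  rw [e]
  calc _ ≤ ∑ s ∈ Γ, P.real ({ω | X (n + 1) ω = s} ∩ {ω | pos X n ω = x * s⁻¹}) :=
        measureReal_biUnion_finset_le _ _
    _ ≤ ∑ s ∈ Γ, max p (1 / 2) * P.real {ω | pos X n ω = x * s⁻¹} :=
        Finset.sum_le_sum fun s hs => step_unif hX hp0 hp1 hk n hs (past_pos hX n _)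
    _ = max p (1 / 2) * ∑ s ∈ Γ, P.real {ω | pos X n ω = x * s⁻¹} := by rw [Finset.mul_sum]
    _ ≤ max p (1 / 2) * 1 := by
        refine mul_le_mul_of_nonneg_left ?_ hq0
        have h := sum_pos_le hX n MeasurableSet.univ (Γ.image fun s => x * s⁻¹)
        rw [Finset.sum_image] at h
        · simpa using h
        · intro a _ b _ hab
          simpa using hab
    _ = _ := mul_one _

lemma count_le (hX : IsERW P p Γ X) (hp0 : 0 ≤ p) (hp1 : p < 1) (hk : 3 ≤ Γ.card)
    {s : G} (hs : s ∈ Γ) (n c : ℕ) :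
    P.real {ω | pastCount X n s ω = c} ≤ n.choose c * (max p (1 / 2)) ^ c := by
  classical
  have hq0 : (0 : ℝ) ≤ max p (1 / 2) := le_trans hp0 (le_max_left _ _)
  induction n generalizing c with
  | zero =>
    cases c with
    | zero => simp [pastCount_zero]
    | succ c => simp [pastCount_zero]
  | succ n ih =>
    cases c with
    | zero => simpa using measureReal_le_one
    | succ c =>
      have hsub : {ω | pastCount X (n + 1) s ω = c + 1} ⊆
          ({ω | X (n + 1) ω = s} ∩ {ω | pastCount X n s ω = c}) ∪
            {ω | pastCount X n s ω = c + 1} := by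
        intro ω hω
        simp only [Set.mem_ofPred_eq, pastCount_succ] at hω
        by_cases h : X (n + 1) ω = s
        · left; exact ⟨h, by simpa [h] using hω⟩
        · right; simpa [h] using hω
      calc _ ≤ _ := measureReal_mono hsub (by finiteness)
        _ ≤ _ := measureReal_union_le _ _
        _ ≤ max p (1 / 2) * (n.choose c * (max p (1 / 2)) ^ c) +
            n.choose (c + 1) * (max p (1 / 2)) ^ (c + 1) := by
          refine add_le_add ?_ (ih _)
          refine (step_unif hX hp0 hp1 hk n hs (past_count n s c)).trans ?_
          exact mul_le_mul_of_nonneg_left (ih c) hq0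
        _ = _ := by rw [Nat.choose_succ_succ]; push_cast; ring

lemma tail_le (hX : IsERW P p Γ X) (hp0 : 0 ≤ p) (hp1 : p < 1) (hk : 3 ≤ Γ.card)
    {s : G} (hs : s ∈ Γ) (n : ℕ) (T ε : ℝ) (hT : 1 ≤ T) :
    P.real {ω | (1 - ε) * n < pastCount X n s ω} ≤ ((1 / T + max p (1 / 2)) * T ^ ε) ^ n := by
  classical
  set q := max p (1 / 2) with hq
  have hq0 : (0 : ℝ) ≤ q := le_trans hp0 (le_max_left _ _)
  have hT0 : 0 < T := by linarith
  set I := (Finset.range (n + 1)).filter fun c : ℕ => (1 - ε) * n < (c : ℝ) with hI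
  have hsub : {ω | (1 - ε) * n < pastCount X n s ω} ⊆
      ⋃ c ∈ I, {ω | pastCount X n s ω = c} := by
    intro ω hω
    simp only [Set.mem_iUnion]
    refine ⟨pastCount X n s ω, ?_, rfl⟩
    rw [hI, Finset.mem_filter, Finset.mem_range]
    exact ⟨Nat.lt_succ_of_le (pastCount_le n s ω), hω⟩
  have hTn : 0 < T ^ ((1 - ε) * n) := Real.rpow_pos_of_pos hT0 _
  calc _ ≤ _ := measureReal_mono hsub (measure_ne_top _ _)
    _ ≤ _ := measureReal_biUnion_finset_le _ _
    _ ≤ ∑ c ∈ I, (n.choose c * q ^ c) * (T ^ c / T ^ ((1 - ε) * n)) := by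
        refine Finset.sum_le_sum fun c hc => ?_
        refine (count_le hX hp0 hp1 hk hs n c).trans ?_
        refine le_mul_of_one_le_right (by positivity) ?_
        rw [one_le_div hTn, ← Real.rpow_natCast]
        exact Real.rpow_le_rpow_of_exponent_le hT (Finset.mem_filter.1 hc).2.le
    _ ≤ ∑ c ∈ Finset.range (n + 1), (n.choose c * q ^ c) * (T ^ c / T ^ ((1 - ε) * n)) := by
        refine Finset.sum_le_sum_of_subset_of_nonneg (Finset.filter_subset _ _) ?_
        intros; positivity
    _ = (q * T + 1) ^ n / T ^ ((1 - ε) * n) := by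
        rw [add_pow, Finset.sum_div]
        refine Finset.sum_congr rfl fun c _ => ?_
        rw [mul_pow]; simp; ring
    _ = _ := by
        rw [Real.rpow_mul hT0.le, Real.rpow_natCast, ← div_pow, Real.rpow_sub hT0, Real.rpow_one]
        congr 1
        have : 0 < T ^ ε := Real.rpow_pos_of_pos hT0 _
        field_simp
        ring

set_option maxHeartbeats 2000000 in
lemma block (hX : IsERW P p Γ X) (hp0 : 0 ≤ p) (hp1 : p < 1) (hk : 3 ≤ Γ.card)
    (Γ' : Finset G) (hsub : Γ' ⊆ Γ) (hsymm' : ∀ s ∈ Γ', s⁻¹ ∈ Γ')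
    (h : G → ℝ) (hpos : ∀ x, 0 < h x) (L : ℝ)
    (hL : ∀ x, ∑ s ∈ Γ', h (x * s) ≤ L * h x)
    (ε : ℝ) (hε : 0 < ε) (c₀ : ℝ) (hc₀ : c₀ = (1 - p) * ε / ((Γ.card : ℝ) - 1))
    (η : ℝ) (hη : 0 < η) {m J : ℕ} (hm : 1 ≤ m) (hJ : (J : ℝ) ≤ η * c₀ * m)
    {A : Set Ω} (hA : MeasurableSet[pastSigma X m] A)
    (hconst : ∀ ω ∈ A, ∀ ω' ∈ A, ∀ s ∈ Γ, pastCount X m s ω = pastCount X m s ω')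
    (hgood : ∀ ω ∈ A, ∀ s ∈ Γ, (pastCount X m s ω : ℝ) ≤ (1 - ε) * m) (x : G) :
    P.real (A ∩ {ω | pos X (m + J) ω = x}) ≤
      ((1 + η) * max (c₀ * L + (1 - c₀ * Γ'.card)) 0) ^ J * P.real A := by
  classical
  rcases A.eq_empty_or_nonempty with rfl | ⟨ω₀, hω₀⟩
  · simp
  have hk' : (3 : ℝ) ≤ Γ.card := by exact_mod_cast hk
  have hm' : (1 : ℝ) ≤ m := by exact_mod_cast hm
  have hm0 : (0 : ℝ) < m := by linarith
  set k : ℝ := (Γ.card : ℝ) with hkdef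
  have hk1 : 0 < k - 1 := by linarith
  have hc₀pos : 0 < c₀ := by
    rw [hc₀]; exact div_pos (mul_pos (by linarith) hε) hk1
  set N : G → ℝ := fun s => pastCount X m s ω₀ with hN
  have hN0 : ∀ s, 0 ≤ N s := fun s => by positivity
  have hNm : ∀ s, N s ≤ m := fun s => by simp only [hN]; exact_mod_cast pastCount_le m s ω₀
  set μ : G → ℝ := fun s => p * N s / m + (1 - p) * (m - N s) / ((k - 1) * m) with hμ
  have hμc : ∀ s ∈ Γ, c₀ ≤ μ s := by
    intro s hs
    have h1 : N s ≤ (1 - ε) * m := hgood ω₀ hω₀ s hs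
    have h2 : 0 ≤ p * N s / m := div_nonneg (mul_nonneg hp0 (hN0 s)) hm0.le
    have h3 : c₀ ≤ (1 - p) * (m - N s) / ((k - 1) * m) := by
      rw [hc₀, div_le_div_iff₀ hk1 (by positivity)]
      have h4 : ε * m ≤ m - N s := by linarith
      have h5 := mul_le_mul_of_nonneg_left h4 (mul_nonneg (by linarith : (0 : ℝ) ≤ 1 - p) hk1.le)
      nlinarith
    simp only [hμ]; linarith
  have hμ0 : ∀ s ∈ Γ, 0 ≤ μ s := fun s hs => hc₀pos.le.trans (hμc s hs)
  have hNsum : ∑ s ∈ Γ, N s = m := by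
    simp only [hN]; exact_mod_cast pastCount_sum hX m ω₀
  have hμ1 : ∑ s ∈ Γ, μ s = 1 := by
    simp only [hμ]
    rw [Finset.sum_add_distrib, ← Finset.sum_div, ← Finset.sum_div, ← Finset.mul_sum,
      ← Finset.mul_sum, Finset.sum_sub_distrib, hNsum, Finset.sum_const, nsmul_eq_mul, ← hkdef]
    field_simp
    ring
  set R := c₀ * L + (1 - c₀ * Γ'.card) with hR
  set u : ℕ → G → ℝ := fun j x => P.real (A ∩ {ω | pos X (m + j) ω = x}) with hu
  have hu0 : ∀ j x, 0 ≤ u j x := fun j x => measureReal_nonneg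
  have hcontr := fun f hf => l2_contract Γ Γ' hsub hsymm' h hpos L c₀ hc₀pos.le hL μ hμ0
    (fun s hs => hμc s (hsub hs)) hμ1 f hf
  have hR0 : 0 ≤ R := (hcontr (fun _ => 0) (by simpa using summable_zero)).1
  have hstep : ∀ j, j ≤ J → ∀ x, u (j + 1) x ≤ (1 + η) * ∑ s ∈ Γ, μ s * u j (x * s⁻¹) := by
    intro j hj x
    have hj' : (j : ℝ) ≤ J := by exact_mod_cast hj
    simp only [hu]
    rw [← add_assoc, pos_succ_event hX (m + j) x A, Finset.mul_sum]
    refine (measureReal_biUnion_finset_le _ _).trans ?_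
    refine Finset.sum_le_sum fun s hs => ?_
    rw [← mul_assoc]
    refine step_bound hX (by omega) hs ((past_mono (by omega) _ hA).inter (past_pos hX _ _))
      (mul_nonneg (by linarith) (hμ0 s hs)) ?_
    rintro ω ⟨hω, -⟩
    have hcnt := pastCount_add (X := X) m j s ω
    rw [hconst ω hω ω₀ hω₀ s hs] at hcnt
    set M : ℝ := (pastCount X (m + j) s ω : ℝ) with hM
    have hM1 : N s ≤ M := by simp only [hN, hM]; exact_mod_cast hcnt.1
    have hM2 : M ≤ N s + j := by simp only [hN, hM]; exact_mod_cast hcnt.2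
    have hM3 : M ≤ m + j := by
      simp only [hM]; exact_mod_cast pastCount_le (m + j) s ω
    have hj0 : (0 : ℝ) ≤ j := by positivity
    push_cast
    have e1 : p * M / (m + j) ≤ p * (N s + j) / m := by
      have := hN0 s
      gcongr
      linarith
    have e2 : (1 - p) * (m + j - M) / ((k - 1) * (m + j)) ≤
        (1 - p) * (m + j - N s) / ((k - 1) * m) := by
      have := hNm s
      have h1p : 0 ≤ 1 - p := by linarith
      have : 0 ≤ m + j - N s := by linarith
      gcongr
      linarith
    have e3 : p * (N s + j) / m + (1 - p) * (m + j - N s) / ((k - 1) * m) =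
        μ s + (p + (1 - p) / (k - 1)) * (j / m) := by
      simp only [hμ]; field_simp; ring
    have e4 : p + (1 - p) / (k - 1) ≤ 1 := by
      have : (1 - p) / (k - 1) ≤ 1 - p := div_le_self (by linarith) (by linarith)
      linarith
    have e5 : (j : ℝ) / m ≤ η * c₀ := by
      rw [div_le_iff₀ hm0]; linarith
    have e6 : (p + (1 - p) / (k - 1)) * (j / m) ≤ 1 * (j / m) :=
      mul_le_mul_of_nonneg_right e4 (by positivity)
    have e7 : η * c₀ ≤ η * μ s := mul_le_mul_of_nonneg_left (hμc s hs) hη.le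
    calc _ ≤ _ := add_le_add e1 e2
      _ = _ := e3
      _ ≤ (1 + η) * μ s := by linarith
  have hmain : ∀ j, j ≤ J → (Summable fun x => u j x ^ 2) ∧
      ∑' x, u j x ^ 2 ≤ (((1 + η) * R) ^ j * P.real A) ^ 2 := by
    intro j
    induction j with
    | zero =>
      intro _
      have hfin : ∀ F : Finset G, ∑ x ∈ F, u 0 x ^ 2 ≤ P.real A ^ 2 := by
        intro F
        calc ∑ x ∈ F, u 0 x ^ 2 ≤ ∑ x ∈ F, P.real A * u 0 x := by
              refine Finset.sum_le_sum fun x _ => ?_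
              rw [sq]
              exact mul_le_mul_of_nonneg_right
                (measureReal_mono Set.inter_subset_left (measure_ne_top _ _)) (hu0 0 x)
          _ = P.real A * ∑ x ∈ F, u 0 x := by rw [Finset.mul_sum]
          _ ≤ P.real A * P.real A :=
              mul_le_mul_of_nonneg_left (sum_pos_le hX _ (past_le hX m _ hA) F)
                measureReal_nonneg
          _ = _ := by ring
      refine ⟨summable_of_sum_le (fun x => sq_nonneg _) hfin, ?_⟩
      simpa using Real.tsum_le_of_sum_le (fun x => sq_nonneg (u 0 x)) hfin
    | succ j ih =>
      intro hj
      obtain ⟨h1, h2⟩ := ih (by omega)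
      obtain ⟨-, h3, h4⟩ := hcontr (u j) h1
      have hpt : ∀ x, u (j + 1) x ^ 2 ≤
          (1 + η) ^ 2 * (∑ s ∈ Γ, μ s * u j (x * s⁻¹)) ^ 2 := by
        intro x
        rw [← mul_pow]
        exact pow_le_pow_left₀ (hu0 _ _) (hstep j (by omega) x) 2
      have hs : Summable fun x => u (j + 1) x ^ 2 :=
        Summable.of_nonneg_of_le (fun x => sq_nonneg _) hpt (h3.mul_left _)
      refine ⟨hs, ?_⟩
      calc _ ≤ ∑' x, (1 + η) ^ 2 * (∑ s ∈ Γ, μ s * u j (x * s⁻¹)) ^ 2 :=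
            hs.tsum_le_tsum hpt (h3.mul_left _)
        _ = (1 + η) ^ 2 * ∑' x, (∑ s ∈ Γ, μ s * u j (x * s⁻¹)) ^ 2 := tsum_mul_left
        _ ≤ (1 + η) ^ 2 * (R ^ 2 * (((1 + η) * R) ^ j * P.real A) ^ 2) := by
            refine mul_le_mul_of_nonneg_left (h4.trans ?_) (sq_nonneg _)
            exact mul_le_mul_of_nonneg_left h2 (sq_nonneg _)
        _ = _ := by ring
  obtain ⟨h1, h2⟩ := hmain J le_rfl
  have h3 : u J x ^ 2 ≤ (((1 + η) * R) ^ J * P.real A) ^ 2 :=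
    (h1.le_tsum x (fun y _ => sq_nonneg _)).trans h2
  rw [max_eq_left hR0]
  exact le_of_sq_le_sq h3 (mul_nonneg (pow_nonneg (mul_nonneg (by linarith) hR0) _) measureReal_nonneg)

set_option maxHeartbeats 2000000 in
lemma main_bound (hX : IsERW P p Γ X) (hp0 : 0 ≤ p) (hp1 : p < 1) (hk : 3 ≤ Γ.card)
    (ε : ℝ) (m n : ℕ) (r b : ℝ) (hr : 0 ≤ r) (x : G)
    (hblock : ∀ A : Set Ω, MeasurableSet[pastSigma X m] A →
      (∀ ω ∈ A, ∀ ω' ∈ A, ∀ s ∈ Γ, pastCount X m s ω = pastCount X m s ω') →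
      (∀ ω ∈ A, ∀ s ∈ Γ, (pastCount X m s ω : ℝ) ≤ (1 - ε) * m) →
      P.real (A ∩ {ω | pos X n ω = x}) ≤ r * P.real A)
    (htail : ∀ s ∈ Γ, P.real {ω | (1 - ε) * m < pastCount X m s ω} ≤ b) :
    P.real {ω | pos X n ω = x} ≤ Γ.card * b + r := by
  classical
  set I : Finset (Γ → ℕ) := (Fintype.piFinset fun _ : Γ => Finset.range (m + 1)).filter
    fun c => ∀ s, (c s : ℝ) ≤ (1 - ε) * m with hI
  set A : (Γ → ℕ) → Set Ω := fun c => ⋂ s : Γ, {ω | pastCount X m s ω = c s} with hAdef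
  have hAm : ∀ c, MeasurableSet[pastSigma X m] (A c) := fun c =>
    MeasurableSet.iInter fun s => past_count m (s : G) (c s)
  have hAmem : ∀ c ω, ω ∈ A c ↔ ∀ s : Γ, pastCount X m s ω = c s := fun c ω => by
    simp [hAdef]
  have hcov : {ω | pos X n ω = x} ⊆ (⋃ s ∈ Γ, {ω | (1 - ε) * m < pastCount X m s ω}) ∪
      ⋃ c ∈ I, A c ∩ {ω | pos X n ω = x} := by
    intro ω hω
    by_cases hg : ∃ s ∈ Γ, (1 - ε) * m < pastCount X m s ω
    · left
      obtain ⟨s, hs, h⟩ := hg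
      simp only [Set.mem_iUnion]
      exact ⟨s, hs, h⟩
    · right
      push Not at hg
      simp only [Set.mem_iUnion]
      refine ⟨fun s => pastCount X m s ω, ?_, (hAmem _ _).2 fun s => rfl, hω⟩
      rw [hI, Finset.mem_filter, Fintype.mem_piFinset]
      exact ⟨fun s => Finset.mem_range.2 (Nat.lt_succ_of_le (pastCount_le m (s : G) ω)),
        fun s => hg s s.2⟩
  have hdisj : ∑ c ∈ I, P.real (A c) ≤ 1 := by
    rw [← measureReal_biUnion_finset]
    · exact measureReal_le_one
    · intro a _ b _ hab
      refine Set.disjoint_left.2 fun ω h1 h2 => hab ?_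
      funext s
      exact ((hAmem a ω).1 h1 s).symm.trans ((hAmem b ω).1 h2 s)
    · intro c _
      exact past_le hX m _ (hAm c)
  calc _ ≤ _ := measureReal_mono hcov (measure_ne_top _ _)
    _ ≤ _ := measureReal_union_le _ _
    _ ≤ ∑ s ∈ Γ, P.real {ω | (1 - ε) * m < pastCount X m s ω} +
        ∑ c ∈ I, P.real (A c ∩ {ω | pos X n ω = x}) :=
        add_le_add (measureReal_biUnion_finset_le _ _) (measureReal_biUnion_finset_le _ _)
    _ ≤ ∑ s ∈ Γ, b + ∑ c ∈ I, r * P.real (A c) := by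
        refine add_le_add (Finset.sum_le_sum htail) (Finset.sum_le_sum fun c hc => ?_)
        refine hblock (A c) (hAm c) ?_ ?_
        · intro ω h1 ω' h2 s hs
          exact ((hAmem c ω).1 h1 ⟨s, hs⟩).trans ((hAmem c ω').1 h2 ⟨s, hs⟩).symm
        · intro ω h1 s hs
          have h2 := (hAmem c ω).1 h1 ⟨s, hs⟩
          simp only at h2
          rw [h2]
          exact (Finset.mem_filter.1 hc).2 ⟨s, hs⟩
    _ = Γ.card * b + r * ∑ c ∈ I, P.real (A c) := by
        rw [Finset.sum_const, nsmul_eq_mul, Finset.mul_sum]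
    _ ≤ Γ.card * b + r * 1 := by
        gcongr
    _ = _ := by ring

end prob

/-- **Exponential decay for the elephant random walk on a regular tree.**
Suppose `G` is generated by a finite symmetric set `Γ` whose Cayley graph is the
infinite `d`-regular tree `𝕋_d` with `d ≥ 3`.  Let `S` be an elephant random walk on
`G_Γ` with memory parameter `p ∈ [0,1)`.  Then there is `ρ = ρ(G, p, d) ∈ (0,1)` such
that `sup_x ℙ(S_n = x) ≤ ρⁿ` for all `n ≥ 1`. -/
theorem erw_regular_tree_exponential_decay
    {G : Type*} [Group G] [MeasurableSpace G] [MeasurableSingletonClass G]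
    {Ω : Type*} [MeasurableSpace Ω] (P : Measure Ω) [IsProbabilityMeasure P]
    (Γ : Finset G) (hsymm : ∀ s ∈ Γ, s⁻¹ ∈ Γ)
    (hgen : Subgroup.closure (Γ : Set G) = ⊤)
    (d : ℕ) (hd : 3 ≤ d)
    (htree : (cayleyGraph Γ).IsTree)
    (hreg : ∀ x : G, ((cayleyGraph Γ).neighborSet x).ncard = d)
    (p : ℝ) (hp0 : 0 ≤ p) (hp1 : p < 1)
    (X : ℕ → Ω → G) (hX : IsERW P p Γ X) :
    ∃ ρ : ℝ, ρ ∈ Set.Ioo (0 : ℝ) 1 ∧ ∀ n : ℕ, 1 ≤ n → ∀ x : G,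
      P {ω | pos X n ω = x} ≤ ENNReal.ofReal (ρ ^ n) := by
  classical
  set Γ' := Γ.erase 1 with hΓ'def
  have hΓ' : ∀ s, s ∈ Γ' ↔ s ∈ Γ ∧ s ≠ 1 := fun s => by
    rw [hΓ'def, Finset.mem_erase]; tauto
  have hcard : Γ'.card = d := card_erase Γ hsymm d hreg Γ' hΓ'
  obtain ⟨h, hpos, hL⟩ := tree_weight Γ d hd htree Γ' hΓ' hcard
  have hsub : Γ' ⊆ Γ := Finset.erase_subset _ _
  have hk : 3 ≤ Γ.card := by
    have := Finset.card_le_card hsub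
    omega
  have hsymm' : ∀ s ∈ Γ', s⁻¹ ∈ Γ' := by
    intro s hs
    rw [hΓ'] at hs ⊢
    exact ⟨hsymm s hs.1, by simpa using hs.2⟩
  set L := 2 * Real.sqrt ((d : ℝ) - 1) with hLdef
  have hd' : (3 : ℝ) ≤ d := by exact_mod_cast hd
  have hLd : L < d := by
    have h1 : Real.sqrt ((d : ℝ) - 1) * Real.sqrt ((d : ℝ) - 1) = (d : ℝ) - 1 :=
      Real.mul_self_sqrt (by linarith)
    have h2 := Real.sqrt_nonneg ((d : ℝ) - 1)
    nlinarith [sq_nonneg (Real.sqrt ((d : ℝ) - 1) - 1)]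
  have hk' : (3 : ℝ) ≤ Γ.card := by exact_mod_cast hk
  set q := max p (1 / 2) with hq
  have hq0 : 0 < q := lt_of_lt_of_le (by norm_num) (le_max_right _ _)
  have hq1 : q < 1 := max_lt hp1 (by norm_num)
  -- choice of `T` and `ε`
  set T : ℝ := 2 / (1 - q) with hT
  have hT1 : 1 ≤ T := by
    rw [hT, le_div_iff₀ (by linarith)]; linarith
  have hTq : 1 / T + q < 1 := by
    rw [hT, one_div_div]; linarith
  have hT0 : 0 < T := by linarith
  obtain ⟨ε, hε0, hε1⟩ : ∃ ε : ℝ, 0 < ε ∧ (1 / T + q) * T ^ ε < 1 := by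
    have hcont : Tendsto (fun ε : ℝ => (1 / T + q) * T ^ ε) (nhds 0)
        (nhds ((1 / T + q) * T ^ (0 : ℝ))) :=
      ((Real.continuous_const_rpow hT0.ne').tendsto 0).const_mul _
    rw [Real.rpow_zero, mul_one] at hcont
    have hev := hcont.eventually (gt_mem_nhds hTq)
    have hev2 := hev.filter_mono (nhdsWithin_le_nhds (s := Set.Ioi (0 : ℝ)))
    obtain ⟨ε, h1, h2⟩ := (hev2.and self_mem_nhdsWithin).exists
    exact ⟨ε, h2, h1⟩
  set b := (1 / T + q) * T ^ ε with hb
  have hb0 : 0 < b := by positivity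
  set c₀ := (1 - p) * ε / ((Γ.card : ℝ) - 1) with hc₀
  have hc₀pos : 0 < c₀ := div_pos (mul_pos (by linarith) hε0) (by linarith)
  set R := c₀ * L + (1 - c₀ * Γ'.card) with hR
  have hR1 : R < 1 := by
    rw [hR, hcard]; nlinarith
  obtain ⟨η, hη0, hη1⟩ : ∃ η : ℝ, 0 < η ∧ (1 + η) * max R 0 < 1 := by
    have hR2 : max R 0 < 1 := max_lt hR1 one_pos
    have hR3 : 0 ≤ max R 0 := le_max_right _ _
    refine ⟨(1 - max R 0) / 2, by linarith, ?_⟩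
    nlinarith
  set r := max ((1 + η) * max R 0) b with hr
  have hr0 : 0 < r := lt_max_of_lt_right hb0
  have hr1 : r < 1 := max_lt hη1 hε1
  obtain ⟨K, hK⟩ := exists_nat_ge (max 1 (1 / (η * c₀)))
  have hK1 : (1 : ℝ) ≤ K := (le_max_left _ _).trans hK
  have hK1' : 1 ≤ K := by exact_mod_cast hK1
  have hK2 : 1 ≤ K * (η * c₀) := by
    have := (le_max_right _ _).trans hK
    rwa [div_le_iff₀ (by positivity)] at this
  obtain ⟨ρ, hρ, hfin⟩ := final_rate q (Γ.card + 1) r hq0 hq1 (by positivity) hr0 hr1 K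
  refine ⟨ρ, hρ, fun n hn x => ?_⟩
  have key : P.real {ω | pos X n ω = x} ≤ ρ ^ n := by
    refine hfin n hn _ (pos_le_q hX hp0 hp1 hk n hn x) ?_
    set j := n / (K + 1) with hj
    have hjn : (K + 1) * j ≤ n := Nat.mul_div_le n (K + 1)
    obtain ⟨m, hm⟩ : ∃ m, n = m + j := ⟨n - j, by
      have : j ≤ n := Nat.div_le_self _ _
      omega⟩
    have hKm : K * j ≤ m := by nlinarith
    have hjm : j ≤ m := by nlinarith
    have hm1 : 1 ≤ m := by omega
    have hjb : (j : ℝ) ≤ η * c₀ * m := by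
      have h1 : (K : ℝ) * j ≤ m := by exact_mod_cast hKm
      have h2 : (0 : ℝ) ≤ j := by positivity
      have h3 : 0 < η * c₀ := by positivity
      calc (j : ℝ) ≤ (K * (η * c₀)) * j := le_mul_of_one_le_left h2 hK2
        _ = η * c₀ * (K * j) := by ring
        _ ≤ _ := mul_le_mul_of_nonneg_left h1 h3.le
    have hmb := main_bound hX hp0 hp1 hk ε m n (r ^ j) (r ^ j) (by positivity) x ?_ ?_
    · linarith
    · intro A hA h1 h2
      have := block hX hp0 hp1 hk Γ' hsub hsymm' h hpos L hL ε hε0 c₀ hc₀ η hη0 hm1 hjb hA h1 h2 x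
      rw [← hm] at this
      refine this.trans (mul_le_mul_of_nonneg_right ?_ measureReal_nonneg)
      exact pow_le_pow_left₀ (mul_nonneg (by linarith) (le_max_right _ _)) (le_max_left _ _) _
    · intro s hs
      refine (tail_le hX hp0 hp1 hk hs m T ε hT1).trans ?_
      calc b ^ m ≤ b ^ j := pow_le_pow_of_le_one hb0.le hε1.le hjm
        _ ≤ r ^ j := pow_le_pow_left₀ hb0.le (le_max_right _ _) _
  rw [measureReal_def] at key
  exact (ENNReal.le_ofReal_iff_toReal_le (measure_ne_top _ _) (pow_nonneg hρ.1.le _)).2 key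
end

section
/- The elephant random walk with memory parameter p ∈ [0,1] on the Cayley graph G_Γ of a finitely generated group G with respect to a finite symmetric generating set Γ = {g₁,…,g_d} (d ≥ 2) is a generalized step-reinforced random walk: when p ≥ 1/d it is the usual SRRW with reinforcement parameter α = (dp−1)/(d−1) and step distribution μ uniform on Γ; when p < 1/d it is a generalized SRRW with reinforcement parameter α = 1−dp, step distribution μ uniform on Γ, and transformations T_n(g_i) = g_{σ^{Y_n}(i)}, where σ is the cyclic rotation (1 2 3 … d) and (Y_n)_{n≥2} are i.i.d. uniform on {1,…,d−1} (so T_n(g_i) is uniform on Γ \ {g_i}). -/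
open MeasureTheory ProbabilityTheory Filter
open scoped ENNReal NNReal

namespace SRRW

variable {Ω : Type*} [MeasurableSpace Ω] {G : Type*} [Group G] [MeasurableSpace G]

/-- The family combining `(ξ_n)`, `(u_n)` and `(g_n)`, with values in the common
measurable space `Bool ⊕ ℕ ⊕ G`. -/
def fam (ξ : ℕ → Ω → Bool) (u : ℕ → Ω → ℕ) (g : ℕ → Ω → G) :
    (ℕ ⊕ ℕ ⊕ ℕ) → Ω → (Bool ⊕ ℕ ⊕ G)
  | .inl n => fun ω => .inl (ξ n ω)
  | .inr (.inl n) => fun ω => .inr (.inl (u n ω))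
  | .inr (.inr n) => fun ω => .inr (.inr (g n ω))

/-- The driving randomness of a (generalized) step-reinforced random walk:
`(ξ_n)_{n ≥ 2}` are i.i.d. Bernoulli(α), `(u_n)_{n ≥ 2}` are independent with `u_n`
uniform on `{1, …, n-1}`, `(g_n)_{n ≥ 1}` are i.i.d. with law `μ` (the fresh steps),
and all of them are jointly independent. -/
structure IsDriving (P : Measure Ω) (α : ℝ) (μ : Measure G)
    (ξ : ℕ → Ω → Bool) (u : ℕ → Ω → ℕ) (g : ℕ → Ω → G) : Prop where
  meas_ξ : ∀ n, Measurable (ξ n)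
  meas_u : ∀ n, Measurable (u n)
  meas_g : ∀ n, Measurable (g n)
  ξ_law : ∀ n, 2 ≤ n → P {ω | ξ n ω = true} = ENNReal.ofReal α
  u_range : ∀ n, 2 ≤ n → ∀ ω, 1 ≤ u n ω ∧ u n ω < n
  u_law : ∀ n, 2 ≤ n → ∀ k, 1 ≤ k → k < n → P {ω | u n ω = k} = ((n - 1 : ℕ) : ℝ≥0∞)⁻¹
  g_law : ∀ n, 1 ≤ n → P.map (g n) = μ
  indep : iIndepFun (fam ξ u g) P

/-- `X` is the step sequence of a generalized step-reinforced random walk with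
reinforcement parameter `α`, step distribution `μ` and transformations `(T_n)_{n ≥ 2}`:
`X_1 = g_1` and, for `n ≥ 2`, `X_n = T_n(X_{u_n})` if `ξ_n = 1` while `X_n = g_n`
(a fresh `μ`-distributed step) if `ξ_n = 0`.  Each `T_n` is a (random) measurable
transformation of `G` which is independent of `(ξ_k)_{k ≥ n}`, `(u_k)_{k ≥ n}` and of the
fresh steps `(g_k)_{k ≥ n}`. -/
def IsGenSRRW (P : Measure Ω) (α : ℝ) (μ : Measure G)
    (T : ℕ → Ω → G → G) (X : ℕ → Ω → G) : Prop :=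
  ∃ ξ u g, IsDriving P α μ ξ u g ∧
    (∀ n, Measurable (Function.uncurry (T n))) ∧
    (∀ n, 2 ≤ n → IndepFun
      (fun ω (k : {k : ℕ // n ≤ k}) => (ξ k ω, u k ω, g k ω))
      (fun ω => T n ω) P) ∧
    (∀ ω, X 1 ω = g 1 ω) ∧
    (∀ n, 2 ≤ n → ∀ ω, X n ω = if ξ n ω then T n ω (X (u n ω) ω) else g n ω)


/-- `X` is the step sequence of a usual step-reinforced random walk (all transformations
are the identity). -/
def IsSRRW (P : Measure Ω) (α : ℝ) (μ : Measure G) (X : ℕ → Ω → G) : Prop :=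
  IsGenSRRW P α μ (fun _ _ => id) X

end SRRW


open SRRW

namespace ERWProof

/-- Bernoulli law on `ℕ`. -/
noncomputable def bern (α : ℝ) : Measure ℕ :=
  ENNReal.ofReal α • Measure.dirac 1 + ENNReal.ofReal (1 - α) • Measure.dirac 0

/-- Uniform law on `{0, …, k}`. -/
noncomputable def unif (k : ℕ) : Measure ℕ :=
  ((k + 1 : ℕ) : ℝ≥0∞)⁻¹ • ∑ j ∈ Finset.range (k + 1), Measure.dirac j

lemma bern_one (α : ℝ) : bern α {1} = ENNReal.ofReal α := by
  simp [bern]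

lemma bern_ne_one (α : ℝ) : bern α {1}ᶜ = ENNReal.ofReal (1 - α) := by
  simp [bern]

lemma bern_prob (α : ℝ) (h0 : 0 ≤ α) (h1 : α ≤ 1) : IsProbabilityMeasure (bern α) := by
  constructor
  simp only [bern, Measure.add_apply, Measure.smul_apply, measure_univ, smul_eq_mul, mul_one]
  rw [← ENNReal.ofReal_add h0 (by linarith)]
  simp

open Classical in
lemma unif_apply (k : ℕ) (A : Set ℕ) :
    unif k A = ((k + 1 : ℕ) : ℝ≥0∞)⁻¹ *
      (((Finset.range (k + 1)).filter (fun j => j ∈ A)).card : ℝ≥0∞) := by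
  simp [unif, Set.indicator_apply, Finset.sum_boole]

instance unif_prob (k : ℕ) : IsProbabilityMeasure (unif k) := by
  constructor
  rw [unif_apply]
  simp only [Set.mem_univ, Finset.filter_true, Finset.card_range]
  exact ENNReal.inv_mul_cancel (by simp) (by simp)

lemma unif_mod (k l : ℕ) (hl : l < k + 1) :
    unif k {a | a % (k + 1) = l} = ((k + 1 : ℕ) : ℝ≥0∞)⁻¹ := by
  rw [unif_apply]
  conv_rhs => rw [← mul_one ((k + 1 : ℕ) : ℝ≥0∞)⁻¹]
  congr 1
  rw [Nat.cast_eq_one, Finset.card_eq_one]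
  refine ⟨l, ?_⟩
  ext j
  simp only [Set.mem_ofPred_eq, Finset.mem_filter, Finset.mem_range, Finset.mem_singleton]
  constructor
  · rintro ⟨h, h'⟩
    rwa [Nat.mod_eq_of_lt h] at h'
  · rintro rfl
    exact ⟨hl, Nat.mod_eq_of_lt hl⟩

/-- The law of the coordinates. -/
noncomputable def law (α : ℝ) (d : ℕ) (i : ℕ × Fin 4) : Measure ℕ :=
  if i.2 = 0 then bern α else if i.2 = 1 then unif (i.1 - 2)
    else if i.2 = 2 then unif (d - 1) else unif (d - 2)

lemma law_prob (α : ℝ) (h0 : 0 ≤ α) (h1 : α ≤ 1) (d : ℕ) (i : ℕ × Fin 4) :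
    IsProbabilityMeasure (law α d i) := by
  have := bern_prob α h0 h1
  unfold law
  split_ifs <;> infer_instance

/-- The deterministic construction of the walk from its driving sequences. -/
def walk {G : Type*} (ξ : ℕ → Bool) (u : ℕ → ℕ) (g : ℕ → G) (t : ℕ → G → G) (n : ℕ) : G :=
  if h : 1 ≤ u n ∧ u n < n then
    (if ξ n then t n (walk ξ u g t (u n)) else g n)
  else g n
termination_by n
decreasing_by exact h.2

/-- Bernoulli variables. -/
def xi {Ω : Type*} (c : ℕ × Fin 4 → Ω → ℕ) (n : ℕ) (ω : Ω) : Bool := decide (c (n, 0) ω = 1)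

/-- Uniform times. -/
def uu {Ω : Type*} (c : ℕ × Fin 4 → Ω → ℕ) (n : ℕ) (ω : Ω) : ℕ := c (n, 1) ω % (n - 2 + 1) + 1

/-- Fresh steps. -/
def gg {Ω G : Type*} (γ : ℕ → G) (c : ℕ × Fin 4 → Ω → ℕ) (n : ℕ) (ω : Ω) : G := γ (c (n, 2) ω)

/-- Rotation amounts. -/
def yy {Ω : Type*} (d : ℕ) (c : ℕ × Fin 4 → Ω → ℕ) (n : ℕ) (ω : Ω) : ℕ :=
  c (n, 3) ω % (d - 2 + 1) + 1

/-- The walk driven by the coordinates `c`. -/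
def W {Ω G : Type*} (d : ℕ) (γ : ℕ → G) (τ : ℕ → G → G) (c : ℕ × Fin 4 → Ω → ℕ)
    (n : ℕ) (ω : Ω) : G :=
  walk (fun k => xi c k ω) (fun k => uu c k ω) (fun k => gg γ c k ω) (fun k => τ (yy d c k ω)) n

lemma uu_range {Ω : Type*} (c : ℕ × Fin 4 → Ω → ℕ) (n : ℕ) (hn : 2 ≤ n) (ω : Ω) :
    1 ≤ uu c n ω ∧ uu c n ω < n := by
  unfold uu
  have := Nat.mod_lt (c (n, 1) ω) (show 0 < n - 2 + 1 by omega)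
  omega

lemma W_one {Ω G : Type*} (d : ℕ) (γ : ℕ → G) (τ : ℕ → G → G) (c : ℕ × Fin 4 → Ω → ℕ) (ω : Ω) :
    W d γ τ c 1 ω = gg γ c 1 ω := by
  unfold W
  rw [walk]
  rw [dif_neg (by omega)]

lemma W_step {Ω G : Type*} (d : ℕ) (γ : ℕ → G) (τ : ℕ → G → G) (c : ℕ × Fin 4 → Ω → ℕ)
    (n : ℕ) (hn : 2 ≤ n) (ω : Ω) :
    W d γ τ c n ω = if xi c n ω then τ (yy d c n ω) (W d γ τ c (uu c n ω) ω) else gg γ c n ω := by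
  unfold W
  rw [walk]
  rw [dif_pos (uu_range c n hn ω)]

lemma W_mem {Ω G : Type*} (d : ℕ) (γ : ℕ → G) (τ : ℕ → G → G) (c : ℕ × Fin 4 → Ω → ℕ)
    (Γ : Finset G) (hγ : ∀ j, γ j ∈ Γ) (hτ : ∀ y, ∀ s ∈ Γ, τ y s ∈ Γ) (n : ℕ) (hn : 1 ≤ n)
    (ω : Ω) : W d γ τ c n ω ∈ Γ := by
  induction n using Nat.strong_induction_on with
  | _ n ih =>
    rcases Nat.lt_or_ge n 2 with h | h
    · obtain rfl : n = 1 := by omega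
      rw [W_one]; exact hγ _
    · rw [W_step _ _ _ _ _ h]
      have := uu_range c n h ω
      split_ifs
      · exact hτ _ _ (ih _ this.2 this.1)
      · exact hγ _

lemma W_meas {Ω G : Type*} [MeasurableSpace Ω] [Countable G] [MeasurableSpace G]
    [MeasurableSingletonClass G] (d : ℕ) (γ : ℕ → G) (τ : ℕ → G → G) (c : ℕ × Fin 4 → Ω → ℕ)
    (n : ℕ) (hn : 1 ≤ n) (hc : ∀ i : ℕ × Fin 4, i.1 ≤ n → Measurable (c i)) :
    Measurable (W d γ τ c n) := by
  induction n using Nat.strong_induction_on with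
  | _ n ih =>
    have hg : Measurable (gg γ c n) := (measurable_of_countable γ).comp (hc (n, 2) le_rfl)
    rcases Nat.lt_or_ge n 2 with h | h
    · obtain rfl : n = 1 := by omega
      have : W d γ τ c 1 = gg γ c 1 := by ext ω; rw [W_one]
      rw [this]; exact hg
    · have hu : Measurable (uu c n) :=
        (measurable_of_countable (fun a => a % (n - 2 + 1) + 1)).comp (hc (n, 1) le_rfl)
      have hy : Measurable (yy d c n) :=
        (measurable_of_countable (fun a => a % (d - 2 + 1) + 1)).comp (hc (n, 3) le_rfl)
      have hx : Measurable (xi c n) :=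
        (measurable_of_countable (fun a => decide (a = 1))).comp (hc (n, 0) le_rfl)
      let Z : Ω × ℕ → G := fun q => if 1 ≤ q.2 ∧ q.2 < n then W d γ τ c q.2 q.1 else γ 0
      have hZ : Measurable Z := by
        apply measurable_from_prod_countable_left
        intro k
        by_cases hk : 1 ≤ k ∧ k < n
        · simp only [Z, hk, and_self, if_true]
          exact ih k hk.2 hk.1 (fun i hi => hc i (by omega))
        · simp only [Z, hk, if_false]
          exact measurable_const
      have hT : Measurable (fun q : ℕ × G => τ q.1 q.2) := measurable_of_countable _
      have : W d γ τ c n = fun ω => if xi c n ω = true then τ (yy d c n ω) (Z (ω, uu c n ω))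
          else gg γ c n ω := by
        ext ω
        rw [W_step _ _ _ _ _ h]
        simp only [Z, uu_range c n h ω, and_self, if_true]
      rw [this]
      refine Measurable.ite (hx (measurableSet_singleton true)) ?_ hg
      exact hT.comp (hy.prodMk (hZ.comp (measurable_id.prodMk hu)))

lemma box {Ω : Type*} [MeasurableSpace Ω] {P : Measure Ω} {α : ℝ} {d : ℕ}
    {c : ℕ × Fin 4 → Ω → ℕ} (hc : ∀ i, Measurable (c i)) (hind : iIndepFun c P)
    (hlaw : ∀ i, P.map (c i) = law α d i) (n : ℕ) (A : Fin 4 → Set ℕ) :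
    P {ω | ∀ j, c (n, j) ω ∈ A j} = bern α (A 0) * unif (n - 2) (A 1) * unif (d - 1) (A 2)
      * unif (d - 2) (A 3) := by
  have h := (hind.precomp (g := fun j : Fin 4 => (n, j))
    (fun a b hab => by simpa using hab)).measure_inter_preimage_eq_mul Finset.univ (sets := A)
    (fun _ _ => MeasurableSet.of_discrete)
  have h2 : {ω | ∀ j, c (n, j) ω ∈ A j} = ⋂ j ∈ Finset.univ, c (n, j) ⁻¹' A j := by
    ext ω; simp
  rw [h2, h]
  have h3 : ∀ j, P (c (n, j) ⁻¹' A j) = law α d (n, j) (A j) := by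
    intro j
    rw [← hlaw, Measure.map_apply (hc _) MeasurableSet.of_discrete]
  simp only [h3, Fin.prod_univ_four]
  simp [law]

/-- the step weights -/
noncomputable def wt {G : Type*} [DecidableEq G] (p : ℝ) (d : ℕ) (r s : G) : ℝ :=
  if r = s then p else (1 - p) / ((d : ℝ) - 1)

lemma step_prob {Ω G : Type*} [MeasurableSpace Ω] [DecidableEq G]
    {P : Measure Ω} {α p : ℝ} {d : ℕ} (hd : 2 ≤ d) (hp0 : 0 ≤ p) (hp1 : p ≤ 1)
    {c : ℕ × Fin 4 → Ω → ℕ} (hc : ∀ i, Measurable (c i)) (hind : iIndepFun c P)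
    (hlaw : ∀ i, P.map (c i) = law α d i) (γ : ℕ → G) (τ : ℕ → G → G) (Γ : Finset G)
    (hγ : ∀ s ∈ Γ, unif (d - 1) {j | γ j = s} = (d : ℝ≥0∞)⁻¹)
    (hτ : ∀ r ∈ Γ, ∀ s ∈ Γ, ENNReal.ofReal α * unif (d - 2) {y | τ (y % (d - 2 + 1) + 1) r = s}
      + ENNReal.ofReal (1 - α) * (d : ℝ≥0∞)⁻¹ = ENNReal.ofReal (wt p d r s))
    (n : ℕ) (hn : 2 ≤ n) (x : ℕ → G) (hx : ∀ j, x j ∈ Γ) :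
    P {ω | (if xi c n ω then τ (yy d c n ω) (x (uu c n ω)) else gg γ c n ω) = x n} =
      ENNReal.ofReal ((∑ k ∈ Finset.range (n - 1), wt p d (x (k + 1)) (x n)) / ((n : ℝ) - 1)) := by
  obtain ⟨N, rfl⟩ : ∃ N, n = N + 2 := ⟨n - 2, by omega⟩
  set n := N + 2 with hnn
  let B1 : ℕ → Set Ω := fun k => {ω | ∀ j, c (n, j) ω ∈ (![{1}, {a | a % (N + 1) = k},
    Set.univ, {y | τ (y % (d - 2 + 1) + 1) (x (k + 1)) = x n}] : Fin 4 → Set ℕ) j}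
  let B2 : Set Ω := {ω | ∀ j, c (n, j) ω ∈ (![{1}ᶜ, Set.univ,
    {j | γ j = x n}, Set.univ] : Fin 4 → Set ℕ) j}
  have hB : {ω | (if xi c n ω then τ (yy d c n ω) (x (uu c n ω)) else gg γ c n ω) = x n}
      = (⋃ k ∈ Finset.range (N + 1), B1 k) ∪ B2 := by
    ext ω
    have hlt := Nat.mod_lt (c (n, 1) ω) (show 0 < N + 1 by omega)
    simp only [B1, B2, Set.mem_ofPred_eq, Set.mem_union, Set.mem_iUnion, Finset.mem_range,
      Fin.forall_fin_succ, xi, uu, gg, yy]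
    by_cases h1 : c (n, 0) ω = 1
    · rw [hnn] at h1
      simp [h1, hnn]
      intro _
      exact Nat.lt_succ_iff.1 hlt
    · simp [h1]
  have hmeas : ∀ A : Fin 4 → Set ℕ, MeasurableSet {ω | ∀ j, c (n, j) ω ∈ A j} := by
    intro A
    have : {ω | ∀ j, c (n, j) ω ∈ A j} = ⋂ j, c (n, j) ⁻¹' A j := by ext; simp
    rw [this]
    exact MeasurableSet.iInter fun j => hc _ MeasurableSet.of_discrete
  have hdisj : Disjoint (⋃ k ∈ Finset.range (N + 1), B1 k) B2 := by
    rw [Set.disjoint_left]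
    intro ω h1 h2
    simp only [Set.mem_iUnion] at h1
    obtain ⟨k, -, h1⟩ := h1
    have a := h1 0
    have b := h2 0
    simp at a b
    exact b a
  have hpd : Set.PairwiseDisjoint (Finset.range (N + 1) : Set ℕ) B1 := by
    intro k _ l _ hkl
    rw [Function.onFun, Set.disjoint_left]
    intro ω h1 h2
    have a := h1 1
    have b := h2 1
    simp at a b
    exact hkl (a.symm.trans b)
  rw [hB, measure_union hdisj (hmeas _), measure_biUnion_finset hpd (fun k _ => hmeas _)]
  have e1 : ∀ k ∈ Finset.range (N + 1), P (B1 k) = ((N + 1 : ℕ) : ℝ≥0∞)⁻¹ *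
      (ENNReal.ofReal α * unif (d - 2) {y | τ (y % (d - 2 + 1) + 1) (x (k + 1)) = x n}) := by
    intro k hk
    have hN : n - 2 = N := by omega
    simp only [B1]
    rw [box hc hind hlaw, hN]
    simp only [Matrix.cons_val]
    rw [unif_mod _ _ (by simpa using hk), bern_one, measure_univ]
    ring
  have e2 : P B2 = ENNReal.ofReal (1 - α) * (d : ℝ≥0∞)⁻¹ := by
    simp only [B2]
    rw [box hc hind hlaw]
    simp only [Matrix.cons_val]
    rw [bern_ne_one, measure_univ, measure_univ, hγ _ (hx _)]
    ring
  have hd1 : (0 : ℝ) < (d : ℝ) - 1 := by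
    have : (2 : ℝ) ≤ d := by exact_mod_cast hd
    linarith
  have hw : ∀ r s : G, 0 ≤ wt p d r s := by
    intro r s; unfold wt
    split_ifs
    · exact hp0
    · exact div_nonneg (by linarith) hd1.le
  rw [Finset.sum_congr rfl e1, e2]
  have e3 : ENNReal.ofReal (1 - α) * (d : ℝ≥0∞)⁻¹ = ∑ k ∈ Finset.range (N + 1),
      ((N + 1 : ℕ) : ℝ≥0∞)⁻¹ * (ENNReal.ofReal (1 - α) * (d : ℝ≥0∞)⁻¹) := by
    rw [Finset.sum_const, Finset.card_range, nsmul_eq_mul, ← mul_assoc,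
      ENNReal.mul_inv_cancel (by simp) (by simp), one_mul]
  rw [e3, ← Finset.sum_add_distrib]
  have hN1 : n - 1 = N + 1 := by omega
  have hN2 : (n : ℝ) - 1 = ((N + 1 : ℕ) : ℝ) := by rw [hnn]; push_cast; ring
  rw [hN1, hN2, ENNReal.ofReal_div_of_pos (by positivity), ENNReal.ofReal_sum_of_nonneg
    (fun _ _ => hw _ _), ENNReal.ofReal_natCast, ENNReal.div_eq_inv_mul, Finset.mul_sum]
  refine Finset.sum_congr rfl fun k _ => ?_
  rw [← mul_add, hτ _ (hx _) _ (hx _)]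


/-- Cylinder sets. -/
def cyl {Ω G : Type*} (X : ℕ → Ω → G) (N : ℕ) (x : ℕ → G) : Set Ω :=
  {ω | ∀ j, 1 ≤ j → j ≤ N → X j ω = x j}

lemma cyl_succ {Ω G : Type*} (X : ℕ → Ω → G) (N : ℕ) (x : ℕ → G) :
    cyl X (N + 1) x = {ω | X (N + 1) ω = x (N + 1)} ∩ cyl X N x := by
  ext ω
  simp only [cyl, Set.mem_ofPred_eq, Set.mem_inter_iff]
  constructor
  · intro h
    exact ⟨h _ (by omega) le_rfl, fun j h1 h2 => h j h1 (by omega)⟩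
  · rintro ⟨h, h'⟩ j h1 h2
    rcases Nat.lt_or_ge N j with h3 | h3
    · obtain rfl : j = N + 1 := by omega
      exact h
    · exact h' j h1 h3

/-- The transition weight. -/
noncomputable def trans {G : Type*} [DecidableEq G] (p : ℝ) (d : ℕ) (n : ℕ) (x : ℕ → G) : ℝ≥0∞ :=
  ENNReal.ofReal ((∑ k ∈ Finset.range (n - 1), wt p d (x (k + 1)) (x n)) / ((n : ℝ) - 1))

/-- Elephant walk on cylinders. -/
structure CylERW {Ω G : Type*} [MeasurableSpace Ω] [DecidableEq G] (P : Measure Ω)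
    (p : ℝ) (d : ℕ) (Γ : Finset G) (X : ℕ → Ω → G) : Prop where
  mem_steps : ∀ n, 1 ≤ n → ∀ ω, X n ω ∈ Γ
  first : ∀ s ∈ Γ, P {ω | X 1 ω = s} = (d : ℝ≥0∞)⁻¹
  step : ∀ n, 2 ≤ n → ∀ x : ℕ → G, (∀ j, x j ∈ Γ) →
    P (cyl X n x) = trans p d n x * P (cyl X (n - 1) x)

lemma cyl_meas {Ω G : Type*} [m : MeasurableSpace Ω] [MeasurableSpace G] [MeasurableSingletonClass G]
    (X : ℕ → Ω → G) (N : ℕ) (x : ℕ → G) (h : ∀ j, 1 ≤ j → j ≤ N → Measurable (X j)) :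
    MeasurableSet (cyl X N x) := by
  induction N with
  | zero =>
    have : cyl X 0 x = Set.univ := by
      ext ω
      simp only [cyl, Set.mem_ofPred_eq, Set.mem_univ, iff_true]
      intro j h1 h2; omega
    rw [this]; exact MeasurableSet.univ
  | succ N ih =>
    rw [cyl_succ]
    exact (h _ (by omega) le_rfl (measurableSet_singleton _)).inter
      (ih fun j h1 h2 => h j h1 (by omega))

lemma W_cyl {Ω G : Type*} [mΩ : MeasurableSpace Ω] [DecidableEq G] [Countable G] [MeasurableSpace G]
    [MeasurableSingletonClass G]
    {P : Measure Ω} {α p : ℝ} {d : ℕ} (hd : 2 ≤ d) (hp0 : 0 ≤ p) (hp1 : p ≤ 1)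
    {c : ℕ × Fin 4 → Ω → ℕ} (hc : ∀ i, Measurable (c i)) (hind : iIndepFun c P)
    (hlaw : ∀ i, P.map (c i) = law α d i) (γ : ℕ → G) (τ : ℕ → G → G) (Γ : Finset G)
    (hγΓ : ∀ j, γ j ∈ Γ) (hτΓ : ∀ y, ∀ s ∈ Γ, τ y s ∈ Γ)
    (hγ : ∀ s ∈ Γ, unif (d - 1) {j | γ j = s} = (d : ℝ≥0∞)⁻¹)
    (hτ : ∀ r ∈ Γ, ∀ s ∈ Γ, ENNReal.ofReal α * unif (d - 2) {y | τ (y % (d - 2 + 1) + 1) r = s}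
      + ENNReal.ofReal (1 - α) * (d : ℝ≥0∞)⁻¹ = ENNReal.ofReal (wt p d r s)) :
    CylERW P p d Γ (W d γ τ c) := by
  refine ⟨fun n hn ω => W_mem d γ τ c Γ hγΓ hτΓ n hn ω, ?_, ?_⟩
  · intro s hs
    simp only [W_one]
    rw [← hγ s hs]
    have : unif (d - 1) = P.map (c (1, 2)) := by rw [hlaw]; simp [law]
    rw [this, Measure.map_apply (hc _) MeasurableSet.of_discrete]
    rfl
  · intro n hn x hx
    obtain ⟨N, rfl⟩ : ∃ N, n = N + 1 := ⟨n - 1, by omega⟩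
    have hB : cyl (W d γ τ c) (N + 1) x =
        {ω | (if xi c (N + 1) ω then τ (yy d c (N + 1) ω) (x (uu c (N + 1) ω))
          else gg γ c (N + 1) ω) = x (N + 1)} ∩ cyl (W d γ τ c) N x := by
      rw [cyl_succ]
      ext ω
      simp only [Set.mem_inter_iff, Set.mem_ofPred_eq]
      refine and_congr_left fun h => ?_
      have hu := uu_range c (N + 1) hn ω
      rw [W_step _ _ _ _ _ hn, h _ hu.1 (by omega)]
    rw [hB, Nat.add_sub_cancel, trans,
      ← step_prob hd hp0 hp1 hc hind hlaw γ τ Γ hγ hτ (N + 1) hn x hx]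
    have hI := indep_iSup_of_disjoint (m := fun i => MeasurableSpace.comap (c i) inferInstance)
      (fun i => (hc i).comap_le) hind (S := {i | i.1 = N + 1}) (T := {i | i.1 ≤ N}) (by
        rw [Set.disjoint_left]
        intro i h1 h2
        simp only [Set.mem_ofPred_eq] at h1 h2
        omega)
    have hle : ∀ (S : Set (ℕ × Fin 4)), ∀ i ∈ S,
        Measurable[⨆ i ∈ S, MeasurableSpace.comap (c i) inferInstance] (c i) := by
      intro S i hi
      exact (comap_measurable (c i)).mono
        (le_iSup₂_of_le (f := fun i (_ : i ∈ S) => MeasurableSpace.comap (c i) inferInstance)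
          i hi le_rfl) le_rfl
    rw [Indep_iff] at hI
    apply hI
    · have hF := hle {i | i.1 = N + 1}
      have h0 := hF (N + 1, 0) rfl
      have h1 := hF (N + 1, 1) rfl
      have h2 := hF (N + 1, 2) rfl
      have h3 := hF (N + 1, 3) rfl
      have hq : Measurable (fun q : ℕ × ℕ × ℕ × ℕ => if decide (q.1 = 1) then
        τ (q.2.2.2 % (d - 2 + 1) + 1) (x (q.2.1 % (N + 1 - 2 + 1) + 1)) else γ q.2.2.1) :=
        measurable_of_countable _
      exact (hq.comp (h0.prodMk (h1.prodMk (h2.prodMk h3)))) (measurableSet_singleton (x (N + 1)))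
    · refine @cyl_meas Ω G (_) _ _ _ _ _ ?_
      intro j hj1 hj2
      exact @W_meas Ω G (_) _ _ _ d γ τ c j hj1 (fun i hi => hle {i | i.1 ≤ N} i (le_trans hi hj2))

lemma ERW_cyl {Ω G : Type*} [Group G] [MeasurableSpace Ω] [DecidableEq G] [MeasurableSpace G]
    [MeasurableSingletonClass G]
    {P : Measure Ω} {p : ℝ} {d : ℕ} (hd : 2 ≤ d) (Γ : Finset G) (hcard : Γ.card = d)
    (X : ℕ → Ω → G) (hX : IsERW P p Γ X) : CylERW P p d Γ X := by
  refine ⟨hX.mem_steps, ?_, ?_⟩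
  · intro s hs; rw [hX.first_step s hs, hcard]
  · intro n hn x hx
    obtain ⟨N, rfl⟩ : ∃ N, n = N + 1 := ⟨n - 1, by omega⟩
    have hm : MeasurableSet[pastSigma X N] (cyl X N x) := by
      refine @cyl_meas Ω G (_) _ _ _ _ _ ?_
      intro j hj1 hj2
      exact (comap_measurable (X j)).mono
        (le_iSup₂_of_le (f := fun j (_ : j ∈ Set.Icc 1 N) => MeasurableSpace.comap (X j) inferInstance)
          j ⟨hj1, hj2⟩ le_rfl) le_rfl
    have hm' : MeasurableSet (cyl X N x) := cyl_meas _ _ _ fun j _ _ => hX.meas j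
    rw [cyl_succ, hX.cond_law (N + 1) hn _ (hx _) _ hm, Nat.add_sub_cancel]
    rw [setLIntegral_congr_fun (g := fun _ => trans p d (N + 1) x) hm' ?_]
    · rw [setLIntegral_const]
    · intro ω hω
      simp only [trans]
      congr 1
      have hcount : pastCount X N (x (N + 1)) ω =
          ((Finset.range N).filter (fun k => x (k + 1) = x (N + 1))).card := by
        unfold pastCount
        rw [← Finset.card_image_of_injective _ (add_left_injective 1), ← Set.ncard_coe_finset]
        congr 1
        ext j
        simp only [Set.mem_ofPred_eq, Finset.coe_image, Finset.coe_filter, Finset.mem_range,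
          Set.mem_image]
        constructor
        · rintro ⟨h1, h2, h3⟩
          refine ⟨j - 1, ⟨by omega, ?_⟩, by omega⟩
          rw [Nat.sub_add_cancel h1, ← h3, hω j h1 h2]
        · rintro ⟨k, ⟨hk, h⟩, rfl⟩
          exact ⟨by omega, by omega, by rw [hω _ (by omega) (by omega), h]⟩
      have hsum : ∑ k ∈ Finset.range N, wt p d (x (k + 1)) (x (N + 1)) =
          p * (pastCount X N (x (N + 1)) ω : ℝ) + (1 - p) / ((d : ℝ) - 1) *
            ((N : ℝ) - (pastCount X N (x (N + 1)) ω : ℝ)) := by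
        have hfc := Finset.card_filter_add_card_filter_not (s := Finset.range N)
          (fun k => x (k + 1) = x (N + 1))
        rw [Finset.card_range, ← hcount] at hfc
        simp only [wt, Finset.sum_ite, Finset.sum_const, nsmul_eq_mul]
        rw [← hcount]
        have : (N : ℝ) = (pastCount X N (x (N + 1)) ω : ℝ) +
          (((Finset.range N).filter (fun k => ¬ x (k + 1) = x (N + 1))).card : ℝ) := by
          exact_mod_cast hfc.symm
        rw [this]
        ring
      rw [Nat.add_sub_cancel, hsum, hcard]
      have h1 : (d : ℝ) - 1 ≠ 0 := by
        have : (2 : ℝ) ≤ d := by exact_mod_cast hd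
        linarith
      have h2 : (N : ℝ) ≠ 0 := by
        have : N ≠ 0 := by omega
        exact_mod_cast this
      push_cast
      rw [add_sub_cancel_right]
      field_simp

lemma cyl_unique {Ω Ω' G : Type*} [MeasurableSpace Ω] [MeasurableSpace Ω'] [DecidableEq G]
    {P : Measure Ω} {P' : Measure Ω'} [IsProbabilityMeasure P] [IsProbabilityMeasure P']
    {p : ℝ} {d : ℕ} {Γ : Finset G} {X : ℕ → Ω → G} {X' : ℕ → Ω' → G}
    (h : CylERW P p d Γ X) (h' : CylERW P' p d Γ X') (N : ℕ) (x : ℕ → G) :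
    P (cyl X N x) = P' (cyl X' N x) := by
  by_cases hx : ∀ j, 1 ≤ j → j ≤ N → x j ∈ Γ
  · rcases Nat.eq_zero_or_pos N with rfl | hN
    · have e1 : cyl X 0 x = Set.univ := by
        ext ω; simp only [cyl, Set.mem_ofPred_eq, Set.mem_univ, iff_true]; intro j _ _; omega
      have e2 : cyl X' 0 x = Set.univ := by
        ext ω; simp only [cyl, Set.mem_ofPred_eq, Set.mem_univ, iff_true]; intro j _ _; omega
      rw [e1, e2]; simp
    · have key : ∀ y : ℕ → G, (∀ j, y j ∈ Γ) → ∀ n, 1 ≤ n → P (cyl X n y) = P' (cyl X' n y) := by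
        intro y hy n hn
        induction n, hn using Nat.le_induction with
        | base =>
          have e1 : cyl X 1 y = {ω | X 1 ω = y 1} := by
            ext ω; simp only [cyl, Set.mem_ofPred_eq]
            exact ⟨fun h => h 1 le_rfl le_rfl, fun h j h1 h2 => by
              obtain rfl : j = 1 := by omega
              exact h⟩
          have e2 : cyl X' 1 y = {ω | X' 1 ω = y 1} := by
            ext ω; simp only [cyl, Set.mem_ofPred_eq]
            exact ⟨fun h => h 1 le_rfl le_rfl, fun h j h1 h2 => by
              obtain rfl : j = 1 := by omega
              exact h⟩
          rw [e1, e2, h.first _ (hy _), h'.first _ (hy _)]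
        | succ n hn ih =>
          rw [h.step _ (by omega) y hy, h'.step _ (by omega) y hy, Nat.add_sub_cancel, ih]
      let y : ℕ → G := fun j => if 1 ≤ j ∧ j ≤ N then x j else x N
      have hy : ∀ j, y j ∈ Γ := by
        intro j
        simp only [y]
        split_ifs with hj
        · exact hx j hj.1 hj.2
        · exact hx N hN le_rfl
      have e1 : cyl X N x = cyl X N y := by
        ext ω; simp only [cyl, Set.mem_ofPred_eq]
        refine forall_congr' fun j => forall_congr' fun h1 => forall_congr' fun h2 => ?_
        simp [y, h1, h2]
      have e2 : cyl X' N x = cyl X' N y := by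
        ext ω; simp only [cyl, Set.mem_ofPred_eq]
        refine forall_congr' fun j => forall_congr' fun h1 => forall_congr' fun h2 => ?_
        simp [y, h1, h2]
      rw [e1, e2, key y hy N hN]
  · push Not at hx
    obtain ⟨j, h1, h2, h3⟩ := hx
    have e1 : cyl X N x = ∅ := by
      ext ω; simp only [cyl, Set.mem_ofPred_eq, Set.mem_empty_iff_false, iff_false]
      intro hh; exact h3 (hh j h1 h2 ▸ h.mem_steps j h1 ω)
    have e2 : cyl X' N x = ∅ := by
      ext ω; simp only [cyl, Set.mem_ofPred_eq, Set.mem_empty_iff_false, iff_false]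
      intro hh; exact h3 (hh j h1 h2 ▸ h'.mem_steps j h1 ω)
    rw [e1, e2]; simp

lemma law_unique {Ω Ω' G : Type*} [MeasurableSpace Ω] [MeasurableSpace Ω'] [DecidableEq G]
    [Countable G] [MeasurableSpace G] [MeasurableSingletonClass G]
    {P : Measure Ω} {P' : Measure Ω'} [IsProbabilityMeasure P] [IsProbabilityMeasure P']
    {p : ℝ} {d : ℕ} {Γ : Finset G} {X : ℕ → Ω → G} {X' : ℕ → Ω' → G}
    (hm : ∀ n, 1 ≤ n → Measurable (X n)) (hm' : ∀ n, 1 ≤ n → Measurable (X' n))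
    (h : CylERW P p d Γ X) (h' : CylERW P' p d Γ X') :
    P.map (fun ω (n : ℕ) => X (n + 1) ω) = P'.map (fun ω (n : ℕ) => X' (n + 1) ω) := by
  have M : Measurable (fun ω (n : ℕ) => X (n + 1) ω) :=
    measurable_pi_iff.2 fun n => hm _ (by omega)
  have M' : Measurable (fun ω (n : ℕ) => X' (n + 1) ω) :=
    measurable_pi_iff.2 fun n => hm' _ (by omega)
  have := Measure.isProbabilityMeasure_map (μ := P) M.aemeasurable
  have := Measure.isProbabilityMeasure_map (μ := P') M'.aemeasurable
  have hr : ∀ N, (P.map (fun ω (n : ℕ) => X (n + 1) ω)).map (Finset.range N).restrict =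
      (P'.map (fun ω (n : ℕ) => X' (n + 1) ω)).map (Finset.range N).restrict := by
    intro N
    apply Measure.ext_of_singleton
    intro r
    have hmr : Measurable ((Finset.range N).restrict (π := fun _ : ℕ => G)) :=
      Finset.measurable_restrict _
    rw [Measure.map_apply hmr (measurableSet_singleton _),
      Measure.map_apply hmr (measurableSet_singleton _),
      Measure.map_apply M (hmr (measurableSet_singleton _)),
      Measure.map_apply M' (hmr (measurableSet_singleton _))]
    rcases Nat.eq_zero_or_pos N with rfl | hN
    · have e : ((Finset.range 0).restrict (π := fun _ : ℕ => G)) ⁻¹' {r} = Set.univ := by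
        ext z
        simp only [Set.mem_preimage, Set.mem_singleton_iff, Set.mem_univ, iff_true]
        ext ⟨i, hi⟩
        simp at hi
      rw [e]; simp
    · let x : ℕ → G := fun j => if hj : j - 1 < N then r ⟨j - 1, Finset.mem_range.2 hj⟩ else
        r ⟨0, Finset.mem_range.2 hN⟩
      have hcyl : ∀ {Ω₀ : Type _} (Z : ℕ → Ω₀ → G), (fun ω (n : ℕ) => Z (n + 1) ω) ⁻¹'
          (((Finset.range N).restrict (π := fun _ : ℕ => G)) ⁻¹' {r}) = cyl Z N x := by
        intro Ω₀ Z
        ext ω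
        simp only [Set.mem_preimage, Set.mem_singleton_iff, cyl, Set.mem_ofPred_eq, funext_iff,
          Finset.restrict, Subtype.forall, Finset.mem_range]
        constructor
        · intro hh j h1 h2
          have := hh (j - 1) (by omega)
          rw [Nat.sub_add_cancel h1] at this
          rw [this]
          simp only [x]
          rw [dif_pos (by omega)]
        · intro hh i hi
          rw [hh (i + 1) (by omega) (by omega)]
          simp [x, hi]
      have hcyl' : ∀ {Ω₀ : Type _} (Z : ℕ → Ω₀ → G), (fun ω (n : ℕ) => Z (n + 1) ω) ⁻¹'
          (((Finset.range N).restrict (π := fun _ : ℕ => G)) ⁻¹' {r}) = cyl Z N x := by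
        intro Ω₀ Z
        ext ω
        simp only [Set.mem_preimage, Set.mem_singleton_iff, cyl, Set.mem_ofPred_eq, funext_iff,
          Finset.restrict, Subtype.forall, Finset.mem_range]
        constructor
        · intro hh j h1 h2
          have := hh (j - 1) (by omega)
          rw [Nat.sub_add_cancel h1] at this
          rw [this]
          simp only [x]
          rw [dif_pos (by omega)]
        · intro hh i hi
          rw [hh (i + 1) (by omega) (by omega)]
          simp [x, hi]
      rw [hcyl X, hcyl' X']
      exact cyl_unique h h' N x
  refine IsProjectiveLimit.unique (P := fun J : Finset ℕ =>
    (P.map (fun ω (n : ℕ) => X (n + 1) ω)).map J.restrict) (fun J => rfl) (fun J => ?_)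
  obtain ⟨N, hN⟩ : ∃ N, J ⊆ Finset.range N := J.exists_nat_subset_range
  change _ = (P.map (fun ω (n : ℕ) => X (n + 1) ω)).map J.restrict
  have hcomp : (J.restrict (π := fun _ : ℕ => G)) =
      (Finset.restrict₂ hN) ∘ (Finset.range N).restrict := rfl
  rw [hcomp, ← Measure.map_map (Finset.measurable_restrict₂ _) (Finset.measurable_restrict _),
    ← Measure.map_map (Finset.measurable_restrict₂ _) (Finset.measurable_restrict _), hr N]


lemma law_u (α : ℝ) (d n : ℕ) : law α d (n, 1) = unif (n - 2) := rfl

lemma law_g (α : ℝ) (d n : ℕ) : law α d (n, 2) = unif (d - 1) := rfl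

lemma law_y (α : ℝ) (d n : ℕ) : law α d (n, 3) = unif (d - 2) := rfl

lemma gen_srrw {Ω G : Type*} [MeasurableSpace Ω] [Group G] [DecidableEq G] [Countable G]
    [MeasurableSpace G] [MeasurableSingletonClass G]
    {P : Measure Ω} {α : ℝ} {d : ℕ}
    {c : ℕ × Fin 4 → Ω → ℕ} (hc : ∀ i, Measurable (c i)) (hind : iIndepFun c P)
    (hlaw : ∀ i, P.map (c i) = law α d i) (γ : ℕ → G) (τ : ℕ → G → G) (Γ : Finset G)
    (hγΓ : ∀ j, γ j ∈ Γ)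
    (hγ : ∀ s ∈ Γ, unif (d - 1) {j | γ j = s} = (d : ℝ≥0∞)⁻¹)
    (μ : Measure G) (hμ : ∀ s : G, μ {s} = if s ∈ Γ then ((d : ℕ) : ℝ≥0∞)⁻¹ else 0)
    (X : ℕ → Ω → G) (hX : ∀ n, 1 ≤ n → X n = W d γ τ c n) :
    IsGenSRRW P α μ (fun n ω => τ (yy d c n ω)) X := by
  have hu : ∀ n, Measurable (uu c n) := fun n =>
    (measurable_of_countable (fun a => a % (n - 2 + 1) + 1)).comp (hc (n, 1))
  have hy : ∀ n, Measurable (yy d c n) := fun n =>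
    (measurable_of_countable (fun a => a % (d - 2 + 1) + 1)).comp (hc (n, 3))
  have hx : ∀ n, Measurable (xi c n) := fun n =>
    (measurable_of_countable (fun a => decide (a = 1))).comp (hc (n, 0))
  have hg : ∀ n, Measurable (gg γ c n) := fun n => (measurable_of_countable γ).comp (hc (n, 2))
  have happ : ∀ (i : ℕ × Fin 4) (A : Set ℕ), P {ω | c i ω ∈ A} = law α d i A := by
    intro i A
    rw [← hlaw, Measure.map_apply (hc _) MeasurableSet.of_discrete]
    rfl
  refine ⟨xi c, uu c, gg γ c, ⟨hx, hu, hg, ?_, fun n hn ω => uu_range c n hn ω, ?_, ?_, ?_⟩,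
    ?_, ?_, ?_, ?_⟩
  · intro n hn
    have := happ (n, 0) {1}
    simp only [law, if_true, bern_one] at this
    rw [← this]
    simp [xi]
  · intro n hn k hk1 hk2
    have := happ (n, 1) {a | a % (n - 2 + 1) = k - 1}
    rw [law_u, unif_mod _ _ (by omega)] at this
    rw [show n - 1 = n - 2 + 1 by omega, ← this]
    congr 1
    ext ω
    simp only [uu, Set.mem_ofPred_eq]
    omega
  · intro n hn
    apply Measure.ext_of_singleton
    intro s
    rw [Measure.map_apply (hg n) (measurableSet_singleton _), hμ]
    have := happ (n, 2) {j | γ j = s}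
    rw [law_g] at this
    change P {ω | c (n, 2) ω ∈ {j | γ j = s}} = _
    rw [this]
    split_ifs with hs
    · exact hγ s hs
    · have : {j | γ j = s} = ∅ := by
        ext j
        simp only [Set.mem_ofPred_eq, Set.mem_empty_iff_false, iff_false]
        rintro rfl
        exact hs (hγΓ j)
      rw [this]; simp
  · let e : ℕ ⊕ ℕ ⊕ ℕ → ℕ × Fin 4 := fun i => match i with
      | .inl n => (n, 0)
      | .inr (.inl n) => (n, 1)
      | .inr (.inr n) => (n, 2)
    have he : Function.Injective e := by
      rintro (a | a | a) (b | b | b) h <;> simp [e] at h <;> simp [h]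
    let φ : ℕ ⊕ ℕ ⊕ ℕ → ℕ → Bool ⊕ ℕ ⊕ G := fun i => match i with
      | .inl _ => fun a => .inl (decide (a = 1))
      | .inr (.inl n) => fun a => .inr (.inl (a % (n - 2 + 1) + 1))
      | .inr (.inr _) => fun a => .inr (.inr (γ a))
    have := (hind.precomp he).comp φ (fun i => measurable_of_countable _)
    convert this using 1
    funext i
    rcases i with n | n | n <;> rfl
  · intro n
    have hT : Measurable (fun q : ℕ × G => τ q.1 q.2) := measurable_of_countable _
    exact hT.comp ((hy n).comp measurable_fst |>.prodMk measurable_snd)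
  · intro n hn
    have hI := indep_iSup_of_disjoint (m := fun i => MeasurableSpace.comap (c i) inferInstance)
      (fun i => (hc i).comap_le) hind (S := {i | i.2 ≠ 3}) (T := {i | i.2 = 3}) (by
        rw [Set.disjoint_left]
        intro i h1 h2
        exact h1 h2)
    have hle : ∀ (S : Set (ℕ × Fin 4)), ∀ i ∈ S,
        Measurable[⨆ i ∈ S, MeasurableSpace.comap (c i) inferInstance] (c i) := by
      intro S i hi
      exact (comap_measurable (c i)).mono
        (le_iSup₂_of_le (f := fun i (_ : i ∈ S) => MeasurableSpace.comap (c i) inferInstance)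
          i hi le_rfl) le_rfl
    rw [IndepFun_iff_Indep]
    refine indep_of_indep_of_le_left (indep_of_indep_of_le_right hI ?_) ?_
    · apply Measurable.comap_le
      exact (measurable_of_countable (fun a => τ (a % (d - 2 + 1) + 1))).comp (hle _ (n, 3) rfl)
    · apply Measurable.comap_le
      refine @measurable_pi_lambda _ _ _ (_) _ _ fun k => ?_
      have h0 := hle {i | i.2 ≠ 3} (k, 0) (by simp)
      have h1 := hle {i | i.2 ≠ 3} (k, 1) (by simp)
      have h2 := hle {i | i.2 ≠ 3} (k, 2) (by simp)
      exact ((measurable_of_countable (fun a => decide (a = 1))).comp h0).prodMk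
        (((measurable_of_countable (fun a => a % ((k : ℕ) - 2 + 1) + 1)).comp h1).prodMk
          ((measurable_of_countable γ).comp h2))
  · intro ω
    rw [hX 1 le_rfl, W_one]
  · intro n hn ω
    rw [hX n (by omega), W_step _ _ _ _ _ hn, hX _ (uu_range c n hn ω).1]

lemma core {G : Type*} [Group G] [DecidableEq G] [Countable G] [MeasurableSpace G]
    [MeasurableSingletonClass G]
    {Ω : Type*} [MeasurableSpace Ω] (P : Measure Ω) [IsProbabilityMeasure P]
    {α p : ℝ} (hα0 : 0 ≤ α) (hα1 : α ≤ 1) {d : ℕ} (hd : 2 ≤ d) (hp0 : 0 ≤ p) (hp1 : p ≤ 1)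
    (γ : ℕ → G) (τ : ℕ → G → G) (Γ : Finset G) (hcard : Γ.card = d)
    (hγΓ : ∀ j, γ j ∈ Γ) (hτΓ : ∀ y, ∀ s ∈ Γ, τ y s ∈ Γ)
    (hγ : ∀ s ∈ Γ, unif (d - 1) {j | γ j = s} = (d : ℝ≥0∞)⁻¹)
    (hτ : ∀ r ∈ Γ, ∀ s ∈ Γ, ENNReal.ofReal α * unif (d - 2) {y | τ (y % (d - 2 + 1) + 1) r = s}
      + ENNReal.ofReal (1 - α) * (d : ℝ≥0∞)⁻¹ = ENNReal.ofReal (wt p d r s))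
    (μ : Measure G) (hμ : ∀ s : G, μ {s} = if s ∈ Γ then ((d : ℕ) : ℝ≥0∞)⁻¹ else 0)
    (X : ℕ → Ω → G) (hX : IsERW P p Γ X) :
    ∃ (Ω' : Type) (_ : MeasurableSpace Ω') (P' : Measure Ω') (X' : ℕ → Ω' → G) (Y : ℕ → Ω' → ℕ),
        IsProbabilityMeasure P' ∧
        (∀ n, Measurable (Y n)) ∧
        (∀ n, 2 ≤ n → ∀ ω, 1 ≤ Y n ω ∧ Y n ω ≤ d - 1) ∧
        (∀ n, 2 ≤ n → ∀ k : ℕ, 1 ≤ k → k ≤ d - 1 →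
          P' {ω | Y n ω = k} = ((d - 1 : ℕ) : ℝ≥0∞)⁻¹) ∧
        iIndepFun Y P' ∧
        IsGenSRRW P' α μ (fun n ω => τ (Y n ω)) X' ∧
        P.map (fun ω => fun n : ℕ => X n ω)
          = P'.map (fun ω => fun n : ℕ => X' n ω) := by
  have hlp : ∀ i, IsProbabilityMeasure (law α d i) := law_prob α hα0 hα1 d
  let Pd : Measure (ℕ × Fin 4 → ℕ) := Measure.infinitePi (law α d)
  let c0 : ℕ × Fin 4 → (ℕ × Fin 4 → ℕ) → ℕ := fun i ω => ω i
  have hc0 : ∀ i, Measurable (c0 i) := fun i => measurable_pi_apply i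
  have hlaw0 : ∀ i, Pd.map (c0 i) = law α d i := fun i => Measure.infinitePi_map_eval _ i
  have hind0 : iIndepFun c0 Pd := by
    rw [iIndepFun_iff_map_fun_eq_infinitePi_map hc0]
    simp only [hlaw0]
    exact Measure.map_id
  have hWm : ∀ n, 1 ≤ n → Measurable (W d γ τ c0 n) := fun n hn =>
    W_meas d γ τ c0 n hn (fun i _ => hc0 i)
  have hL : P.map (fun ω (n : ℕ) => X (n + 1) ω) = Pd.map (fun ω (n : ℕ) => W d γ τ c0 (n + 1) ω) :=
    law_unique (fun n _ => hX.meas n) hWm (ERW_cyl hd Γ hcard X hX)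
      (W_cyl hd hp0 hp1 hc0 hind0 hlaw0 γ τ Γ hγΓ hτΓ hγ hτ)
  let Wp : (ℕ × Fin 4 → ℕ) → ℕ → G := fun ω n => W d γ τ c0 (n + 1) ω
  let Xp : Ω → ℕ → G := fun ω n => X (n + 1) ω
  have hWp : Measurable Wp := measurable_pi_iff.2 fun n => hWm _ (by omega)
  have hXp : Measurable Xp := measurable_pi_iff.2 fun n => hX.meas _
  obtain ⟨f, hf⟩ := Countable.exists_injective_nat G
  have hfm : Measurable f := measurable_of_countable f
  let κ : Kernel (ℕ → G) ℕ := condDistrib (fun ω => f (X 0 ω)) Xp P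
  let κ' : Kernel (ℕ × Fin 4 → ℕ) ℕ := κ.comap Wp hWp
  let P' : Measure ((ℕ × Fin 4 → ℕ) × ℕ) := Pd ⊗ₘ κ'
  have hfst : P'.map Prod.fst = Pd := Measure.fst_compProd Pd κ'
  let c : ℕ × Fin 4 → (ℕ × Fin 4 → ℕ) × ℕ → ℕ := fun i ω => ω.1 i
  have hc : ∀ i, Measurable (c i) := fun i => (measurable_pi_apply i).comp measurable_fst
  have hlaw : ∀ i, P'.map (c i) = law α d i := by
    intro i
    rw [← hlaw0 i, ← hfst, Measure.map_map (hc0 i) measurable_fst]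
    rfl
  have hind : iIndepFun c P' := by
    rw [iIndepFun_iff_map_fun_eq_infinitePi_map hc]
    simp only [hlaw]
    exact hfst
  let X' : ℕ → (ℕ × Fin 4 → ℕ) × ℕ → G := fun n ω =>
    if n = 0 then Function.invFun f ω.2 else W d γ τ c n ω
  have hym : ∀ n, Measurable (yy d c n) := fun n =>
    (measurable_of_countable (fun a => a % (d - 2 + 1) + 1)).comp (hc (n, 3))
  refine ⟨(ℕ × Fin 4 → ℕ) × ℕ, inferInstance, P', X', yy d c, inferInstance, hym, ?_, ?_, ?_, ?_, ?_⟩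
  · intro n hn ω
    unfold yy
    have := Nat.mod_lt (c (n, 3) ω) (show 0 < d - 2 + 1 by omega)
    omega
  · intro n hn k hk1 hk2
    have : P' {ω | c (n, 3) ω ∈ {a | a % (d - 2 + 1) = k - 1}} =
        law α d (n, 3) {a | a % (d - 2 + 1) = k - 1} := by
      rw [← hlaw, Measure.map_apply (hc _) MeasurableSet.of_discrete]
      rfl
    rw [law_y, unif_mod _ _ (by omega)] at this
    rw [show d - 1 = d - 2 + 1 by omega, ← this]
    congr 1
    ext ω
    simp only [yy, Set.mem_ofPred_eq]
    omega
  · exact (hind.precomp (g := fun n : ℕ => (n, (3 : Fin 4)))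
      (fun a b hab => by simpa using hab)).comp (fun _ a => a % (d - 2 + 1) + 1)
      (fun _ => measurable_of_countable _)
  · refine gen_srrw hc hind hlaw γ τ Γ hγΓ hγ μ hμ X' ?_
    intro n hn
    funext ω
    simp only [X']
    rw [if_neg (by omega)]
  · let Ψ : (ℕ → G) × ℕ → ℕ → G := fun q n => if n = 0 then Function.invFun f q.2 else q.1 (n - 1)
    have hΨ : Measurable Ψ := by
      refine measurable_pi_iff.2 fun n => ?_
      by_cases hn : n = 0
      · simp only [Ψ, hn, if_true]
        exact (measurable_of_countable (Function.invFun f)).comp measurable_snd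
      · simp only [Ψ, hn, if_false]
        exact (measurable_pi_apply _).comp measurable_fst
    have hpair : Measurable (fun ω => (Xp ω, f (X 0 ω))) := hXp.prodMk (hfm.comp (hX.meas 0))
    have hpair' : Measurable (Prod.map Wp (id : ℕ → ℕ)) := hWp.prodMap measurable_id
    have e1 : P.map (fun ω => fun n : ℕ => X n ω) = (P.map Xp ⊗ₘ κ).map Ψ := by
      have hk := compProd_map_condDistrib (mβ := MeasurableSpace.pi) (X := Xp)
        (Y := fun ω => f (X 0 ω)) (μ := P)
        (hfm.comp (hX.meas 0)).aemeasurable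
      change _ = (P.map Xp ⊗ₘ condDistrib (fun ω => f (X 0 ω)) Xp P).map Ψ
      rw [hk, Measure.map_map hΨ hpair]
      congr 1
      funext ω n
      rcases n with _ | n
      · simp [Ψ, Function.leftInverse_invFun hf (X 0 ω)]
      · simp [Ψ, Xp]
    have e2 : P'.map (fun ω => fun n : ℕ => X' n ω) = (P'.map (Prod.map Wp id)).map Ψ := by
      rw [Measure.map_map hΨ hpair']
      congr 1
      funext ω n
      rcases n with _ | n
      · simp [Ψ, X']
      · simp only [X', Ψ, Function.comp, Prod.map, Nat.add_sub_cancel, Nat.succ_ne_zero, if_false]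
        rfl
    have e3 : P'.map (Prod.map Wp id) = Pd.map Wp ⊗ₘ κ := by
      have := Measure.isProbabilityMeasure_map (μ := Pd) hWp.aemeasurable
      refine Measure.ext_of_lintegral _ fun F hF => ?_
      have hh : ∫⁻ a, F (Prod.map Wp id a) ∂P' = ∫⁻ ω, ∫⁻ z, F (Wp ω, z) ∂κ' ω ∂Pd :=
        Measure.lintegral_compProd (hF.comp hpair')
      rw [lintegral_map hF hpair', hh,
        Measure.lintegral_compProd hF, lintegral_map (hF.lintegral_kernel_prod_right') hWp]
      rfl
    rw [e1, e2, e3]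
    have hL' : P.map Xp = Pd.map Wp := hL
    rw [hL']

lemma rot_val {d : ℕ} (k : ℕ) (i : Fin d) : (((finRotate d) ^ k) i : ℕ) = (i + k) % d := by
  induction k with
  | zero => simp [Nat.mod_eq_of_lt i.2]
  | succ k ih =>
    rw [pow_succ', Equiv.Perm.mul_apply]
    have hd : d ≠ 0 := by have := i.2; omega
    obtain ⟨m, rfl⟩ := Nat.exists_eq_succ_of_ne_zero hd
    rw [finRotate_apply, Fin.val_add, ih, Fin.val_one', ← Nat.add_mod, add_assoc]

lemma mod_iff (d i j a : ℕ) (hi : i < d) (hj : j < d) (hij : i ≠ j) (ha : a < d - 1) :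
    (i + (a + 1)) % d = j ↔ a = if i < j then j - i - 1 else j + d - i - 1 := by
  rcases Nat.lt_or_ge (i + (a + 1)) d with h | h
  · rw [Nat.mod_eq_of_lt h]
    split_ifs <;> omega
  · rw [Nat.mod_eq_sub_mod h, Nat.mod_eq_of_lt (by omega)]
    split_ifs <;> omega

lemma mod_ne (d i a : ℕ) (hi : i < d) (ha : a < d - 1) : (i + (a + 1)) % d ≠ i := by
  rcases Nat.lt_or_ge (i + (a + 1)) d with h | h
  · rw [Nat.mod_eq_of_lt h]; omega
  · rw [Nat.mod_eq_sub_mod h, Nat.mod_eq_of_lt (by omega)]; omega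

lemma rot_unif {G : Type*} (d : ℕ) (hd : 2 ≤ d) (gen : Fin d → G)
    (hinj : Function.Injective gen) (i j : Fin d) :
    unif (d - 2) {y | gen (((finRotate d) ^ (y % (d - 2 + 1) + 1)) i) = gen j} =
      if i = j then 0 else ((d - 2 + 1 : ℕ) : ℝ≥0∞)⁻¹ := by
  have hlt : ∀ y : ℕ, y % (d - 2 + 1) < d - 1 := by
    intro y
    have := Nat.mod_lt y (show 0 < d - 2 + 1 by omega)
    omega
  split_ifs with h
  · subst h
    have : {y : ℕ | gen (((finRotate d) ^ (y % (d - 2 + 1) + 1)) i) = gen i} = ∅ := by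
      ext y
      simp only [Set.mem_ofPred_eq, Set.mem_empty_iff_false, iff_false]
      intro hy
      have := congrArg Fin.val (hinj hy)
      rw [rot_val] at this
      exact mod_ne d i _ i.2 (hlt y) this
    rw [this]; simp
  · have hij : (i : ℕ) ≠ j := fun h' => h (Fin.ext h')
    have hi := i.2
    have hj := j.2
    rw [← unif_mod (d - 2) (if (i : ℕ) < j then (j : ℕ) - i - 1 else j + d - i - 1)
      (by split_ifs <;> omega)]
    congr 1
    ext y
    simp only [Set.mem_ofPred_eq]
    rw [hinj.eq_iff, ← Fin.val_inj, rot_val, mod_iff d i j _ hi hj hij (hlt y)]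

open Classical in
/-- The rotation of the generators. -/
noncomputable def tau {G : Type*} {d : ℕ} (gen : Fin d → G) (y : ℕ) (s : G) : G :=
  if h : ∃ i, gen i = s then gen (((finRotate d) ^ y) h.choose) else s

lemma tau_gen {G : Type*} {d : ℕ} (gen : Fin d → G) (hinj : Function.Injective gen) (y : ℕ)
    (i : Fin d) : tau gen y (gen i) = gen (((finRotate d) ^ y) i) := by
  have h : ∃ j, gen j = gen i := ⟨i, rfl⟩
  rw [tau, dif_pos h, hinj h.choose_spec]

end ERWProof

open ERWProof


/-- **The elephant random walk is a generalized step-reinforced random walk.**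
Let `Γ = {g₁, …, g_d}` (`d ≥ 2`) be a finite symmetric generating set of `G` and let
`X` be an ERW on `G_Γ` with memory parameter `p ∈ [0,1]`.  If `p ≥ 1/d`, then `X` has
the law of a usual SRRW with reinforcement parameter `α = (dp-1)/(d-1)` and step
distribution `μ` uniform on `Γ`.  If `p < 1/d`, then `X` has the law of a generalized
SRRW with reinforcement parameter `α = 1 - dp`, step distribution `μ` uniform on `Γ`,
and transformations `T_n(g_i) = g_{σ^{Y_n}(i)}`, where `σ` is the cyclic rotation
`(1 2 ⋯ d)` and `(Y_n)_{n ≥ 2}` are i.i.d. uniform on `{1, …, d-1}` (so that `T_n(g_i)`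
is uniform on `Γ \ {g_i}`). -/
theorem erw_is_generalized_srrw
    {G : Type*} [Group G] [DecidableEq G] [MeasurableSpace G] [MeasurableSingletonClass G]
    {Ω : Type*} [MeasurableSpace Ω] (P : Measure Ω) [IsProbabilityMeasure P]
    (d : ℕ) (hd : 2 ≤ d) (gen : Fin d → G) (hinj : Function.Injective gen)
    (Γ : Finset G) (hΓ : ∀ s : G, s ∈ Γ ↔ ∃ i, gen i = s)
    (hsymm : ∀ s ∈ Γ, s⁻¹ ∈ Γ) (hgenerates : Subgroup.closure (Γ : Set G) = ⊤)
    (μ : Measure G) [IsProbabilityMeasure μ]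
    (hμ : ∀ s : G, μ {s} = if s ∈ Γ then ((d : ℕ) : ℝ≥0∞)⁻¹ else 0)
    (p : ℝ) (hp0 : 0 ≤ p) (hp1 : p ≤ 1)
    (X : ℕ → Ω → G) (hX : IsERW P p Γ X) :
    ((1 : ℝ) / d ≤ p →
      ∃ (Ω' : Type) (_ : MeasurableSpace Ω') (P' : Measure Ω') (X' : ℕ → Ω' → G),
        IsProbabilityMeasure P' ∧
        IsSRRW P' ((d * p - 1) / (d - 1)) μ X' ∧
        P.map (fun ω => fun n : ℕ => X n ω)
          = P'.map (fun ω => fun n : ℕ => X' n ω)) ∧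
    (p < (1 : ℝ) / d →
      ∃ (Ω' : Type) (_ : MeasurableSpace Ω') (P' : Measure Ω') (X' : ℕ → Ω' → G)
        (T : ℕ → Ω' → G → G) (Y : ℕ → Ω' → ℕ),
        IsProbabilityMeasure P' ∧
        (∀ n, Measurable (Y n)) ∧
        (∀ n, 2 ≤ n → ∀ ω, 1 ≤ Y n ω ∧ Y n ω ≤ d - 1) ∧
        (∀ n, 2 ≤ n → ∀ k : ℕ, 1 ≤ k → k ≤ d - 1 →
          P' {ω | Y n ω = k} = ((d - 1 : ℕ) : ℝ≥0∞)⁻¹) ∧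
        iIndepFun Y P' ∧
        (∀ n, 2 ≤ n → ∀ ω, ∀ i : Fin d,
          T n ω (gen i) = gen (((finRotate d) ^ (Y n ω)) i)) ∧
        IsGenSRRW P' (1 - d * p) μ T X' ∧
        P.map (fun ω => fun n : ℕ => X n ω)
          = P'.map (fun ω => fun n : ℕ => X' n ω)) := by
  have hcount : Countable G := by
    have h1 : Countable (Γ : Set G) := Γ.countable_toSet
    have h2 : Countable (FreeGroup (Γ : Set G)) := inferInstance
    rw [FreeGroup.closure_eq_range] at hgenerates
    exact (MonoidHom.range_eq_top.mp hgenerates).countable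
  have hcard : Γ.card = d := by
    have : Γ = Finset.univ.image gen := by
      ext s; simp [hΓ]
    rw [this, Finset.card_image_of_injective _ hinj]; simp
  have hd0 : 0 < d := by omega
  have hdR : (2 : ℝ) ≤ d := by exact_mod_cast hd
  have hdpos : (0 : ℝ) < d := by linarith
  have hd1 : (0 : ℝ) < (d : ℝ) - 1 := by linarith
  let γ : ℕ → G := fun j => gen ⟨j % d, Nat.mod_lt j hd0⟩
  have hγΓ : ∀ j, γ j ∈ Γ := fun j => (hΓ _).2 ⟨_, rfl⟩
  have hγ : ∀ s ∈ Γ, unif (d - 1) {j | γ j = s} = (d : ℝ≥0∞)⁻¹ := by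
    intro s hs
    obtain ⟨i, rfl⟩ := (hΓ s).1 hs
    have h := unif_mod (d - 1) i (by have := i.2; omega)
    have hdd : d - 1 + 1 = d := by omega
    rw [hdd] at h
    rw [← h]
    congr 1
    ext j
    simp only [γ, Set.mem_ofPred_eq]
    rw [hinj.eq_iff, ← Fin.val_inj]
  have hinvd : (d : ℝ≥0∞)⁻¹ = ENNReal.ofReal ((d : ℝ)⁻¹) := by
    rw [ENNReal.ofReal_inv_of_pos hdpos, ENNReal.ofReal_natCast]
  constructor
  · intro hp
    have hdp : 1 ≤ d * p := by
      rw [div_le_iff₀ hdpos] at hp; linarith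
    have hα0 : 0 ≤ ((d : ℝ) * p - 1) / (d - 1) := div_nonneg (by linarith) hd1.le
    have hα1 : ((d : ℝ) * p - 1) / (d - 1) ≤ 1 := by
      rw [div_le_one hd1]; nlinarith
    obtain ⟨Ω', m, P', X', Y, h1, -, -, -, -, h2, h3⟩ := core P hα0 hα1 hd hp0 hp1 γ
      (fun _ => id) Γ hcard hγΓ (fun _ s hs => hs) hγ (by
        intro r hr s hs
        rw [hinvd, ← ENNReal.ofReal_mul (by linarith)]
        by_cases hrs : r = s
        · simp only [hrs, id, wt, if_true, Set.ofPred_true, measure_univ, mul_one]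
          rw [← ENNReal.ofReal_add hα0 (mul_nonneg (by linarith) (by positivity))]
          congr 1
          field_simp
          ring
        · simp only [hrs, id, wt, if_false, Set.ofPred_false, measure_empty, mul_zero, zero_add]
          congr 1
          field_simp
          ring) μ hμ X hX
    exact ⟨Ω', m, P', X', h1, h2, h3⟩
  · intro hp
    have hdp : d * p < 1 := by
      rw [lt_div_iff₀ hdpos] at hp; linarith
    have hdp0 : 0 ≤ d * p := by positivity
    have hα0 : 0 ≤ 1 - (d : ℝ) * p := by linarith
    have hα1 : 1 - (d : ℝ) * p ≤ 1 := by linarith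
    have hinv1 : ((d - 2 + 1 : ℕ) : ℝ≥0∞)⁻¹ = ENNReal.ofReal (((d : ℝ) - 1)⁻¹) := by
      have : (d : ℝ) - 1 = ((d - 2 + 1 : ℕ) : ℝ) := by
        rw [show d - 2 + 1 = d - 1 by omega, Nat.cast_sub (by omega)]; simp
      rw [ENNReal.ofReal_inv_of_pos hd1, this, ENNReal.ofReal_natCast]
    obtain ⟨Ω', m, P', X', Y, h1, h2, h3, h4, h5, h6, h7⟩ := core P hα0 hα1 hd hp0 hp1 γ
      (tau gen) Γ hcard hγΓ (by
        intro y s hs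
        obtain ⟨i, rfl⟩ := (hΓ s).1 hs
        rw [tau_gen gen hinj]
        exact (hΓ _).2 ⟨_, rfl⟩) hγ (by
        intro r hr s hs
        obtain ⟨i, rfl⟩ := (hΓ r).1 hr
        obtain ⟨j, rfl⟩ := (hΓ s).1 hs
        simp only [tau_gen gen hinj]
        rw [rot_unif d hd gen hinj, hinvd, ← ENNReal.ofReal_mul (by linarith)]
        by_cases hij : i = j
        · simp only [hij, wt, if_true, mul_zero, zero_add]
          congr 1
          field_simp
          ring
        · have hg : gen i ≠ gen j := fun h => hij (hinj h)
          simp only [hij, hg, wt, if_false]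
          rw [hinv1, ← ENNReal.ofReal_mul hα0, ← ENNReal.ofReal_add
            (mul_nonneg hα0 (by positivity)) (mul_nonneg (by linarith) (by positivity))]
          congr 1
          field_simp
          ring) μ hμ X hX
    exact ⟨Ω', m, P', X', fun n ω => tau gen (Y n ω), Y, h1, h2, h3, h4, h5,
      fun n _ ω i => tau_gen gen hinj _ i, h6, h7⟩
end

section
/- Let G be a countably infinite group and μ a probability measure on G with μ(e_G) > 0 such that the kernel P_μ(x,y) = μ(x⁻¹·y) is irreducible. Let (P_j)_{j∈[n]} be transition kernels on G, each equal either to P_μ or to a deterministic kernel P^{(g)} for some g ∈ G, and for 0 ≤ k ≤ ℓ ≤ n let P_{k,ℓ} = P_{k+1}P_{k+2}⋯P_ℓ (with P_{k,k} the identity). Then for any 0 ≤ k ≤ ℓ ≤ n, any x ∈ G and any ε ∈ (0,1): Σ_{y∈G} P_{k,ℓ}(x,y)² ≤ ε, provided the number of indices j ∈ {k+1,…,ℓ} with P_j = P_μ is at least ∫_4^{4/ε} du/(u·ψ(u)). -/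
open MeasureTheory ProbabilityTheory Filter
open scoped ENNReal NNReal

namespace EvolvingSets

variable {G : Type*} [Group G] [DecidableEq G] [MeasurableSpace G]

/-- The Markov kernel `P_μ(x, y) = μ(x⁻¹ y)` of the `μ`-random walk on `G`. -/
noncomputable def muKer (μ : Measure G) : G → G → ℝ≥0∞ := fun x y => μ {x⁻¹ * y}

/-- The deterministic kernel `P^{(g)}(x, y) = 𝟙{y = x g}`. -/
noncomputable def detKer (g : G) : G → G → ℝ≥0∞ := fun x y => if y = x * g then 1 else 0

/-- Composition of kernels: `(K₁ K₂)(x, z) = Σ_y K₁(x, y) K₂(y, z)`. -/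
noncomputable def comp (K₁ K₂ : G → G → ℝ≥0∞) : G → G → ℝ≥0∞ :=
  fun x z => ∑' y, K₁ x y * K₂ y z

/-- `prodKer Ks k m = P_{k, k+m} = P_{k+1} P_{k+2} ⋯ P_{k+m}` (with `P_{k,k}` the
identity kernel). -/
noncomputable def prodKer (Ks : ℕ → G → G → ℝ≥0∞) (k : ℕ) : ℕ → G → G → ℝ≥0∞
  | 0 => fun x y => if x = y then 1 else 0
  | m + 1 => comp (prodKer Ks k m) (Ks (k + m + 1))

/-- `P_μ` is irreducible: every element of `G` can be reached from the identity by steps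
in the support of `μ`. -/
def IrreducibleKernel (μ : Measure G) : Prop :=
  ∀ x : G, ∃ l : List G, (∀ s ∈ l, 0 < μ {s}) ∧ l.prod = x

/-- The evolving set quantity
`ψ(W) = 1 - E √(|W_μ|/|W|)`, where `W_μ = {y : Σ_{x ∈ W} P_μ(x, y) ≥ Ũ}` and `Ũ` is
uniform on `(0,1)`. -/
noncomputable def psiSet (μ : Measure G) (W : Finset G) : ℝ :=
  1 - ∫ t in (0:ℝ)..1,
        Real.sqrt
          ((({y : G | ENNReal.ofReal t ≤ ∑ x ∈ W, μ {x⁻¹ * y}}.ncard : ℝ)) / W.card)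

/-- The profile `ψ(r) = inf {ψ(W) : W ≠ ∅, |W| ≤ r}`. -/
noncomputable def psiProfile (μ : Measure G) (r : ℝ) : ℝ :=
  sInf (psiSet μ '' {W : Finset G | W.Nonempty ∧ (W.card : ℝ) ≤ r})

end EvolvingSets

open EvolvingSets

set_option linter.unusedSectionVars false

namespace EvoProof

section
variable {G : Type*} [Group G] [DecidableEq G] [MeasurableSpace G]

/-- Flow into y. -/
noncomputable def Q (μ : Measure G) (W : Finset G) (y : G) : ℝ≥0∞ := ∑ x ∈ W, μ {x⁻¹ * y}

open Classical in
/-- evolved set -/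
noncomputable def U (μ : Measure G) (W : Finset G) (t : ℝ) : Finset G :=
  if h : {y : G | ENNReal.ofReal t ≤ ∑ x ∈ W, μ {x⁻¹ * y}}.Finite then h.toFinset else ∅

/-- uniform law -/
noncomputable def lam : Measure ℝ := volume.restrict (Set.Ioc 0 1)

/-- sqrt weight -/
noncomputable def wt (W : Finset G) : ℝ≥0∞ := ENNReal.ofReal (Real.sqrt W.card)

instance : IsProbabilityMeasure lam := ⟨by simp [lam]⟩

lemma U_card (μ : Measure G) (W : Finset G) (t : ℝ) :
    (U μ W t).card = {y : G | ENNReal.ofReal t ≤ ∑ x ∈ W, μ {x⁻¹ * y}}.ncard := by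
  unfold U
  split_ifs with h
  · rw [Set.ncard_eq_toFinset_card _ h]
  · rw [Set.Infinite.ncard h]; rfl

lemma tsum_right [MeasurableSingletonClass G] [Countable G]
    (μ : Measure G) [IsProbabilityMeasure μ] (x : G) : ∑' y, μ {x⁻¹ * y} = 1 := by
  have h := (Equiv.mulLeft x⁻¹).tsum_eq (fun y => μ {y})
  simp only [Equiv.coe_mulLeft] at h
  rw [h]
  have := lintegral_countable' (μ := μ) (fun _ => (1 : ℝ≥0∞))
  simpa using this.symm

lemma tsum_left [MeasurableSingletonClass G] [Countable G]
    (μ : Measure G) [IsProbabilityMeasure μ] (y : G) : ∑' x, μ {x⁻¹ * y} = 1 := by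
  have h := ((Equiv.inv G).trans (Equiv.mulRight y)).tsum_eq (fun y => μ {y})
  simp only [Equiv.trans_apply, Equiv.coe_mulRight, Equiv.inv_apply] at h
  rw [h]
  have := lintegral_countable' (μ := μ) (fun _ => (1 : ℝ≥0∞))
  simpa using this.symm

lemma tsum_Q [MeasurableSingletonClass G] [Countable G]
    (μ : Measure G) [IsProbabilityMeasure μ] (W : Finset G) : ∑' y, Q μ W y = W.card := by
  unfold Q
  rw [Summable.tsum_finsetSum (fun _ _ => ENNReal.summable)]
  simp [tsum_right]

lemma Q_le_one [MeasurableSingletonClass G] [Countable G]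
    (μ : Measure G) [IsProbabilityMeasure μ] (W : Finset G) (y : G) : Q μ W y ≤ 1 := by
  rw [← tsum_left μ y]
  exact ENNReal.sum_le_tsum W

lemma mem_U [MeasurableSingletonClass G] [Countable G] [Infinite G]
    (μ : Measure G) [IsProbabilityMeasure μ] (W : Finset G) (t : ℝ) (y : G) :
    y ∈ U μ W t ↔ 0 < t ∧ ENNReal.ofReal t ≤ Q μ W y := by
  rcases le_or_gt t 0 with ht | ht
  · have : ¬ {y : G | ENNReal.ofReal t ≤ ∑ x ∈ W, μ {x⁻¹ * y}}.Finite := by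
      rw [ENNReal.ofReal_of_nonpos ht]
      simpa using Set.infinite_univ
    unfold U
    rw [dif_neg this]
    simp [not_lt.mpr ht]
  · have : {y : G | ENNReal.ofReal t ≤ ∑ x ∈ W, μ {x⁻¹ * y}}.Finite := by
      refine ENNReal.finite_const_le_of_tsum_ne_top (a := fun y => Q μ W y) ?_ ?_
      · rw [tsum_Q]; simp
      · simpa using ht
    unfold U
    rw [dif_pos this]
    simp [ht, Q]

/-- discrete sigma algebra -/
local instance : MeasurableSpace (Finset G) := ⊤

lemma meas_mem [MeasurableSingletonClass G] [Countable G] [Infinite G]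
    (μ : Measure G) [IsProbabilityMeasure μ] (W : Finset G) (y : G) :
    MeasurableSet {t | y ∈ U μ W t} := by
  simp only [mem_U]
  exact (measurableSet_lt measurable_const measurable_id).inter
    (measurableSet_le ENNReal.measurable_ofReal measurable_const)

lemma meas_U [MeasurableSingletonClass G] [Countable G] [Infinite G]
    (μ : Measure G) [IsProbabilityMeasure μ] (W : Finset G) :
    Measurable (U μ W) := by
  refine measurable_to_countable' fun A => ?_
  have : U μ W ⁻¹' {A} = ⋂ y, {t | y ∈ U μ W t ↔ y ∈ A} := by
    ext t
    simp [Finset.ext_iff]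
  rw [this]
  refine MeasurableSet.iInter fun y => ?_
  by_cases h : y ∈ A
  · simpa [h] using meas_mem μ W y
  · have : {t | y ∈ U μ W t ↔ y ∈ A} = {t | y ∈ U μ W t}ᶜ := by ext t; simp [h]
    rw [this]
    exact (meas_mem μ W y).compl

/-- evolving set kernel -/
noncomputable def K (μ : Measure G) (W A : Finset G) : ℝ≥0∞ := (lam.map (U μ W)) {A}

lemma tsum_K [MeasurableSingletonClass G] [Countable G] [Infinite G]
    (μ : Measure G) [IsProbabilityMeasure μ] (W : Finset G) (F : Finset G → ℝ≥0∞) :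
    ∑' A, K μ W A * F A = ∫⁻ t, F (U μ W t) ∂lam := by
  rw [← lintegral_map (μ := lam) (f := F) measurable_from_top (meas_U μ W), lintegral_countable']
  simp [K, mul_comm]

lemma lint_mem [MeasurableSingletonClass G] [Countable G] [Infinite G]
    (μ : Measure G) [IsProbabilityMeasure μ] (W : Finset G) (y : G) :
    ∫⁻ t, (if y ∈ U μ W t then 1 else 0) ∂lam = Q μ W y := by
  have : (fun t => if y ∈ U μ W t then (1:ℝ≥0∞) else 0)
      = Set.indicator {t | y ∈ U μ W t} 1 := by
    ext t; simp [Set.indicator]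
  rw [this, lintegral_indicator_one (meas_mem μ W y), lam,
    Measure.restrict_apply (meas_mem μ W y)]
  have h1 := Q_le_one μ W y
  have hne : Q μ W y ≠ ∞ := ne_top_of_le_ne_top ENNReal.one_ne_top h1
  have : {t | y ∈ U μ W t} ∩ Set.Ioc 0 1 = Set.Ioc 0 (Q μ W y).toReal := by
    ext t
    simp only [mem_U, Set.mem_inter_iff, Set.mem_ofPred_eq, Set.mem_Ioc]
    rw [ENNReal.ofReal_le_iff_le_toReal hne]
    have : (Q μ W y).toReal ≤ 1 := ENNReal.toReal_le_of_le_ofReal zero_le_one (by simpa using h1)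
    constructor
    · rintro ⟨⟨a, b⟩, c, d⟩; exact ⟨a, b⟩
    · rintro ⟨a, b⟩; exact ⟨⟨a, b⟩, a, b.trans this⟩
  rw [this]
  simp [hne]

lemma card_eq_tsum (A : Finset G) : (A.card : ℝ≥0∞) = ∑' y, if y ∈ A then 1 else 0 := by
  rw [tsum_eq_sum (s := A)]
  · simp
  · intro b hb; simp [hb]

lemma lint_card [MeasurableSingletonClass G] [Countable G] [Infinite G]
    (μ : Measure G) [IsProbabilityMeasure μ] (W : Finset G) :
    ∫⁻ t, ((U μ W t).card : ℝ≥0∞) ∂lam = W.card := by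
  simp_rw [card_eq_tsum]
  rw [lintegral_tsum]
  · simp_rw [lint_mem]
    rw [tsum_Q, card_eq_tsum]
  · intro y
    exact (Measurable.ite (meas_mem μ W y) measurable_const measurable_const).aemeasurable

/-- normalised size -/
noncomputable def X (μ : Measure G) (W : Finset G) (t : ℝ) : ℝ := ((U μ W t).card : ℝ) / W.card

lemma meas_X [MeasurableSingletonClass G] [Countable G] [Infinite G]
    (μ : Measure G) [IsProbabilityMeasure μ] (W : Finset G) : Measurable (X μ W) :=
  (measurable_from_top (f := fun A : Finset G => (A.card : ℝ) / W.card)).comp (meas_U μ W)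

lemma X_nonneg (μ : Measure G) (W : Finset G) (t : ℝ) : 0 ≤ X μ W t := by
  unfold X; positivity

lemma lint_X [MeasurableSingletonClass G] [Countable G] [Infinite G]
    (μ : Measure G) [IsProbabilityMeasure μ] (W : Finset G) (hW : W.Nonempty) :
    ∫⁻ t, ENNReal.ofReal (X μ W t) ∂lam = 1 := by
  have hc : (0:ℝ) < W.card := by exact_mod_cast hW.card_pos
  have : ∀ t, ENNReal.ofReal (X μ W t) = ((U μ W t).card : ℝ≥0∞) * (W.card : ℝ≥0∞)⁻¹ := by
    intro t
    rw [X, ENNReal.ofReal_div_of_pos hc, ENNReal.ofReal_natCast, ENNReal.ofReal_natCast,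
      div_eq_mul_inv]
  simp_rw [this]
  have hm : Measurable (fun t => ((U μ W t).card : ℝ≥0∞)) := (measurable_from_top
    (f := fun A : Finset G => (A.card : ℝ≥0∞))).comp (meas_U μ W)
  rw [lintegral_mul_const _ hm, lint_card]
  exact ENNReal.mul_inv_cancel (by simpa using hW.ne_empty) (by simp)

lemma int_X [MeasurableSingletonClass G] [Countable G] [Infinite G]
    (μ : Measure G) [IsProbabilityMeasure μ] (W : Finset G) (hW : W.Nonempty) :
    Integrable (X μ W) lam ∧ ∫ t, X μ W t ∂lam = 1 := by
  constructor
  · refine ⟨(meas_X μ W).aestronglyMeasurable, ?_⟩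
    rw [hasFiniteIntegral_iff_ofReal (ae_of_all _ (X_nonneg μ W)), lint_X μ W hW]
    simp
  · rw [integral_eq_lintegral_of_nonneg_ae (ae_of_all _ (X_nonneg μ W))
      (meas_X μ W).aestronglyMeasurable, lint_X μ W hW]
    simp

lemma sqrt_le_half {a : ℝ} (ha : 0 ≤ a) : Real.sqrt a ≤ (1 + a) / 2 := by
  nlinarith [sq_nonneg (Real.sqrt a - 1), Real.sq_sqrt ha]

lemma int_sqrtX [MeasurableSingletonClass G] [Countable G] [Infinite G]
    (μ : Measure G) [IsProbabilityMeasure μ] (W : Finset G) (hW : W.Nonempty) :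
    Integrable (fun t => Real.sqrt (X μ W t)) lam := by
  refine Integrable.mono' (g := fun t => (1 + X μ W t) / 2)
    (((integrable_const _).add (int_X μ W hW).1).div_const _)
    (meas_X μ W).sqrt.aestronglyMeasurable (ae_of_all _ fun t => ?_)
  rw [Real.norm_of_nonneg (Real.sqrt_nonneg _)]
  exact sqrt_le_half (X_nonneg μ W t)

lemma psiSet_eq (μ : Measure G) (W : Finset G) :
    psiSet μ W = 1 - ∫ t, Real.sqrt (X μ W t) ∂lam := by
  unfold psiSet X lam
  rw [intervalIntegral.integral_of_le zero_le_one]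
  simp_rw [U_card]

lemma psiSet_le_one (μ : Measure G) (W : Finset G) : psiSet μ W ≤ 1 := by
  rw [psiSet_eq]
  have : 0 ≤ ∫ t, Real.sqrt (X μ W t) ∂lam := integral_nonneg fun t => Real.sqrt_nonneg _
  linarith

lemma psiSet_nonneg [MeasurableSingletonClass G] [Countable G] [Infinite G]
    (μ : Measure G) [IsProbabilityMeasure μ] (W : Finset G) (hW : W.Nonempty) :
    0 ≤ psiSet μ W := by
  rw [psiSet_eq]
  have h := integral_mono (int_sqrtX μ W hW)
    (((integrable_const 1).add (int_X μ W hW).1).div_const 2)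
    (fun t => sqrt_le_half (X_nonneg μ W t))
  have h2 : ∫ t, (1 + X μ W t) / 2 ∂lam = 1 := by
    rw [integral_div, integral_add (integrable_const _) (int_X μ W hW).1, (int_X μ W hW).2]
    simp
  linarith [h.trans_eq h2]

/-- quantitative version -/
lemma psiSet_lower [MeasurableSingletonClass G] [Countable G] [Infinite G]
    (μ : Measure G) [IsProbabilityMeasure μ] (W : Finset G) (hW : W.Nonempty)
    (r η : ℝ) (hr : (W.card : ℝ) ≤ r) (hη : 0 < η) (hη1 : η ≤ 1)
    (hU : ∀ t, 0 < t → t ≤ η → W.card + 1 ≤ (U μ W t).card) :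
    (Real.sqrt (1 + 1 / r) - 1) ^ 2 / 2 * η ≤ psiSet μ W := by
  rw [psiSet_eq]
  set c := (Real.sqrt (1 + 1 / r) - 1) ^ 2 / 2 with hc
  have hcp : (0:ℝ) < W.card := by exact_mod_cast hW.card_pos
  have hrp : 0 < r := hcp.trans_le hr
  have hind : Integrable (Set.indicator (Set.Ioc 0 η) (fun _ => c)) lam :=
    (integrable_const c).indicator measurableSet_Ioc
  have hb : Integrable (fun t => 1 + X μ W t) lam :=
    (integrable_const 1).add (int_X μ W hW).1
  have h := integral_mono (int_sqrtX μ W hW) ((hb.div_const 2).sub hind) (fun t => by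
    simp only [Pi.sub_apply]
    by_cases ht : t ∈ Set.Ioc 0 η
    · rw [Set.indicator_of_mem ht]
      have h1 : 1 + 1 / r ≤ X μ W t := by
        have h2 : (W.card : ℝ) + 1 ≤ (U μ W t).card := by exact_mod_cast hU t ht.1 ht.2
        have h3 : 1 / r ≤ 1 / (W.card : ℝ) := one_div_le_one_div_of_le hcp hr
        calc 1 + 1 / r ≤ 1 + 1 / (W.card : ℝ) := by linarith
          _ = ((W.card : ℝ) + 1) / W.card := by field_simp
          _ ≤ X μ W t := by unfold X; gcongr
      have h2 := Real.sqrt_le_sqrt h1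
      have h3 : 1 ≤ Real.sqrt (1 + 1 / r) := by
        rw [Real.one_le_sqrt]; have := one_div_pos.mpr hrp; linarith
      have h4 := Real.sq_sqrt (X_nonneg μ W t)
      rw [hc]
      nlinarith [mul_self_le_mul_self (sub_nonneg.2 h3) (sub_le_sub_right h2 1)]
    · rw [Set.indicator_of_notMem ht]
      simpa using sqrt_le_half (X_nonneg μ W t))
  have h2 : ∫ t, ((fun t => (1 + X μ W t) / 2) -
      Set.indicator (Set.Ioc 0 η) (fun _ => c)) t ∂lam = 1 - c * η := by
    rw [integral_sub' (hb.div_const 2) hind, integral_div,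
      integral_add (integrable_const _) (int_X μ W hW).1, (int_X μ W hW).2,
      integral_indicator_const _ measurableSet_Ioc]
    have : lam.real (Set.Ioc 0 η) = η := by
      rw [lam, measureReal_restrict_apply measurableSet_Ioc,
        Set.inter_eq_left.2 (Set.Ioc_subset_Ioc_right hη1)]
      simp [hη.le]
    rw [this]
    simp
    ring
  linarith [h.trans_eq h2]

end
end EvoProof

namespace EvoProof
section
variable {G : Type*} [Group G] [DecidableEq G] [MeasurableSpace G]

lemma exit_list (S : Set G) (W : Finset G) (l : List G) (hl : ∀ s ∈ l, s ∈ S) :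
    ∀ x ∈ W, x * l.prod ∉ W → ∃ w ∈ W, ∃ s ∈ l, w * s ∉ W := by
  induction l with
  | nil => intro x hx h; simp at h; exact absurd hx h
  | cons a l ih =>
    intro x hx h
    by_cases ha : x * a ∈ W
    · obtain ⟨w, hw, s, hs, h'⟩ := ih (fun s hs => hl s (List.mem_cons_of_mem _ hs)) (x * a) ha
        (by simpa [mul_assoc] using h)
      exact ⟨w, hw, s, List.mem_cons_of_mem _ hs, h'⟩
    · exact ⟨x, hx, a, List.mem_cons_self, ha⟩

lemma exists_eta [Infinite G] (μ : Measure G) [IsProbabilityMeasure μ]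
    (hlazy : 0 < μ {(1 : G)}) (hirr : IrreducibleKernel μ) (r : ℝ) :
    ∃ η : ℝ, 0 < η ∧ η ≤ 1 ∧ ENNReal.ofReal η ≤ μ {(1 : G)} ∧
      ∀ W : Finset G, W.Nonempty → (W.card : ℝ) ≤ r →
        ∃ y ∉ W, ENNReal.ofReal η ≤ Q μ W y := by
  obtain ⟨T, hT⟩ := Infinite.exists_subset_card_eq G (⌈r⌉₊ + 1)
  choose L hL1 hL2 using hirr
  let S : Finset G := insert 1 (T.biUnion fun g => (L g).toFinset)
  have hS : ∀ s ∈ S, 0 < μ {s} := by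
    intro s hs
    simp only [S, Finset.mem_insert, Finset.mem_biUnion, List.mem_toFinset] at hs
    rcases hs with rfl | ⟨g, -, hg⟩
    · exact hlazy
    · exact hL1 g s hg
  have hSne : S.Nonempty := ⟨1, Finset.mem_insert_self _ _⟩
  obtain ⟨s0, hs0, hmin⟩ := Finset.exists_min_image S (fun s => μ {s}) hSne
  have hs0p := hS s0 hs0
  have hne : μ {s0} ≠ ∞ := measure_ne_top _ _
  refine ⟨(μ {s0}).toReal, ENNReal.toReal_pos hs0p.ne' hne, ?_, ?_, ?_⟩
  · exact ENNReal.toReal_le_of_le_ofReal zero_le_one (by simpa using prob_le_one)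
  · rw [ENNReal.ofReal_toReal hne]
    exact hmin 1 (Finset.mem_insert_self _ _)
  · intro W hW hr
    rw [ENNReal.ofReal_toReal hne]
    obtain ⟨x, hx⟩ := hW
    have : ∃ g ∈ T, x * g ∉ W := by
      by_contra hcon
      push Not at hcon
      have h1 : (T.image (x * ·)).card ≤ W.card :=
        Finset.card_le_card (by intro z hz; obtain ⟨g, hg, rfl⟩ := Finset.mem_image.1 hz
                                exact hcon g hg)
      rw [Finset.card_image_of_injective _ (mul_right_injective x), hT] at h1
      have h2 : W.card ≤ ⌈r⌉₊ := by
        have := hr.trans (Nat.le_ceil r)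
        exact_mod_cast this
      omega
    obtain ⟨g, hg, hxg⟩ := this
    obtain ⟨w, hw, s, hs, h'⟩ := exit_list Set.univ W (L g) (fun _ _ => trivial) x hx
      (by rwa [hL2])
    refine ⟨w * s, h', ?_⟩
    have hsS : s ∈ S := by
      simp only [S, Finset.mem_insert, Finset.mem_biUnion, List.mem_toFinset]
      exact Or.inr ⟨g, hg, hs⟩
    calc μ {s0} ≤ μ {s} := hmin s hsS
      _ = μ {w⁻¹ * (w * s)} := by simp
      _ ≤ Q μ W (w * s) := Finset.single_le_sum (f := fun x => μ {x⁻¹ * (w * s)})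
          (fun _ _ => zero_le) hw

lemma psi_unif [MeasurableSingletonClass G] [Countable G] [Infinite G]
    (μ : Measure G) [IsProbabilityMeasure μ]
    (hlazy : 0 < μ {(1 : G)}) (hirr : IrreducibleKernel μ) (r : ℝ) (hr : 1 ≤ r) :
    ∃ c : ℝ, 0 < c ∧ ∀ W : Finset G, W.Nonempty → (W.card : ℝ) ≤ r → c ≤ psiSet μ W := by
  obtain ⟨η, hη, hη1, hηe, hW⟩ := exists_eta μ hlazy hirr r
  refine ⟨(Real.sqrt (1 + 1 / r) - 1) ^ 2 / 2 * η, ?_, ?_⟩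
  · have h3 : 1 < Real.sqrt (1 + 1 / r) := by
      rw [Real.lt_sqrt zero_le_one]
      have : 0 < 1 / r := by positivity
      linarith
    have := sub_pos.2 h3
    positivity
  · intro W hne hc
    refine psiSet_lower μ W hne r η hc hη hη1 fun t ht htη => ?_
    obtain ⟨y, hy, hyQ⟩ := hW W hne hc
    rw [← Finset.card_insert_of_notMem hy]
    have hle : ENNReal.ofReal t ≤ ENNReal.ofReal η := ENNReal.ofReal_le_ofReal htη
    refine Finset.card_le_card fun z hz => ?_
    rw [mem_U]
    refine ⟨ht, hle.trans ?_⟩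
    rcases Finset.mem_insert.1 hz with rfl | hz
    · exact hyQ
    · refine hηe.trans ?_
      calc μ {1} = μ {z⁻¹ * z} := by simp
        _ ≤ Q μ W z := Finset.single_le_sum (f := fun x => μ {x⁻¹ * z})
          (fun _ _ => zero_le) hz

lemma bdd [MeasurableSingletonClass G] [Countable G] [Infinite G]
    (μ : Measure G) [IsProbabilityMeasure μ] (r : ℝ) :
    BddBelow (psiSet μ '' {W : Finset G | W.Nonempty ∧ (W.card : ℝ) ≤ r}) := by
  refine ⟨0, ?_⟩
  rintro _ ⟨W, hW, rfl⟩
  exact psiSet_nonneg μ W hW.1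

lemma nonemp (μ : Measure G) (r : ℝ) (hr : 1 ≤ r) :
    (psiSet μ '' {W : Finset G | W.Nonempty ∧ (W.card : ℝ) ≤ r}).Nonempty :=
  ⟨_, {1}, ⟨Finset.singleton_nonempty _, by simpa using hr⟩, rfl⟩

lemma profile_le [MeasurableSingletonClass G] [Countable G] [Infinite G]
    (μ : Measure G) [IsProbabilityMeasure μ] (r : ℝ) (W : Finset G) (hW : W.Nonempty)
    (hr : (W.card : ℝ) ≤ r) : psiProfile μ r ≤ psiSet μ W :=
  csInf_le (bdd μ r) ⟨W, ⟨hW, hr⟩, rfl⟩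

lemma profile_pos [MeasurableSingletonClass G] [Countable G] [Infinite G]
    (μ : Measure G) [IsProbabilityMeasure μ]
    (hlazy : 0 < μ {(1 : G)}) (hirr : IrreducibleKernel μ) (r : ℝ) (hr : 1 ≤ r) :
    0 < psiProfile μ r := by
  obtain ⟨c, hc, h⟩ := psi_unif μ hlazy hirr r hr
  refine hc.trans_le (le_csInf (nonemp μ r hr) ?_)
  rintro _ ⟨W, hW, rfl⟩
  exact h W hW.1 hW.2

lemma profile_anti [MeasurableSingletonClass G] [Countable G] [Infinite G]
    (μ : Measure G) [IsProbabilityMeasure μ] (r s : ℝ) (hr : 1 ≤ r) (hrs : r ≤ s) :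
    psiProfile μ s ≤ psiProfile μ r :=
  csInf_le_csInf (bdd μ s) (nonemp μ r hr)
    (Set.image_mono fun _ hW => ⟨hW.1, hW.2.trans hrs⟩)

end

section analysis

variable {ψ : ℝ → ℝ}

lemma intg (hpos : ∀ u, 1 ≤ u → 0 < ψ u) (hanti : ∀ u v, 1 ≤ u → u ≤ v → ψ v ≤ ψ u)
    (a b : ℝ) (ha : 1 ≤ a) (hab : a ≤ b) :
    IntervalIntegrable (fun u => 1 / (u * ψ u)) volume a b := by
  have h1 : IntervalIntegrable (fun u => (ψ u)⁻¹) volume a b := by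
    apply MonotoneOn.intervalIntegrable
    rw [Set.uIcc_of_le hab]
    intro u hu v hv huv
    exact inv_anti₀ (hpos v (ha.trans hv.1)) (hanti u v (ha.trans hu.1) huv)
  have h2 : ContinuousOn (fun u : ℝ => u⁻¹) (Set.uIcc a b) := by
    rw [Set.uIcc_of_le hab]
    exact continuousOn_inv₀.mono fun u hu => by
      have : (0:ℝ) < u := by linarith [hu.1]
      exact this.ne'
  refine (h1.continuousOn_mul h2).congr fun u _ => ?_
  simp [mul_comm]

lemma int_strict (hpos : ∀ u, 1 ≤ u → 0 < ψ u) (hanti : ∀ u v, 1 ≤ u → u ≤ v → ψ v ≤ ψ u)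
    (a b : ℝ) (ha : 4 ≤ a) (hab : a < b) :
    ∫ u in (4:ℝ)..a, 1 / (u * ψ u) < ∫ u in (4:ℝ)..b, 1 / (u * ψ u) := by
  have i1 := intg hpos hanti 4 a (by norm_num) ha
  have i2 := intg hpos hanti a b (by linarith) hab.le
  rw [← intervalIntegral.integral_add_adjacent_intervals i1 i2]
  have : 0 < ∫ u in a..b, 1 / (u * ψ u) := by
    refine intervalIntegral.intervalIntegral_pos_of_pos_on i2 (fun u hu => ?_) hab
    have h1 : 0 < u := by linarith [hu.1]
    have := hpos u (by linarith [hu.1])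
    positivity
  linarith

lemma int_mono (hpos : ∀ u, 1 ≤ u → 0 < ψ u) (hanti : ∀ u v, 1 ≤ u → u ≤ v → ψ v ≤ ψ u)
    (a b : ℝ) (ha : 4 ≤ a) (hab : a ≤ b) :
    ∫ u in (4:ℝ)..a, 1 / (u * ψ u) ≤ ∫ u in (4:ℝ)..b, 1 / (u * ψ u) := by
  rcases hab.eq_or_lt with rfl | h
  · exact le_rfl
  · exact (int_strict hpos hanti a b ha h).le

lemma int_step (hpos : ∀ u, 1 ≤ u → 0 < ψ u) (hanti : ∀ u v, 1 ≤ u → u ≤ v → ψ v ≤ ψ u)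
    (a b : ℝ) (ha : 4 ≤ a) (hab : a * Real.exp (ψ a) ≤ b) :
    (∫ u in (4:ℝ)..a, 1 / (u * ψ u)) + 1 ≤ ∫ u in (4:ℝ)..b, 1 / (u * ψ u) := by
  have hp := hpos a (by linarith)
  have hle : a ≤ a * Real.exp (ψ a) :=
    le_mul_of_one_le_right (by linarith) (Real.one_le_exp hp.le)
  refine le_trans ?_ (int_mono hpos hanti _ b (ha.trans hle) hab)
  set b' := a * Real.exp (ψ a)
  have i1 := intg hpos hanti 4 a (by norm_num) ha
  have i2 := intg hpos hanti a b' (by linarith) hle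
  rw [← intervalIntegral.integral_add_adjacent_intervals i1 i2]
  have hap : 0 < a := by linarith
  have h0 : ∫ u in a..b', u⁻¹ * (ψ a)⁻¹ = 1 := by
    rw [intervalIntegral.integral_mul_const, integral_inv_of_pos hap (by positivity)]
    have : b' / a = Real.exp (ψ a) := by simp only [b']; field_simp
    rw [this, Real.log_exp]
    exact mul_inv_cancel₀ hp.ne'
  have i3 : IntervalIntegrable (fun u : ℝ => u⁻¹ * (ψ a)⁻¹) volume a b' := by
    refine IntervalIntegrable.mul_const ?_ _
    refine ContinuousOn.intervalIntegrable ?_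
    rw [Set.uIcc_of_le hle]
    exact continuousOn_inv₀.mono fun u hu => by
      have : (0:ℝ) < u := by linarith [hu.1]
      exact this.ne'
  have := intervalIntegral.integral_mono_on hle i3 i2 (fun u hu => by
    rw [one_div, mul_inv]
    have h1 : 0 < u := by linarith [hu.1]
    have := hanti a u (by linarith) hu.1
    have h2 := hpos u (by linarith [hu.1])
    gcongr)
  linarith

end analysis
end EvoProof

namespace EvoProof
section
variable {G : Type*} [Group G] [DecidableEq G] [MeasurableSpace G]

/-- representation of p as a mixture of indicators -/
structure Rep (p : G → ℝ≥0∞) (ν : Finset G → ℝ≥0∞) : Prop where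
  eq : ∀ y, p y = ∑' W, ν W * (if y ∈ W then 1 else 0)
  sum : ∑' y, p y = 1

/-- root moment -/
noncomputable def Mo (ν : Finset G → ℝ≥0∞) : ℝ≥0∞ := ∑' W, ν W * wt W

lemma Rep.card {p : G → ℝ≥0∞} {ν : Finset G → ℝ≥0∞} (h : Rep p ν) :
    ∑' W, ν W * (W.card : ℝ≥0∞) = 1 := by
  rw [← h.sum]
  simp_rw [h.eq]
  rw [ENNReal.tsum_comm]
  simp_rw [ENNReal.tsum_mul_left, ← card_eq_tsum]

lemma wt_le_card (W : Finset G) : wt W ≤ W.card := by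
  unfold wt
  rw [← ENNReal.ofReal_natCast]
  apply ENNReal.ofReal_le_ofReal
  rw [Real.sqrt_le_left (by positivity)]
  exact_mod_cast Nat.le_self_pow two_ne_zero _

lemma Rep.Mo_le {p : G → ℝ≥0∞} {ν : Finset G → ℝ≥0∞} (h : Rep p ν) : Mo ν ≤ 1 := by
  rw [← h.card]
  exact ENNReal.tsum_le_tsum fun W => by gcongr; exact wt_le_card W

lemma Rep.Mo_pos {p : G → ℝ≥0∞} {ν : Finset G → ℝ≥0∞} (h : Rep p ν) : 0 < Mo ν := by
  rw [pos_iff_ne_zero]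
  intro h0
  have h1 := h.card
  have : ∀ W, ν W * (W.card : ℝ≥0∞) = 0 := by
    intro W
    have := ENNReal.tsum_eq_zero.1 h0 W
    rcases mul_eq_zero.1 this with h2 | h2
    · simp [h2]
    · unfold wt at h2
      rw [ENNReal.ofReal_eq_zero, Real.sqrt_le_left le_rfl] at h2
      have : W.card = 0 := by
        have : (W.card : ℝ) ≤ 0 := by simpa using h2
        exact Nat.le_zero.1 (by exact_mod_cast this)
      simp [this]
  simp [this] at h1

lemma wt_mul_ge (W A : Finset G) : ((W ∩ A).card : ℝ≥0∞) ≤ wt W * wt A := by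
  unfold wt
  rw [← ENNReal.ofReal_mul (Real.sqrt_nonneg _), ← Real.sqrt_mul (by positivity),
    ← ENNReal.ofReal_natCast]
  apply ENNReal.ofReal_le_ofReal
  apply Real.le_sqrt_of_sq_le
  rw [sq]
  gcongr
  · exact Finset.inter_subset_left
  · exact Finset.inter_subset_right

lemma Rep.l2 {p : G → ℝ≥0∞} {ν : Finset G → ℝ≥0∞} (h : Rep p ν) :
    ∑' y, p y ^ 2 ≤ Mo ν ^ 2 := by
  have e : ∀ y, p y ^ 2 = ∑' W, ∑' A, ν W * ν A * (if y ∈ W ∩ A then 1 else 0) := by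
    intro y
    rw [sq, h.eq, ← ENNReal.tsum_mul_right]
    refine tsum_congr fun W => ?_
    rw [← ENNReal.tsum_mul_left]
    refine tsum_congr fun A => ?_
    by_cases h1 : y ∈ W <;> by_cases h2 : y ∈ A <;> simp [h1, h2]
  simp_rw [e]
  rw [ENNReal.tsum_comm, sq, Mo, ← ENNReal.tsum_mul_right]
  refine ENNReal.tsum_le_tsum fun W => ?_
  rw [ENNReal.tsum_comm, ← ENNReal.tsum_mul_left]
  refine ENNReal.tsum_le_tsum fun A => ?_
  rw [ENNReal.tsum_mul_left, ← card_eq_tsum]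
  calc ν W * ν A * ((W ∩ A).card : ℝ≥0∞) ≤ ν W * ν A * (wt W * wt A) := by
        gcongr; exact wt_mul_ge W A
    _ = _ := by ring

/-- evolved mixture -/
noncomputable def evo (μ : Measure G) (ν : Finset G → ℝ≥0∞) (A : Finset G) : ℝ≥0∞ :=
  ∑' W, ν W * K μ W A

lemma tsum_evo [MeasurableSingletonClass G] [Countable G] [Infinite G]
    (μ : Measure G) [IsProbabilityMeasure μ] (ν : Finset G → ℝ≥0∞) (F : Finset G → ℝ≥0∞) :
    ∑' A, evo μ ν A * F A = ∑' W, ν W * ∫⁻ t, F (U μ W t) ∂lam := by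
  unfold evo
  simp_rw [← ENNReal.tsum_mul_right]
  rw [ENNReal.tsum_comm]
  refine tsum_congr fun W => ?_
  rw [← tsum_K, ← ENNReal.tsum_mul_left]
  simp_rw [mul_assoc]

lemma Rep.evo [MeasurableSingletonClass G] [Countable G] [Infinite G]
    (μ : Measure G) [IsProbabilityMeasure μ] {p : G → ℝ≥0∞} {ν : Finset G → ℝ≥0∞}
    (h : Rep p ν) : Rep (fun z => ∑' y, p y * muKer μ y z) (evo μ ν) where
  eq z := by
    rw [tsum_evo μ ν (fun A => if z ∈ A then 1 else 0)]
    simp_rw [lint_mem, h.eq, ← ENNReal.tsum_mul_right]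
    rw [ENNReal.tsum_comm]
    refine tsum_congr fun W => ?_
    simp_rw [mul_assoc]
    rw [ENNReal.tsum_mul_left]
    congr 1
    rw [tsum_eq_sum (s := W)]
    · unfold Q muKer
      refine Finset.sum_congr rfl fun x hx => by simp [hx]
    · intro b hb; simp [hb]
  sum := by
    rw [ENNReal.tsum_comm]
    simp_rw [ENNReal.tsum_mul_left]
    unfold muKer
    simp_rw [tsum_right, mul_one]
    exact h.sum

lemma lint_wt [MeasurableSingletonClass G] [Countable G] [Infinite G]
    (μ : Measure G) [IsProbabilityMeasure μ] (W : Finset G) (hW : W.Nonempty) :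
    ∫⁻ t, wt (U μ W t) ∂lam = wt W * ENNReal.ofReal (1 - psiSet μ W) := by
  have hc : (0:ℝ) < W.card := by exact_mod_cast hW.card_pos
  have e : ∀ t, wt (U μ W t) = wt W * ENNReal.ofReal (Real.sqrt (X μ W t)) := by
    intro t
    unfold wt X
    rw [← ENNReal.ofReal_mul (Real.sqrt_nonneg _), ← Real.sqrt_mul hc.le,
      mul_div_cancel₀ _ hc.ne']
  simp_rw [e]
  rw [lintegral_const_mul _ (meas_X μ W).sqrt.ennreal_ofReal, psiSet_eq, sub_sub_cancel,
    ofReal_integral_eq_lintegral_ofReal (int_sqrtX μ W hW)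
      (ae_of_all _ fun t => Real.sqrt_nonneg _)]

lemma step_pt [MeasurableSingletonClass G] [Countable G] [Infinite G]
    (μ : Measure G) [IsProbabilityMeasure μ] (W : Finset G) (u : ℝ) :
    (∫⁻ t, wt (U μ W t) ∂lam) +
      ENNReal.ofReal (psiProfile μ u) * (if (W.card : ℝ) ≤ u then wt W else 0) ≤ wt W := by
  rcases W.eq_empty_or_nonempty with rfl | hW
  · have : ∀ t, U μ (∅ : Finset G) t = ∅ := by
      intro t
      ext y
      rw [mem_U]
      simp only [Q, Finset.sum_empty, Finset.notMem_empty, iff_false]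
      rintro ⟨a, b⟩
      simp at b
      linarith
    simp [this, wt]
  · rw [lint_wt μ W hW]
    have h0 := psiSet_nonneg μ W hW
    have h1 := psiSet_le_one μ W
    have key : ENNReal.ofReal (psiProfile μ u) * (if (W.card : ℝ) ≤ u then wt W else 0)
        ≤ wt W * ENNReal.ofReal (psiSet μ W) := by
      split_ifs with hu
      · rw [mul_comm]
        gcongr
        exact profile_le μ u W hW hu
      · simp
    calc _ ≤ wt W * ENNReal.ofReal (1 - psiSet μ W) + wt W * ENNReal.ofReal (psiSet μ W) := by
          gcongr
      _ = wt W * ENNReal.ofReal 1 := by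
          rw [← mul_add, ← ENNReal.ofReal_add (by linarith) h0]; simp
      _ = wt W := by simp

lemma Rep.step [MeasurableSingletonClass G] [Countable G] [Infinite G]
    (μ : Measure G) [IsProbabilityMeasure μ] {p : G → ℝ≥0∞} {ν : Finset G → ℝ≥0∞}
    (h : Rep p ν) (m : ℝ) (hm : 0 < m) (hmν : Mo ν = ENNReal.ofReal m)
    (hψ : 0 ≤ psiProfile μ (4 / m ^ 2)) :
    (Mo (EvoProof.evo μ ν)).toReal ≤ m * (1 - psiProfile μ (4 / m ^ 2) / 2) := by
  set u := 4 / m ^ 2 with hu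
  set Gd := ∑' W, ν W * (if (W.card : ℝ) ≤ u then wt W else 0) with hG
  have h1 : Mo (EvoProof.evo μ ν) + ENNReal.ofReal (psiProfile μ u) * Gd ≤ Mo ν := by
    rw [Mo, tsum_evo, hG, ← ENNReal.tsum_mul_left, ← ENNReal.tsum_add]
    refine ENNReal.tsum_le_tsum fun W => ?_
    calc _ = ν W * ((∫⁻ t, wt (U μ W t) ∂lam) + ENNReal.ofReal (psiProfile μ u) *
          (if (W.card : ℝ) ≤ u then wt W else 0)) := by ring
      _ ≤ _ := by gcongr; exact step_pt μ W u
  have h2 : Mo ν ≤ Gd + ENNReal.ofReal (m / 2) := by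
    have : ENNReal.ofReal (m / 2) = ∑' W, ν W * (ENNReal.ofReal (m / 2) * (W.card : ℝ≥0∞)) := by
      calc ENNReal.ofReal (m / 2) = ENNReal.ofReal (m / 2) * ∑' W, ν W * (W.card : ℝ≥0∞) := by
            rw [h.card, mul_one]
        _ = _ := by
          rw [← ENNReal.tsum_mul_left]
          refine tsum_congr fun W => by ring
    rw [this, hG, ← ENNReal.tsum_add, Mo]
    refine ENNReal.tsum_le_tsum fun W => ?_
    rw [← mul_add]
    gcongr
    split_ifs with hW
    · exact le_self_add
    · rw [zero_add, ← ENNReal.ofReal_natCast, ← ENNReal.ofReal_mul (by positivity), wt]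
      apply ENNReal.ofReal_le_ofReal
      push Not at hW
      have hs := Real.sq_sqrt (Nat.cast_nonneg (α := ℝ) W.card)
      have hs0 := Real.sqrt_nonneg (W.card : ℝ)
      set s := Real.sqrt (W.card : ℝ)
      rw [← hs, hu, div_lt_iff₀ (by positivity)] at hW
      have : 2 < s * m := by nlinarith [mul_nonneg hs0 hm.le]
      rw [← hs]
      nlinarith
  have hGle : Gd ≤ Mo ν := by
    rw [hG, Mo]
    refine ENNReal.tsum_le_tsum fun W => ?_
    gcongr
    split_ifs <;> simp
  have hGt : Gd ≠ ∞ := ne_top_of_le_ne_top (by rw [hmν]; simp) hGle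
  have hMt : Mo (EvoProof.evo μ ν) ≠ ∞ :=
    ne_top_of_le_ne_top (by rw [hmν]; simp) (le_self_add.trans h1)
  rw [hmν] at h1 h2
  rw [← ENNReal.ofReal_toReal hGt] at h1 h2
  rw [← ENNReal.ofReal_toReal hMt, ← ENNReal.ofReal_mul hψ,
    ← ENNReal.ofReal_add (by positivity) (by positivity),
    ENNReal.ofReal_le_ofReal_iff hm.le] at h1
  rw [← ENNReal.ofReal_add (by positivity) (by positivity),
    ENNReal.ofReal_le_ofReal_iff (by positivity)] at h2
  nlinarith

lemma Rep.det {p : G → ℝ≥0∞} {ν : Finset G → ℝ≥0∞} (h : Rep p ν) (g : G) :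
    ∃ ν', Rep (fun z => ∑' y, p y * detKer g y z) ν' ∧ Mo ν' = Mo ν := by
  let e : Finset G ≃ Finset G := (Equiv.mulRight g).finsetCongr
  have he : ∀ W z, z ∈ e W ↔ z * g⁻¹ ∈ W := by
    intro W z
    simp [e, Equiv.finsetCongr_apply, Finset.mem_map_equiv]
  have hp : ∀ z, ∑' y, p y * detKer g y z = p (z * g⁻¹) := by
    intro z
    rw [tsum_eq_single (z * g⁻¹)]
    · simp [detKer]
    · intro b hb
      have : ¬ z = b * g := fun h => hb (by simp [h])
      simp [detKer, this]
  refine ⟨fun A => ν (e.symm A), ⟨?_, ?_⟩, ?_⟩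
  · intro z
    rw [hp, h.eq, ← e.tsum_eq (fun W => ν (e.symm W) * (if z ∈ W then 1 else 0))]
    simp [he]
  · simp_rw [hp]
    rw [← h.sum]
    exact (Equiv.mulRight g⁻¹).tsum_eq p
  · unfold Mo
    rw [← e.tsum_eq (fun W => ν (e.symm W) * wt W)]
    refine tsum_congr fun W => ?_
    have hc : (e W).card = W.card := by simp [e, Equiv.finsetCongr_apply]
    rw [Equiv.symm_apply_apply]
    simp only [wt, hc]

lemma Rep.init (x : G) : Rep (fun y => if x = y then 1 else 0)
    (fun W => if W = {x} then 1 else 0) where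
  eq y := by
    rw [tsum_eq_single {x}]
    · simp [eq_comm]
    · intro b hb; simp [hb]
  sum := by simp

lemma Mo_init (x : G) : Mo (fun W : Finset G => if W = {x} then 1 else 0) = 1 := by
  unfold Mo
  rw [tsum_eq_single {x}]
  · simp [wt]
  · intro b hb; simp [hb]

open Classical in
lemma main_ind [MeasurableSingletonClass G] [Countable G] [Infinite G]
    (μ : Measure G) [IsProbabilityMeasure μ]
    (hlazy : 0 < μ {(1 : G)}) (hirr : IrreducibleKernel μ)
    (n : ℕ) (Ks : ℕ → G → G → ℝ≥0∞)
    (hKs : ∀ j, 1 ≤ j → j ≤ n → Ks j = muKer μ ∨ ∃ g : G, Ks j = detKer g) (k : ℕ) (x : G)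
    (m : ℕ) : k + m ≤ n → ∃ ν, Rep (prodKer Ks k m x) ν ∧
      (((Finset.Ioc k (k + m)).filter fun j => Ks j = muKer μ).card : ℝ) ≤
        ∫ u in (4:ℝ)..(4 / (Mo ν).toReal ^ 2), 1 / (u * psiProfile μ u) := by
  induction m with
  | zero =>
    intro _
    refine ⟨_, Rep.init x, ?_⟩
    rw [Mo_init]
    simp
  | succ m ih =>
    intro hm
    obtain ⟨ν, hν, hN⟩ := ih (by omega)
    have hI : Finset.Ioc k (k + (m + 1)) = insert (k + m + 1) (Finset.Ioc k (k + m)) := by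
      ext j; simp only [Finset.mem_Ioc, Finset.mem_insert]; omega
    have hni : k + m + 1 ∉ (Finset.Ioc k (k + m)).filter fun j => Ks j = muKer μ := by
      simp
    have hpk : prodKer Ks k (m + 1) x = fun z => ∑' y, prodKer Ks k m x y * Ks (k + m + 1) y z :=
      rfl
    rw [hI, Finset.filter_insert, hpk]
    by_cases hmu : Ks (k + m + 1) = muKer μ
    · rw [if_pos hmu, Finset.card_insert_of_notMem hni, hmu]
      refine ⟨evo μ ν, hν.evo μ, ?_⟩
      have hpos := profile_pos μ hlazy hirr
      have hanti := profile_anti μ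
      have hMt : Mo ν ≠ ∞ := ne_top_of_le_ne_top ENNReal.one_ne_top hν.Mo_le
      have hM't : Mo (evo μ ν) ≠ ∞ := ne_top_of_le_ne_top ENNReal.one_ne_top (hν.evo μ).Mo_le
      have hMp : 0 < (Mo ν).toReal := ENNReal.toReal_pos hν.Mo_pos.ne' hMt
      have hM'p : 0 < (Mo (evo μ ν)).toReal := ENNReal.toReal_pos (hν.evo μ).Mo_pos.ne' hM't
      have hM1 : (Mo ν).toReal ≤ 1 :=
        ENNReal.toReal_le_of_le_ofReal zero_le_one (by simpa using hν.Mo_le)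
      set M := (Mo ν).toReal with hMdef
      have ha : 4 ≤ 4 / M ^ 2 := by
        rw [le_div_iff₀ (by positivity)]
        nlinarith
      have hst := hν.step μ M hMp (by rw [hMdef, ENNReal.ofReal_toReal hMt])
        (hpos _ (by linarith)).le
      set M' := (Mo (evo μ ν)).toReal
      have := int_step hpos hanti (4 / M ^ 2) (4 / M' ^ 2) ha (by
        set c := psiProfile μ (4 / M ^ 2)
        have h1 : M' ≤ M * Real.exp (-(c / 2)) := hst.trans (by
          gcongr
          have := Real.add_one_le_exp (-(c / 2))
          linarith)
        have h2 : M' ^ 2 ≤ M ^ 2 * Real.exp (-c) := by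
          calc M' ^ 2 ≤ (M * Real.exp (-(c / 2))) ^ 2 := by gcongr
            _ = M ^ 2 * (Real.exp (-(c / 2)) * Real.exp (-(c / 2))) := by ring
            _ = _ := by rw [← Real.exp_add]; congr 2; ring
        rw [le_div_iff₀ (by positivity)]
        calc 4 / M ^ 2 * Real.exp c * M' ^ 2
            ≤ 4 / M ^ 2 * Real.exp c * (M ^ 2 * Real.exp (-c)) := by gcongr
          _ = 4 * (Real.exp c * Real.exp (-c)) := by field_simp
          _ = 4 := by rw [← Real.exp_add]; simp)
      push_cast
      linarith
    · rw [if_neg hmu]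
      obtain h | ⟨g, hg⟩ := hKs (k + m + 1) (by omega) (by omega)
      · exact absurd h hmu
      · rw [hg]
        obtain ⟨ν', h1, h2⟩ := hν.det g
        exact ⟨ν', h1, by rw [h2]; exact hN⟩

end
end EvoProof


/-- **Decay of the `ℓ²`-norm of inhomogeneous transition probabilities via evolving
sets.**  Let `G` be a countably infinite group and `μ` a probability measure on `G` with
`μ(e_G) > 0` and irreducible kernel `P_μ`.  Let `(P_j)_{j ∈ [n]}` be kernels, each equal
either to `P_μ` or to a deterministic kernel `P^{(g)}`, and let
`P_{k,ℓ} = P_{k+1} ⋯ P_ℓ`.  Then for all `0 ≤ k ≤ ℓ ≤ n`, `x ∈ G` and `ε ∈ (0,1)`,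
`Σ_y P_{k,ℓ}(x, y)² ≤ ε`, provided the number of indices `j ∈ {k+1, …, ℓ}` with
`P_j = P_μ` is at least `∫_4^{4/ε} du/(u ψ(u))`. -/
theorem evolving_sets_l2_decay
    {G : Type*} [Group G] [DecidableEq G] [MeasurableSpace G] [MeasurableSingletonClass G]
    [Countable G] [Infinite G]
    (μ : Measure G) [IsProbabilityMeasure μ]
    (hlazy : 0 < μ {(1 : G)}) (hirr : IrreducibleKernel μ)
    (n : ℕ) (Ks : ℕ → G → G → ℝ≥0∞)
    (hKs : ∀ j, 1 ≤ j → j ≤ n → Ks j = muKer μ ∨ ∃ g : G, Ks j = detKer g) :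
    ∀ k ℓ : ℕ, k ≤ ℓ → ℓ ≤ n → ∀ x : G, ∀ ε : ℝ, ε ∈ Set.Ioo (0 : ℝ) 1 →
      (∫ u in (4:ℝ)..(4 / ε), 1 / (u * psiProfile μ u))
          ≤ (Set.ncard {j : ℕ | k < j ∧ j ≤ ℓ ∧ Ks j = muKer μ} : ℝ) →
      ∑' y : G, (prodKer Ks k (ℓ - k) x y) ^ 2 ≤ ENNReal.ofReal ε := by
  classical
  intro k ℓ hkl hln x ε hε hint
  obtain ⟨m, rfl⟩ := Nat.exists_eq_add_of_le hkl
  rw [Nat.add_sub_cancel_left]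
  obtain ⟨ν, hν, hN⟩ := EvoProof.main_ind μ hlazy hirr n Ks hKs k x m hln
  have hset : {j : ℕ | k < j ∧ j ≤ k + m ∧ Ks j = muKer μ}
      = ((Finset.Ioc k (k + m)).filter fun j => Ks j = muKer μ : Finset ℕ) := by
    ext j; simp [and_assoc]
  rw [hset, Set.ncard_coe_finset] at hint
  refine hν.l2.trans ?_
  have hMt : EvoProof.Mo ν ≠ ∞ := ne_top_of_le_ne_top ENNReal.one_ne_top hν.Mo_le
  have hMp : 0 < (EvoProof.Mo ν).toReal := ENNReal.toReal_pos hν.Mo_pos.ne' hMt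
  have hM1 : (EvoProof.Mo ν).toReal ≤ 1 :=
    ENNReal.toReal_le_of_le_ofReal zero_le_one (by simpa using hν.Mo_le)
  rw [← ENNReal.ofReal_toReal hMt, ← ENNReal.ofReal_pow hMp.le]
  apply ENNReal.ofReal_le_ofReal
  by_contra hcon
  push Not at hcon
  set M := (EvoProof.Mo ν).toReal
  have ha : 4 ≤ 4 / M ^ 2 := by
    rw [le_div_iff₀ (by positivity)]
    nlinarith
  have := EvoProof.int_strict (EvoProof.profile_pos μ hlazy hirr) (EvoProof.profile_anti μ)
    (4 / M ^ 2) (4 / ε) ha (div_lt_div_of_pos_left (by norm_num) hε.1 hcon)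
  linarith
end

section
/- Let (R_n)_{n≥1} be the elephant polynomials with parameter α ∈ [0,1). Then for every x ∈ (−1,1) and every n ≥ 1, |R_n(x)| ≤ |x|^{(1−α)n/8} + 5·e^{−3(1−α)n/280}. -/
open Polynomial

/-- The elephant polynomials: `R_1(x) = x` and
`R_{n+1}(x) = x R_n(x) - (α/n)(1 - x²) R_n'(x)` for `n ≥ 1`. -/
noncomputable def elephantPoly (α : ℝ) : ℕ → Polynomial ℝ
  | 0 => 1
  | 1 => Polynomial.X
  | n + 2 =>
      Polynomial.X * elephantPoly α (n + 1)
        - Polynomial.C (α / (n + 1)) *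
            ((1 - Polynomial.X ^ 2) * Polynomial.derivative (elephantPoly α (n + 1)))

namespace Eleph

/-- weighted sum over increments of one entry -/
def D : (List ℕ → ℝ) → List ℕ → ℝ
  | _, [] => 0
  | F, a :: l => (a : ℝ) * F ((a + 1) :: l) + D (fun l' => F (a :: l')) l

noncomputable def T (α : ℝ) (k : ℕ) (F : List ℕ → ℝ) (c : List ℕ) : ℝ :=
  (1 - α) * F (1 :: c) + α / ((k : ℝ) + 1) * D F c

noncomputable def E (α : ℝ) : ℕ → (List ℕ → ℝ) → ℝ
  | 0, F => F [1]
  | k + 1, F => E α k (T α k F)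

lemma D_mono (c : List ℕ) : ∀ (F G : List ℕ → ℝ),
    (∀ c', c'.sum = c.sum + 1 → F c' ≤ G c') → D F c ≤ D G c := by
  induction c with
  | nil => intro F G _; simp [D]
  | cons a l ih =>
    intro F G h
    simp only [D]
    refine add_le_add (mul_le_mul_of_nonneg_left (h _ ?_) (Nat.cast_nonneg _)) (ih _ _ ?_)
    · simp; omega
    · intro c' hc'
      apply h
      simp; omega

lemma D_lin (c : List ℕ) : ∀ (F G : List ℕ → ℝ) (r s : ℝ),
    D (fun c => r * F c + s * G c) c = r * D F c + s * D G c := by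
  induction c with
  | nil => intros; simp [D]
  | cons a l ih =>
    intro F G r s
    simp only [D]
    rw [ih]; ring

lemma D_smul (c : List ℕ) (F : List ℕ → ℝ) (r : ℝ) :
    D (fun c => r * F c) c = r * D F c := by
  have := D_lin c F F r 0
  simpa using this

lemma D_deriv (c : List ℕ) : ∀ (f : ℝ → List ℕ → ℝ) (f' : List ℕ → ℝ) (t : ℝ),
    (∀ c, HasDerivAt (fun u => f u c) (f' c) t) →
    HasDerivAt (fun u => D (f u) c) (D f' c) t := by
  induction c with
  | nil => intro f f' t _; simpa [D] using hasDerivAt_const t (0 : ℝ)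
  | cons a l ih =>
    intro f f' t h
    simp only [D]
    exact ((h _).const_mul _).add (ih (fun u l' => f u (a :: l')) _ t (fun c => h _))

lemma E_mono {α : ℝ} (h0 : 0 ≤ α) (h1 : α < 1) (k : ℕ) : ∀ (F G : List ℕ → ℝ),
    (∀ c, c.sum = k + 1 → F c ≤ G c) → E α k F ≤ E α k G := by
  induction k with
  | zero => intro F G h; exact h _ (by simp)
  | succ k ih =>
    intro F G h
    apply ih
    intro c hc
    unfold T
    refine add_le_add (mul_le_mul_of_nonneg_left (h _ ?_) (by linarith))
      (mul_le_mul_of_nonneg_left (D_mono _ _ _ ?_) (by positivity))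
    · simp; omega
    · intro c' hc'
      apply h; omega

lemma E_congr {α : ℝ} (h0 : 0 ≤ α) (h1 : α < 1) (k : ℕ) (F G : List ℕ → ℝ)
    (h : ∀ c, c.sum = k + 1 → F c = G c) : E α k F = E α k G :=
  le_antisymm (E_mono h0 h1 k F G fun c hc => (h c hc).le)
    (E_mono h0 h1 k G F fun c hc => (h c hc).ge)

lemma E_lin (α : ℝ) (k : ℕ) : ∀ (F G : List ℕ → ℝ) (r s : ℝ),
    E α k (fun c => r * F c + s * G c) = r * E α k F + s * E α k G := by
  induction k with
  | zero => intros; simp [E]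
  | succ k ih =>
    intro F G r s
    simp only [E]
    rw [← ih]
    congr 1
    funext c
    simp only [T]
    rw [D_lin]; ring

lemma E_smul (α : ℝ) (k : ℕ) (F : List ℕ → ℝ) (r : ℝ) :
    E α k (fun c => r * F c) = r * E α k F := by
  have := E_lin α k F F r 0
  simpa using this

lemma E_deriv (α : ℝ) (k : ℕ) : ∀ (f : ℝ → List ℕ → ℝ) (f' : List ℕ → ℝ) (t : ℝ),
    (∀ c, HasDerivAt (fun u => f u c) (f' c) t) →
    HasDerivAt (fun u => E α k (f u)) (E α k f') t := by
  induction k with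
  | zero => intro f f' t h; exact h _
  | succ k ih =>
    intro f f' t h
    simp only [E]
    refine ih (fun u => T α k (f u)) _ t (fun c => ?_)
    exact ((h _).const_mul _).add ((D_deriv c f f' t h).const_mul _)

noncomputable def P (t : ℝ) : List ℕ → ℝ
  | [] => 1
  | a :: l => Real.cos (t * a) * P t l

noncomputable def P' (t : ℝ) : List ℕ → ℝ
  | [] => 0
  | a :: l => (-Real.sin (t * a) * a) * P t l + Real.cos (t * a) * P' t l

lemma P_deriv (t : ℝ) (c : List ℕ) : HasDerivAt (fun u => P u c) (P' t c) t := by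
  induction c with
  | nil => exact hasDerivAt_const t 1
  | cons a l ih =>
    simp only [P, P']
    have h : HasDerivAt (fun u : ℝ => u * a) (a : ℝ) t := by
      simpa using (hasDerivAt_id t).mul_const (a : ℝ)
    exact h.cos.mul ih

lemma D_P (t : ℝ) (c : List ℕ) :
    D (P t) c = c.sum * (Real.cos t * P t c) + Real.sin t * P' t c := by
  induction c with
  | nil => simp [D, P']
  | cons a l ih =>
    have : D (P t) (a :: l) = a * P t ((a + 1) :: l) + D (fun l' => Real.cos (t * a) * P t l') l := rfl
    rw [this, D_smul, ih]
    simp only [P, P', List.sum_cons]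
    push_cast
    rw [mul_add, mul_one, Real.cos_add]
    ring

lemma D_exp (lam : ℝ) (c : List ℕ) :
    D (fun c => Real.exp (-lam * (c.count 1 : ℕ))) c
      = ((c.sum : ℝ) + (c.count 1 : ℕ) * (Real.exp lam - 1))
          * Real.exp (-lam * (c.count 1 : ℕ)) := by
  induction c with
  | nil => simp [D]
  | cons a l ih =>
    simp only [D]
    by_cases ha : a = 1
    · subst ha
      have e : (fun l' : List ℕ => Real.exp (-lam * ((1 :: l').count 1 : ℕ)))
          = fun l' => Real.exp (-lam) * Real.exp (-lam * (l'.count 1 : ℕ)) := by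
        funext l'
        rw [← Real.exp_add]
        simp [List.count_cons]; ring
      have h1 : Real.exp (-lam * ((1 :: l).count 1 : ℕ))
          = Real.exp (-lam) * Real.exp (-lam * (l.count 1 : ℕ)) := congrFun e l
      have h2 : Real.exp lam * Real.exp (-lam) = 1 := by rw [← Real.exp_add]; simp
      rw [e, D_smul, ih, h1]
      simp only [List.count_cons, List.sum_cons]
      norm_num
      linear_combination (-Real.exp (-(lam * (l.count 1 : ℕ)))) * h2
    · have e : (fun l' : List ℕ => Real.exp (-lam * ((a :: l').count 1 : ℕ)))
          = fun l' => Real.exp (-lam * (l'.count 1 : ℕ)) := by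
        funext l'
        simp [List.count_cons, ha]
      rw [e, ih, congrFun e l]
      by_cases h0 : a = 0
      · subst h0; simp [List.count_cons]
      · simp [List.count_cons, ha, h0]; ring

lemma D_one (c : List ℕ) : D (fun _ => 1) c = c.sum := by
  induction c with
  | nil => simp [D]
  | cons a l ih => simp [D, ih]

lemma E_one {α : ℝ} (h0 : 0 ≤ α) (h1 : α < 1) (k : ℕ) : E α k (fun _ => 1) = 1 := by
  induction k with
  | zero => rfl
  | succ k ih =>
    simp only [E]
    refine (E_congr h0 h1 k _ (fun _ => 1) ?_).trans ih
    intro c hc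
    have : (k : ℝ) + 1 ≠ 0 := by positivity
    simp only [T, D_one, hc]
    push_cast
    field_simp
    ring

lemma E_P {α : ℝ} (h0 : 0 ≤ α) (h1 : α < 1) (k : ℕ) : ∀ t : ℝ,
    E α k (P t) = (elephantPoly α (k + 1)).eval (Real.cos t) := by
  induction k with
  | zero => intro t; simp [E, P, elephantPoly]
  | succ k ih =>
    intro t
    have hk : (k : ℝ) + 1 ≠ 0 := by positivity
    have hd : E α k (P' t) =
        (derivative (elephantPoly α (k + 1))).eval (Real.cos t) * -Real.sin t := by
      have a1 := E_deriv α k P (P' t) t (P_deriv t)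
      have a2 : HasDerivAt (fun u => E α k (P u))
          ((derivative (elephantPoly α (k + 1))).eval (Real.cos t) * -Real.sin t) t := by
        simp only [ih]
        exact ((elephantPoly α (k + 1)).hasDerivAt (Real.cos t)).comp t (Real.hasDerivAt_cos t)
      exact a1.unique a2
    have : E α (k + 1) (P t) = Real.cos t * E α k (P t)
        + (α / ((k : ℝ) + 1) * Real.sin t) * E α k (P' t) := by
      rw [← E_lin]
      simp only [E]
      apply E_congr h0 h1
      intro c hc
      simp only [T, D_P, hc, P]
      push_cast
      field_simp
      ring_nf
    rw [this, ih, hd]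
    simp only [elephantPoly, eval_sub, eval_mul, eval_X, eval_C, eval_one, eval_pow]
    have := Real.sin_sq_add_cos_sq t
    linear_combination (-(α / ((k : ℝ) + 1)) *
      (derivative (elephantPoly α (k + 1))).eval (Real.cos t)) * this

lemma abs_P_le (t : ℝ) (c : List ℕ) : |P t c| ≤ |Real.cos t| ^ (c.count 1) := by
  induction c with
  | nil => simp [P]
  | cons a l ih =>
    simp only [P, abs_mul]
    by_cases ha : a = 1
    · subst ha
      simp only [List.count_cons_self, pow_succ']
      simpa using mul_le_mul_of_nonneg_left ih (abs_nonneg _)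
    · simp only [List.count_cons_of_ne ha]
      calc _ ≤ 1 * |P t l| := by
            gcongr
            exact Real.abs_cos_le_one _
        _ ≤ _ := by simpa using ih

/-- the exponent at time k+1 -/
noncomputable def lam (N : ℝ) (k : ℕ) : ℝ := (k : ℝ) * ((k : ℝ) - 1) / N ^ 2

lemma lam_nonneg (N : ℝ) (k : ℕ) : 0 ≤ lam N k := by
  unfold lam
  rcases Nat.eq_zero_or_pos k with h | h
  · simp [h]
  · have : (1 : ℝ) ≤ k := by exact_mod_cast h
    have : (0 : ℝ) ≤ (k : ℝ) - 1 := by linarith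
    positivity

lemma lam_le (N : ℝ) (k : ℕ) (h : (k : ℝ) ≤ N) (hN : 0 < N) : lam N k ≤ 1 := by
  unfold lam
  rw [div_le_one (by positivity)]
  have : (0 : ℝ) ≤ k := Nat.cast_nonneg _
  nlinarith

lemma E_exp {α : ℝ} (h0 : 0 ≤ α) (h1 : α < 1) (N : ℝ) (hN : 0 < N) (k : ℕ) (hk : (k : ℝ) ≤ N) :
    E α k (fun c => Real.exp (-lam N k * (c.count 1 : ℕ)))
      ≤ Real.exp (-((1 - α) / 2 * (((k : ℝ) + 1) * k * (k - 1) / (3 * N ^ 2)))) := by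
  induction k with
  | zero => simp [E, lam]
  | succ k ih =>
    have hk' : (k : ℝ) ≤ N := by push_cast at hk; linarith
    have ih := ih hk'
    set y := lam N (k + 1) with hy
    have y0 : 0 ≤ y := lam_nonneg _ _
    have y1 : y ≤ 1 := lam_le _ _ hk hN
    have e1 : Real.exp y - 1 ≤ 2 * y := by
      have := Real.abs_exp_sub_one_sub_id_le (x := y) (by rw [abs_of_nonneg y0]; exact y1)
      have := (abs_le.1 this).2
      nlinarith
    have e2 : Real.exp (-y) ≤ 1 - y / 2 := by
      have := Real.add_one_le_exp y
      rw [Real.exp_neg]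
      rw [inv_le_comm₀ (Real.exp_pos _) (by linarith)]
      refine le_trans ?_ this
      rw [inv_le_iff_one_le_mul₀ (by linarith)]
      nlinarith
    have hk0 : (0 : ℝ) < (k : ℝ) + 1 := by positivity
    have e3 : 2 * y / ((k : ℝ) + 1) = y - lam N k := by
      rw [hy]; unfold lam; push_cast; field_simp; ring
    have e4 : α / ((k : ℝ) + 1) * (Real.exp y - 1) ≤ y - lam N k := by
      rw [← e3, div_mul_eq_mul_div]
      refine div_le_div_of_nonneg_right ?_ hk0.le
      have : 0 ≤ Real.exp y - 1 := by linarith [Real.add_one_le_exp y]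
      nlinarith
    have step : ∀ c : List ℕ, c.sum = k + 1 →
        T α k (fun c => Real.exp (-y * (c.count 1 : ℕ))) c
          ≤ Real.exp (-((1 - α) / 2 * y)) * Real.exp (-lam N k * (c.count 1 : ℕ)) := by
      intro c hc
      simp only [T, D_exp, hc, List.count_cons_self]
      set I : ℝ := ((c.count 1 : ℕ) : ℝ) with hI
      have hI0 : 0 ≤ I := Nat.cast_nonneg _
      have q : Real.exp (-y * ((c.count 1 + 1 : ℕ) : ℝ)) = Real.exp (-y) * Real.exp (-y * I) := by
        rw [← Real.exp_add]; push_cast; rw [← hI]; ring_nf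
      rw [q]
      have : (1 - α) * (Real.exp (-y) * Real.exp (-y * I)) + α / ((k : ℝ) + 1) *
          ((((k + 1 : ℕ) : ℝ) + I * (Real.exp y - 1)) * Real.exp (-y * I))
          = ((1 - α) * Real.exp (-y) + α + I * (α / ((k : ℝ) + 1) * (Real.exp y - 1)))
            * Real.exp (-y * I) := by
        push_cast; field_simp; ring
      rw [this]
      have b1 : (1 - α) * Real.exp (-y) + α + I * (α / ((k : ℝ) + 1) * (Real.exp y - 1))
          ≤ Real.exp (-((1 - α) / 2 * y) + I * (y - lam N k)) := by
        refine le_trans ?_ (Real.add_one_le_exp _)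
        have := mul_le_mul_of_nonneg_left e4 hI0
        have := mul_le_mul_of_nonneg_left e2 (by linarith : 0 ≤ 1 - α)
        linarith
      calc _ ≤ _ := mul_le_mul_of_nonneg_right b1 (Real.exp_pos _).le
        _ = _ := by rw [← Real.exp_add, ← Real.exp_add]; ring_nf
    calc _ ≤ _ := E_mono h0 h1 k _ _ step
      _ = _ := E_smul _ _ _ _
      _ ≤ _ := mul_le_mul_of_nonneg_left ih (Real.exp_pos _).le
      _ = _ := by
        rw [← Real.exp_add, hy]
        unfold lam
        congr 1
        push_cast
        field_simp
        ring

end Eleph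

open Eleph

/-- **Exponential decay of the elephant polynomials on `(-1, 1)`.**  If `α ∈ [0,1)`,
then for every `x ∈ (-1,1)` and every `n ≥ 1`,
`|R_n(x)| ≤ |x|^{(1-α)n/8} + 5 e^{-3(1-α)n/280}`. -/
theorem elephantPoly_decay (α : ℝ) (hα0 : 0 ≤ α) (hα1 : α < 1)
    (x : ℝ) (hx : x ∈ Set.Ioo (-1 : ℝ) 1) (n : ℕ) (hn : 1 ≤ n) :
    |(elephantPoly α n).eval x|
      ≤ |x| ^ ((1 - α) * n / 8) + 5 * Real.exp (-(3 * (1 - α) * n) / 280) := by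
  obtain ⟨k, rfl⟩ : ∃ k, n = k + 1 := ⟨n - 1, by omega⟩
  have hc : Real.cos (Real.arccos x) = x := Real.cos_arccos hx.1.le hx.2.le
  have hE := E_P hα0 hα1 k (Real.arccos x)
  rw [hc] at hE
  rw [← hE]
  set N : ℝ := ((k + 1 : ℕ) : ℝ) with hN
  have hNk : N = k + 1 := by rw [hN]; push_cast; ring
  have hN0 : 0 < N := by rw [hNk]; positivity
  set a : ℝ := (1 - α) * N / 8 with ha
  have ha0 : 0 ≤ a := by
    have : 0 ≤ 1 - α := by linarith
    positivity
  have hs1 : |x| ≤ 1 := abs_le.2 ⟨hx.1.le, hx.2.le⟩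
  set y := lam N k with hy
  have y0 : 0 ≤ y := lam_nonneg _ _
  have key : ∀ c : List ℕ, |P (Real.arccos x) c| ≤
      |x| ^ a * 1 + Real.exp (y * a) * Real.exp (-y * (c.count 1 : ℕ)) := by
    intro c
    have h := abs_P_le (Real.arccos x) c
    rw [hc] at h
    refine h.trans ?_
    rcases le_total a (c.count 1 : ℕ) with h | h
    · have := Real.rpow_le_rpow_of_exponent_ge' (abs_nonneg x) hs1 ha0 h
      rw [Real.rpow_natCast] at this
      have := mul_pos (Real.exp_pos (y * a)) (Real.exp_pos (-y * (c.count 1 : ℕ)))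
      linarith
    · have h2 : |x| ^ (c.count 1) ≤ 1 := pow_le_one₀ (abs_nonneg _) hs1
      have h3 : 0 ≤ |x| ^ a := Real.rpow_nonneg (abs_nonneg _) _
      have h4 : 1 ≤ Real.exp (y * a) * Real.exp (-y * (c.count 1 : ℕ)) := by
        rw [← Real.exp_add]
        apply Real.one_le_exp
        nlinarith
      linarith
  have hb : |E α k (P (Real.arccos x))| ≤
      E α k (fun c => |x| ^ a * 1 + Real.exp (y * a) * Real.exp (-y * (c.count 1 : ℕ))) := by
    rw [abs_le]
    constructor
    · rw [neg_le, ← neg_one_mul, ← E_smul]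
      refine E_mono hα0 hα1 k _ _ fun c _ => ?_
      have := (abs_le.1 (key c)).1
      linarith
    · exact E_mono hα0 hα1 k _ _ fun c _ => (abs_le.1 (key c)).2
  refine hb.trans ?_
  rw [E_lin α k (fun _ => 1) (fun c => Real.exp (-y * (c.count 1 : ℕ))), E_one hα0 hα1, mul_one]
  have hex := E_exp hα0 hα1 N hN0 k (by linarith)
  rw [← hy] at hex
  have := mul_le_mul_of_nonneg_left hex (Real.exp_pos (y * a)).le
  rw [← Real.exp_add] at this
  have h5 : Real.exp 1 ≤ 5 := by linarith [Real.exp_one_lt_d9]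
  have fin : y * a + -((1 - α) / 2 * (((k : ℝ) + 1) * k * (k - 1) / (3 * N ^ 2)))
      ≤ 1 + -(3 * (1 - α) * N) / 280 := by
    have e : y * a + -((1 - α) / 2 * (((k : ℝ) + 1) * k * (k - 1) / (3 * N ^ 2)))
        = -((1 - α) * ((N - 3 + 2 / N) / 24)) := by
      have hk : (k : ℝ) = N - 1 := by linarith
      rw [hy, ha]; unfold lam; rw [hk]
      field_simp
      ring
    rw [e]
    have : 0 < 2 / N := by positivity
    have h1α : 0 ≤ 1 - α := by linarith
    have : 0 ≤ (1 - α) * (2 / N) := by positivity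
    have : 0 ≤ (1 - α) * N := by positivity
    linarith
  have h6 : Real.exp (1 + -(3 * (1 - α) * N) / 280) ≤ 5 * Real.exp (-(3 * (1 - α) * N) / 280) := by
    rw [Real.exp_add]
    exact mul_le_mul_of_nonneg_right h5 (Real.exp_pos _).le
  have := Real.exp_le_exp.2 fin
  linarith
end
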